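/- arXiv:1201.0701 — 2 statements merged into one kernel-verified Lean document; each statement's English description precedes it below -/
import Mathlib

section
/- Let p₁ ≡ 3 (mod 4) be a prime with p₁ ≠ 3, let m ≥ 1, set N = p₁^m, and let p be a prime with f := ord_N(p) = φ(N)/2. Let q = p^f, let γ be a primitive element of F_q, let C_i = γ^i⟨γ^N⟩ (0 ≤ i ≤ N−1) be the cyclotomic classes of order N, and let D = ⋃_{i=0}^{p₁^{m−1}−1} C_i. Assume 1 + p₁ = 4p^h, where h is the class number of Q(√(−p₁)). Then 0 ∉ D, −D = D, and the Cayley graph Cay(F_q, D) is a strongly regular graph. -/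
open scoped Classical Pointwise

set_option linter.unusedSectionVars false
set_option linter.style.haveILetI false

/-- The cyclotomic class `C_i = γ^i ⟨γ^N⟩ = {γ^{i+Nk} : k ∈ ℤ}` of order `N` of a finite
field, with respect to the primitive element `γ`. -/
def cycClass {F : Type*} [Field F] (γ : Fˣ) (N i : ℕ) : Set F :=
  {x : F | ∃ k : ℤ, x = ((γ ^ ((i : ℤ) + (N : ℤ) * k) : Fˣ) : F)}

/-- The Cayley graph on the additive group `G` with connection set `D`. -/
def cayley {G : Type*} [AddGroup G] (D : Set G) : SimpleGraph G :=
  SimpleGraph.fromRel fun x y => x - y ∈ D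

section PartD

variable {F : Type*} [Field F] [Fintype F] {A : Type*} [Field A] [CharZero A]

lemma partD_count (ψ : AddChar F A) (hψ : ψ.IsPrimitive) (D : Finset F) (r s : ℤ)
    (h : ∀ a : F, a ≠ 0 → (∑ x ∈ D, ψ (x * a) = r ∨ ∑ x ∈ D, ψ (x * a) = s)) :
    ∃ C : ℤ, ∀ z : F, (Fintype.card F : ℤ) * (∑ x ∈ D, ∑ y ∈ D, if x + y = z then (1:ℤ) else 0) =
      C + (r + s) * Fintype.card F * (if z ∈ D then 1 else 0) -
        r * s * Fintype.card F * (if z = 0 then 1 else 0) := by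
  set θ : F → A := fun a => ∑ x ∈ D, ψ (x * a) with hθ
  refine ⟨(D.card : ℤ)^2 - (r + s) * D.card + r * s, fun z => ?_⟩
  have hsq : ∀ a : F, θ a ^ 2 = ((r : A) + s) * θ a - r * s +
      (if a = 0 then (((D.card : A))^2 - (r + s) * D.card + r * s) else 0) := by
    intro a
    by_cases ha : a = 0
    · subst ha
      simp [hθ]
    · simp only [ha, if_false, add_zero]
      rcases h a ha with h1 | h1
      · have : θ a = r := h1
        rw [this]; ring
      · have : θ a = s := h1
        rw [this]; ring
  have orth : ∀ b : F, ∑ a : F, ψ (b * a) = if b = 0 then (Fintype.card F : A) else 0 := by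
    intro b
    have := AddChar.sum_mulShift (ψ := ψ) b hψ
    rw [← Finset.sum_congr rfl (fun a _ => by rw [mul_comm])] at this
    rw [this]; split_ifs <;> simp
  have e1 : ∑ a : F, θ a ^ 2 * ψ (-z * a) =
      (Fintype.card F : A) * (∑ x ∈ D, ∑ y ∈ D, if x + y = z then (1:A) else 0) := by
    have : ∀ a : F, θ a ^ 2 * ψ (-z * a) = ∑ x ∈ D, ∑ y ∈ D, ψ ((x + y - z) * a) := by
      intro a
      rw [pow_two, hθ]
      simp only [Finset.sum_mul, Finset.mul_sum]
      refine Finset.sum_congr rfl fun x _ => Finset.sum_congr rfl fun y _ => ?_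
      rw [← AddChar.map_add_eq_mul, ← AddChar.map_add_eq_mul]
      congr 1; ring
    simp only [this]
    rw [Finset.sum_comm, Finset.mul_sum]
    refine Finset.sum_congr rfl fun x _ => ?_
    rw [Finset.sum_comm, Finset.mul_sum]
    refine Finset.sum_congr rfl fun y _ => ?_
    rw [orth]
    simp [sub_eq_zero]
  have e2 : ∑ a : F, θ a * ψ (-z * a) = (Fintype.card F : A) * (if z ∈ D then 1 else 0) := by
    have : ∀ a : F, θ a * ψ (-z * a) = ∑ x ∈ D, ψ ((x - z) * a) := by
      intro a
      rw [hθ]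
      simp only [Finset.sum_mul]
      refine Finset.sum_congr rfl fun x _ => ?_
      rw [← AddChar.map_add_eq_mul]
      congr 1; ring
    simp only [this]
    rw [Finset.sum_comm]
    simp only [orth, sub_eq_zero]
    simp
  have e3 : ∑ a : F, ψ (-z * a) = (Fintype.card F : A) * (if z = 0 then 1 else 0) := by
    rw [orth]; simp
  have e4 : ∑ a : F, θ a ^ 2 * ψ (-z * a) = ((r : A) + s) * ∑ a : F, θ a * ψ (-z * a)
      - r * s * ∑ a : F, ψ (-z * a) + (((D.card : A))^2 - (r + s) * D.card + r * s) := by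
    rw [Finset.mul_sum, Finset.mul_sum, ← Finset.sum_sub_distrib]
    have : ((D.card : A))^2 - (r + s) * D.card + r * s =
      ∑ a : F, (if a = 0 then (((D.card : A))^2 - (r + s) * D.card + r * s) else 0) * ψ (-z * a) := by
      simp
    rw [this, ← Finset.sum_add_distrib]
    refine Finset.sum_congr rfl fun a _ => ?_
    rw [hsq]; ring
  rw [e1, e2, e3] at e4
  have : ((((Fintype.card F : ℤ) * (∑ x ∈ D, ∑ y ∈ D, if x + y = z then (1:ℤ) else 0) : ℤ)) : A) =
     (((D.card : ℤ)^2 - (r + s) * D.card + r * s + (r + s) * Fintype.card F * (if z ∈ D then 1 else 0) -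
        r * s * Fintype.card F * (if z = 0 then 1 else 0) : ℤ) : A) := by
    push_cast
    rw [e4]; ring
  exact_mod_cast this

lemma partD (ψ : AddChar F A) (hψ : ψ.IsPrimitive) (D : Set F) (h0 : (0:F) ∉ D) (hneg : -D = D)
    (r s : ℤ)
    (h : ∀ a : F, a ≠ 0 → (∑ x ∈ D.toFinset, ψ (x * a) = r ∨ ∑ x ∈ D.toFinset, ψ (x * a) = s)) :
    ∃ k lam mu : ℕ, (cayley D).IsSRGWith (Fintype.card F) k lam mu := by
  obtain ⟨C, hC⟩ := partD_count ψ hψ D.toFinset r s h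
  have hn : ∀ x : F, -x ∈ D ↔ x ∈ D := fun x => by
    rw [← Set.mem_neg, hneg]
  have hadj : ∀ v w : F, (cayley D).Adj v w ↔ v - w ∈ D := by
    intro v w
    simp only [cayley, SimpleGraph.fromRel_adj]
    have : w - v ∈ D ↔ v - w ∈ D := by rw [← hn, neg_sub]
    rw [this, or_self]
    refine ⟨fun h => h.2, fun h => ⟨?_, h⟩⟩
    rintro rfl
    simp at h; exact h0 h
  set c : F → ℕ := fun z => ∑ x ∈ D.toFinset, ∑ y ∈ D.toFinset, if x + y = z then 1 else 0 with hc
  have hcc : ∀ z z' : F, z ≠ 0 → z' ≠ 0 → (z ∈ D ↔ z' ∈ D) → c z = c z' := by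
    intro z z' hz hz' hzz
    have h1 := hC z
    have h2 := hC z'
    simp only [hz, hz', if_false, Set.mem_toFinset, hzz] at h1 h2
    have h3 : (Fintype.card F : ℤ) * (c z : ℤ) = Fintype.card F * (c z' : ℤ) := by
      simp only [hc]; push_cast; rw [h1, h2]
    have h4 : (Fintype.card F : ℤ) ≠ 0 := by exact_mod_cast Fintype.card_ne_zero
    exact_mod_cast mul_left_cancel₀ h4 h3
  have hcn : ∀ v w : F, Fintype.card ((cayley D).commonNeighbors v w) = c (v - w) := by
    intro v w
    have : c (v - w) = (D.toFinset.filter fun x => x ∈ D ∧ (v - w) - x ∈ D).card := by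
      simp only [hc]
      rw [Finset.card_filter]
      refine Finset.sum_congr rfl fun x hx => ?_
      simp only [Set.mem_toFinset] at hx
      have : ∀ y : F, x + y = v - w ↔ v - w - x = y := fun y => by
        constructor
        · intro h; rw [← h]; ring
        · intro h; rw [← h]; ring
      simp only [this]
      rw [Finset.sum_ite_eq]
      simp [hx]
    rw [this, ← Set.toFinset_card]
    refine Finset.card_bij' (fun u _ => v - u) (fun x _ => v - x) ?_ ?_ ?_ ?_
    · intro u hu
      simp only [Set.mem_toFinset, SimpleGraph.mem_commonNeighbors, hadj] at hu
      simp only [Finset.mem_filter, Set.mem_toFinset]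
      refine ⟨hu.1, hu.1, ?_⟩
      rw [← hn]
      convert hu.2 using 1; ring
    · intro x hx
      simp only [Finset.mem_filter, Set.mem_toFinset] at hx
      simp only [Set.mem_toFinset, SimpleGraph.mem_commonNeighbors, hadj]
      refine ⟨by simpa using hx.1, ?_⟩
      rw [← hn]
      convert hx.2.2 using 1; ring
    · intro u _; ring
    · intro u _; ring
  have hreg : (cayley D).IsRegularOfDegree D.toFinset.card := by
    intro v
    rw [← SimpleGraph.card_neighborFinset_eq_degree]
    refine Finset.card_bij' (fun u _ => v - u) (fun x _ => v - x) ?_ ?_ ?_ ?_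
    · intro u hu
      simpa [hadj] using hu
    · intro x hx
      simpa [hadj] using hx
    · intro u _; ring
    · intro u _; ring
  have key : ∀ P : F → Prop, (∀ z z', P z → P z' → c z = c z') → ∃ l, ∀ z, P z → c z = l := by
    intro P hP
    by_cases hex : ∃ z, P z
    · obtain ⟨z, hz⟩ := hex
      exact ⟨c z, fun z' hz' => hP z' z hz' hz⟩
    · exact ⟨0, fun z hz => absurd ⟨z, hz⟩ hex⟩
  have hD0 : ∀ z, z ∈ D → z ≠ 0 := fun z hz hz0 => h0 (hz0 ▸ hz)
  obtain ⟨lam, hlam⟩ := key (fun z => z ∈ D) (fun z z' hz hz' =>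
    hcc z z' (hD0 z hz) (hD0 z' hz') (iff_of_true hz hz'))
  obtain ⟨mu, hmu⟩ := key (fun z => z ≠ 0 ∧ z ∉ D) (fun z z' hz hz' =>
    hcc z z' hz.1 hz'.1 (iff_of_false hz.2 hz'.2))
  refine ⟨_, lam, mu, rfl, hreg, ?_, ?_⟩
  · intro v w hvw
    rw [hcn]
    exact hlam _ ((hadj v w).1 hvw)
  · intro v w hne hvw
    rw [hcn]
    exact hmu _ ⟨sub_ne_zero.2 hne, fun h => hvw ((hadj v w).2 h)⟩

end PartD

section PartB

open Polynomial

variable {F : Type*} [Field F] [Fintype F] {A : Type*} [NormedField A] [IsUltrametricDist A]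
  [CharZero A] [IsAlgClosed A]

lemma partB_norm_sum_le {ι : Type*} (s : Finset ι) (f : ι → A) (C : ℝ) (hC : 0 ≤ C)
    (h : ∀ i ∈ s, ‖f i‖ ≤ C) : ‖∑ i ∈ s, f i‖ ≤ C :=
  IsUltrametricDist.norm_sum_le_of_forall_le_of_nonneg hC h

lemma partB_norm_root {z : A} {n : ℕ} (hn : n ≠ 0) (hz : z ^ n = 1) : ‖z‖ = 1 := by
  have h : ‖z‖ ^ n = 1 := by rw [← norm_pow, hz, norm_one]
  exact (pow_eq_one_iff_of_nonneg (norm_nonneg _) hn).1 h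

lemma partB_norm_int (n : ℤ) : ‖(n : A)‖ ≤ 1 := IsUltrametricDist.norm_intCast_le_one A n

lemma partB_teich (p : ℕ) [hp : Fact p.Prime] [CharP F p] (hpA : ‖(p : A)‖ < 1)
    (γ : Fˣ) (hγ : ∀ x : Fˣ, x ∈ Subgroup.zpowers γ) :
    ∃ ω : MulChar F A, IsPrimitiveRoot (ω γ) (Fintype.card F - 1) ∧
      ∀ T : F → ℤ, ∑ x : F, x⁻¹ * (T x : F) ≠ 0 → ‖∑ x : F, ω⁻¹ x * (T x : A)‖ = 1 := by
  set q := Fintype.card F with hq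
  have hq1 : 1 < q := Fintype.one_lt_card
  have hq0 : q - 1 ≠ 0 := by omega
  set O := (NormedField.valuation (K := A)).valuationSubring with hO
  have memO : ∀ x : A, x ∈ O ↔ ‖x‖ ≤ 1 := by
    intro x
    rw [hO, Valuation.mem_valuationSubring_iff, NormedField.valuation_apply, ← NNReal.coe_le_coe]
    simp
  have maxO : ∀ x : O, IsLocalRing.residue O x = 0 ↔ ‖(x : A)‖ < 1 := by
    intro x
    rw [IsLocalRing.residue_eq_zero_iff, ValuationSubring.valuation_lt_one_iff,
      ← (Valuation.isEquiv_valuation_valuationSubring (NormedField.valuation (K := A))).lt_one_iff_lt_one,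
      NormedField.valuation_apply, ← NNReal.coe_lt_coe]
    simp
  set k := IsLocalRing.ResidueField O with hk
  set red : O →+* k := IsLocalRing.residue O with hred
  have hpk : (p : k) = 0 := by
    have : red (p : O) = 0 := (maxO _).2 (by simpa using hpA)
    simpa using this
  haveI : CharP k p := by
    exact (CharP.charP_iff_prime_eq_zero hp.out).2 hpk
  letI : Algebra (ZMod p) F := ZMod.algebra F p
  letI : Algebra (ZMod p) k := ZMod.algebra k p
  -- primitive root
  haveI : NeZero ((q - 1 : ℕ) : A) := ⟨by exact_mod_cast hq0⟩
  obtain ⟨z, hz⟩ := HasEnoughRootsOfUnity.exists_primitiveRoot A (q - 1)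
  have hzO : z ∈ O := (memO z).2 (partB_norm_root hq0 hz.pow_eq_one).le
  have hz' : IsPrimitiveRoot (⟨z, hzO⟩ : O) (q - 1) :=
    IsPrimitiveRoot.of_map_of_injective (f := O.subtype) (by simpa using hz) Subtype.val_injective
  have hprod := X_pow_sub_one_eq_prod (Nat.pos_of_ne_zero hq0) hz'
  have hprodk : (X ^ (q - 1) - 1 : k[X]) =
      ∏ ζ ∈ nthRootsFinset (q - 1) (1 : O), (X - C (red ζ)) := by
    have := congrArg (Polynomial.map red) hprod
    simpa [Polynomial.map_prod] using this
  have hsplit : (map (algebraMap (ZMod p) k) (X ^ Fintype.card F - X)).Splits := by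
    have : (map (algebraMap (ZMod p) k) (X ^ Fintype.card F - X)) =
      X * ∏ ζ ∈ nthRootsFinset (q - 1) (1 : O), (X - C (red ζ)) := by
      rw [← hprodk]
      simp only [Polynomial.map_sub, Polynomial.map_pow, map_X]
      rw [← hq, mul_sub, ← pow_succ', Nat.sub_add_cancel hq1.le, mul_one]
    rw [this]
    exact Splits.X.mul (Splits.prod fun i _ => Splits.X_sub_C _)
  haveI := FiniteField.isSplittingField_sub F (ZMod p)
  let ι : F →ₐ[ZMod p] k := Polynomial.IsSplittingField.lift F (X ^ Fintype.card F - X) hsplit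
  have hγk : ∃ ζ ∈ nthRootsFinset (q - 1) (1 : O), red ζ = ι γ := by
    have h1 : (ι (γ : F)) ^ (q - 1) - 1 = 0 := by
      rw [← map_pow, FiniteField.pow_card_sub_one_eq_one _ γ.ne_zero]; simp
    have h2 := congrArg (Polynomial.eval (ι (γ : F))) hprodk
    simp only [eval_sub, eval_pow, eval_X, eval_one, h1, eval_prod, eval_C] at h2
    obtain ⟨ζ, hζ, h3⟩ := Finset.prod_eq_zero_iff.1 h2.symm
    exact ⟨ζ, hζ, (sub_eq_zero.1 h3).symm⟩
  obtain ⟨ζ, hζ, hζγ⟩ := hγk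
  rw [mem_nthRootsFinset (Nat.pos_of_ne_zero hq0)] at hζ
  have hζA : (ζ : A) ^ (q - 1) = 1 := by
    have := congrArg O.subtype hζ
    simpa using this
  have hζ0 : (ζ : A) ≠ 0 := by
    intro h; rw [h, zero_pow hq0] at hζA; exact zero_ne_one hζA
  set u : Aˣ := Units.mk0 (ζ : A) hζ0 with hu
  have hcard : Fintype.card Fˣ = q - 1 := Fintype.card_units F
  have huroot : u ∈ rootsOfUnity (Fintype.card Fˣ) A := by
    rw [mem_rootsOfUnity, hcard]
    ext; simpa [hu] using hζA
  set ω := MulChar.ofRootOfUnity huroot hγ with hω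
  have hωγ : ω γ = (ζ : A) := by
    rw [hω, MulChar.ofRootOfUnity_spec]; rfl
  have hunit : ∀ x : Fˣ, ∃ n : ℕ, x = γ ^ n := by
    intro x
    have := hγ x
    rw [← mem_powers_iff_mem_zpowers] at this
    obtain ⟨n, hn⟩ := this
    exact ⟨n, hn.symm⟩
  have hωO : ∀ x : F, ω x ∈ O := by
    intro x
    by_cases hx : x = 0
    · rw [hx, MulChar.map_zero]; exact O.zero_mem
    · obtain ⟨n, hn⟩ := hunit (Units.mk0 x hx)
      have : x = (γ : F) ^ n := by
        have := congrArg Units.val hn; simpa using this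
      rw [this, map_pow, hωγ]
      exact O.pow_mem ζ.2 n
  have hredω : ∀ x : F, red ⟨ω x, hωO x⟩ = ι x := by
    intro x
    by_cases hx : x = 0
    · subst hx
      have : (⟨ω 0, hωO 0⟩ : O) = 0 := Subtype.ext (MulChar.map_zero ω)
      rw [this]; simp
    · obtain ⟨n, hn⟩ := hunit (Units.mk0 x hx)
      have : x = (γ : F) ^ n := by
        have := congrArg Units.val hn; simpa using this
      have h2 : (⟨ω x, hωO x⟩ : O) = ζ ^ n := by
        ext; simp [this, hωγ]
      rw [h2, map_pow, hζγ, ← map_pow, ← this]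
  refine ⟨ω, ?_, ?_⟩
  · rw [hωγ]
    refine IsPrimitiveRoot.mk_of_lt _ (Nat.pos_of_ne_zero hq0) hζA ?_
    intro l hl0 hlq hl
    have h1 : ζ ^ l = 1 := by ext; simpa using hl
    have h2 : ι ((γ : F) ^ l) = ι 1 := by rw [map_pow, ← hζγ, ← map_pow, h1]; simp
    have h3 : (γ : F) ^ l = 1 := ι.toRingHom.injective h2
    have h4 : γ ^ l = 1 := by ext; simpa using h3
    have h5 := orderOf_dvd_of_pow_eq_one h4
    rw [orderOf_eq_card_of_forall_mem_zpowers hγ, Nat.card_eq_fintype_card, hcard] at h5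
    exact absurd (Nat.le_of_dvd hl0 h5) (by omega)
  · intro T hT
    have hinv : ∀ x : F, ω⁻¹ x = ω x⁻¹ := fun x => by rw [MulChar.inv_apply, Ring.inverse_eq_inv]
    have hmem : ∑ x : F, ω⁻¹ x * (T x : A) ∈ O := by
      refine O.sum_mem fun x _ => O.mul_mem _ _ ?_ ?_
      · rw [hinv]; exact hωO _
      · exact (memO _).2 (partB_norm_int _)
    have hr : red ⟨_, hmem⟩ = ι (∑ x : F, x⁻¹ * (T x : F)) := by
      have : (⟨_, hmem⟩ : O) = ∑ x : F, (⟨ω x⁻¹, hωO _⟩ : O) * (T x : O) := by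
        ext; simp [hinv]
      rw [this, map_sum, map_sum]
      refine Finset.sum_congr rfl fun x _ => ?_
      rw [map_mul, hredω, map_mul]; simp
    have hne : red ⟨_, hmem⟩ ≠ 0 := by
      rw [hr]; intro h
      exact hT (ι.toRingHom.injective (by simpa using h))
    have h1 : ¬ ‖∑ x : F, ω⁻¹ x * (T x : A)‖ < 1 := fun h => hne ((maxO _).2 h)
    exact le_antisymm ((memO _).1 hmem) (not_lt.1 h1)

end PartB

section PartB2

open Polynomial

variable {F : Type*} [Field F] [Fintype F] {A : Type*} [NormedField A] [IsUltrametricDist A]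
  [CharZero A] [IsAlgClosed A]

lemma partB_psi (p : ℕ) [hp : Fact p.Prime] [CharP F p] [Algebra (ZMod p) F] {ζ : A}
    (hζ : IsPrimitiveRoot ζ p) :
    ∃ ψ : AddChar F A, ψ.IsPrimitive ∧ ∀ x, ψ x = ζ ^ (Algebra.trace (ZMod p) F x).val := by
  set ψ : AddChar F A := (AddChar.zmodChar p hζ.pow_eq_one).compAddMonoidHom
    (Algebra.trace (ZMod p) F).toAddMonoidHom with hψ
  have hv : ∀ x, ψ x = ζ ^ (Algebra.trace (ZMod p) F x).val := by
    intro x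
    simp [hψ, AddChar.zmodChar_apply]
  refine ⟨ψ, AddChar.IsPrimitive.of_ne_one ?_, hv⟩
  obtain ⟨x, hx⟩ := Algebra.trace_surjective (ZMod p) F 1
  intro h1
  have h2 := hv x
  haveI : Fact (1 < p) := ⟨hp.out.one_lt⟩
  rw [h1, hx, ZMod.val_one, pow_one] at h2
  simp at h2
  exact hζ.ne_one hp.out.one_lt h2.symm

lemma partB_psi_frob (p : ℕ) [hp : Fact p.Prime] [CharP F p] [Algebra (ZMod p) F] {ζ : A}
    (ψ : AddChar F A) (hψ : ∀ x, ψ x = ζ ^ (Algebra.trace (ZMod p) F x).val) (x : F) :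
    ψ (x ^ p) = ψ x := by
  rw [hψ, hψ]
  have : Algebra.trace (ZMod p) F (x ^ p) = Algebra.trace (ZMod p) F x := by
    have := Algebra.trace_eq_of_algEquiv (FiniteField.frobeniusAlgEquiv (ZMod p) F p) x
    simpa using this
  rw [this]

lemma partB_pi (p : ℕ) [hp : Fact p.Prime] {ζ : A} (hζ : IsPrimitiveRoot ζ p)
    (hpA : ‖(p : A)‖ = (p : ℝ)⁻¹) : ‖ζ - 1‖ ^ (p - 1) = (p : ℝ)⁻¹ := by
  have hz1 : ‖ζ‖ = 1 := partB_norm_root hp.out.ne_zero hζ.pow_eq_one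
  have key : ∀ (z : A), ‖z‖ = 1 → ∀ n : ℕ, ‖z ^ n - 1‖ ≤ ‖z - 1‖ := by
    intro z hz n
    rw [← geom_sum_mul, norm_mul]
    refine mul_le_of_le_one_left (norm_nonneg _) (partB_norm_sum_le _ _ _ zero_le_one ?_)
    intro i _
    rw [norm_pow, hz, one_pow]
  have h1 : ∀ i ∈ Finset.range (p - 1), ‖ζ ^ (i + 1) - 1‖ = ‖ζ - 1‖ := by
    intro i hi
    refine le_antisymm (key ζ hz1 _) ?_
    have hi' : i + 1 < p := by have := Finset.mem_range.1 hi; omega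
    have hcop : Nat.Coprime (i + 1) p :=
      ((Nat.Prime.coprime_iff_not_dvd hp.out).2 (fun h =>
        absurd (Nat.le_of_dvd (Nat.succ_pos i) h) (not_le.2 hi'))).symm
    obtain ⟨j, hj⟩ : ∃ j : ℕ, (ζ ^ (i+1)) ^ j = ζ := by
      have h2 := hζ.pow_of_coprime (i + 1) hcop
      obtain ⟨j, _, hj⟩ := h2.eq_pow_of_pow_eq_one hζ.pow_eq_one
      exact ⟨j, hj⟩
    calc ‖ζ - 1‖ = ‖(ζ ^ (i+1)) ^ j - 1‖ := by rw [hj]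
      _ ≤ _ := key _ (by rw [norm_pow, hz1, one_pow]) j
  have h2 : ∏ i ∈ Finset.range (p - 1), (1 - ζ ^ (i + 1)) = (p : A) := by
    have hpp : p - 1 + 1 = p := Nat.sub_add_cancel hp.out.one_le
    have hζ' : IsPrimitiveRoot ζ (p - 1 + 1) := by rwa [hpp]
    have h3 := hζ'.prod_one_sub_pow_eq_order
    rw [h3]
    have : ((p - 1 + 1 : ℕ) : A) = p := by rw [hpp]
    push_cast at this
    exact this
  have h3 := congrArg norm h2
  rw [norm_prod, hpA] at h3
  rw [← h3, Finset.prod_congr rfl (fun i hi => by rw [norm_sub_rev, h1 i hi])]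
  simp

lemma partB_super {ψ : AddChar F A} (hψ : ψ ≠ 1) (χ φ : MulChar F A) :
    ‖gaussSum χ ψ‖ * ‖gaussSum φ ψ‖ ≤ ‖gaussSum (χ * φ) ψ‖ := by
  have hχ1 : ∀ (χ : MulChar F A) (x : F), ‖χ x‖ ≤ 1 := by
    intro χ x
    by_cases hx : x = 0
    · rw [hx, MulChar.map_zero]; simp
    · refine (partB_norm_root (n := Fintype.card F - 1) ?_ ?_).le
      · have := Fintype.one_lt_card (α := F); omega
      · rw [← map_pow, FiniteField.pow_card_sub_one_eq_one x hx, map_one]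
  have hψ1 : ∀ x, ‖ψ x‖ ≤ 1 := by
    intro x
    refine (partB_norm_root (n := Fintype.card F) Fintype.card_ne_zero ?_).le
    rw [← AddChar.map_nsmul_eq_pow, card_nsmul_eq_zero, AddChar.map_zero_eq_one]
  have hg1 : ∀ (χ : MulChar F A), ‖gaussSum χ ψ‖ ≤ 1 := by
    intro χ
    refine partB_norm_sum_le _ _ _ zero_le_one fun x _ => ?_
    rw [norm_mul]
    exact mul_le_one₀ (hχ1 _ _) (norm_nonneg _) (hψ1 _)
  by_cases h : χ * φ = 1
  · rw [h, gaussSum_one_left hψ]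
    simpa using mul_le_one₀ (hg1 χ) (norm_nonneg _) (hg1 φ)
  · rw [← norm_mul, ← jacobiSum_mul_nontrivial h, norm_mul]
    refine mul_le_of_le_one_right (norm_nonneg _) ?_
    refine partB_norm_sum_le _ _ _ zero_le_one fun x _ => ?_
    rw [norm_mul]
    exact mul_le_one₀ (hχ1 _ _) (norm_nonneg _) (hχ1 _ _)

lemma partB_frob (p : ℕ) [hp : Fact p.Prime] [CharP F p] (ψ : AddChar F A)
    (hψ : ∀ x, ψ (x ^ p) = ψ x) (χ : MulChar F A) : gaussSum (χ ^ p) ψ = gaussSum χ ψ := by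
  unfold gaussSum
  have hb : Function.Bijective (fun x : F => x ^ p) := by
    exact (frobeniusEquiv F p).bijective
  rw [← hb.sum_comp (fun x => χ x * ψ x)]
  refine Finset.sum_congr rfl fun x _ => ?_
  rw [hψ, MulChar.pow_apply' _ hp.out.ne_zero, map_pow]

lemma partB_trace (p f : ℕ) [hp : Fact p.Prime] [CharP F p] [Algebra (ZMod p) F]
    (hcard : Fintype.card F = p ^ f) (hf : 0 < f) (h2 : 2 < Fintype.card F) :
    ∑ x : F, x⁻¹ * ((((Algebra.trace (ZMod p) F x).val : ℤ)) : F) = -1 := by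
  have hfr : Module.finrank (ZMod p) F = f := by
    have h := Module.card_eq_pow_finrank (K := ZMod p) (V := F)
    rw [ZMod.card, hcard] at h
    exact (Nat.pow_right_injective hp.out.two_le h).symm
  have h1 : ∀ x : F, ((((Algebra.trace (ZMod p) F x).val : ℤ)) : F) =
      ∑ i ∈ Finset.range f, x ^ p ^ i := by
    intro x
    have := FiniteField.algebraMap_trace_eq_sum_pow (ZMod p) F x
    rw [hfr, Nat.card_eq_fintype_card, ZMod.card] at this
    rw [← this]
    conv_rhs => rw [← ZMod.natCast_zmod_val (Algebra.trace (ZMod p) F x)]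
    rw [map_natCast, Int.cast_natCast]
  simp only [h1, Finset.mul_sum]
  rw [Finset.sum_comm]
  have h3 : ∀ i : ℕ, ∑ x : F, x⁻¹ * x ^ p ^ i = if Fintype.card F - 1 ∣ p ^ i - 1 then -1 else 0 := by
    intro i
    rw [← FiniteField.sum_pow_units F (p ^ i - 1)]
    rw [← Finset.sum_subset (Finset.subset_univ (Finset.univ.image (Units.val : Fˣ → F)))]
    · rw [Finset.sum_image (fun _ _ _ _ h => Units.ext h)]
      refine Finset.sum_congr rfl fun x _ => ?_
      have : p ^ i = (p ^ i - 1) + 1 := (Nat.sub_add_cancel (Nat.one_le_pow _ _ hp.out.pos)).symm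
      conv_lhs => rw [this, pow_succ]
      field_simp
    · intro x _ hx
      have : x = 0 := by
        by_contra h0
        exact hx (Finset.mem_image.2 ⟨Units.mk0 x h0, Finset.mem_univ _, rfl⟩)
      simp [this]
  simp only [h3]
  rw [Finset.sum_eq_single 0]
  · simp
  · intro i hi hi0
    rw [if_neg]
    intro hd
    have hlt : p ^ i < p ^ f := Nat.pow_lt_pow_right hp.out.one_lt (Finset.mem_range.1 hi)
    have h1 : 1 < p ^ i := Nat.one_lt_pow hi0 hp.out.one_lt
    have := Nat.le_of_dvd (by omega) hd
    rw [hcard] at this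
    omega
  · intro h; simp at h; omega

lemma partB_g1 (p f : ℕ) [hp : Fact p.Prime] [CharP F p] [Algebra (ZMod p) F]
    (hcard : Fintype.card F = p ^ f) (hf : 0 < f) (h2 : 2 < Fintype.card F)
    {ζ : A} (hζ : IsPrimitiveRoot ζ p) (hpA : ‖(p : A)‖ = (p : ℝ)⁻¹)
    (ψ : AddChar F A) (hψ : ∀ x, ψ x = ζ ^ (Algebra.trace (ZMod p) F x).val)
    (ω : MulChar F A) (hω1 : ω⁻¹ ≠ 1)
    (hω : ∀ T : F → ℤ, ∑ x : F, x⁻¹ * (T x : F) ≠ 0 → ‖∑ x : F, ω⁻¹ x * (T x : A)‖ = 1) :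
    ‖ζ - 1‖ ≤ ‖gaussSum ω⁻¹ ψ‖ := by
  have hpi := partB_pi p hζ hpA
  have hz1 : ‖ζ‖ = 1 := partB_norm_root hp.out.ne_zero hζ.pow_eq_one
  have hlt : ‖ζ - 1‖ < 1 := by
    by_contra h
    have h1 := one_le_pow₀ (not_lt.1 h) (n := p - 1)
    rw [hpi] at h1
    have : (1:ℝ) < p := by exact_mod_cast hp.out.one_lt
    exact absurd h1 (not_le.2 (inv_lt_one_of_one_lt₀ this))
  have hpos : 0 < ‖ζ - 1‖ := norm_pos_iff.2 (hζ.sub_one_ne_zero hp.out.one_lt)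
  have hχ1 : ∀ (χ : MulChar F A) (x : F), ‖χ x‖ ≤ 1 := by
    intro χ x
    by_cases hx : x = 0
    · rw [hx, MulChar.map_zero]; simp
    · refine (partB_norm_root (n := Fintype.card F - 1) (by omega) ?_).le
      rw [← map_pow, FiniteField.pow_card_sub_one_eq_one x hx, map_one]
  have hpow : ∀ n : ℕ, ‖ζ ^ n - 1 - n * (ζ - 1)‖ ≤ ‖ζ - 1‖ ^ 2 := by
    intro n
    induction n with
    | zero => simp
    | succ n ih =>
      have e : ζ ^ (n+1) - 1 - ((n+1 : ℕ) : A) * (ζ - 1) =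
        (ζ ^ n - 1 - n * (ζ - 1)) + (∑ i ∈ Finset.range n, ζ ^ i) * (ζ - 1) ^ 2 := by
        have := geom_sum_mul ζ n
        have h3 : (∑ i ∈ Finset.range n, ζ ^ i) * (ζ - 1) ^ 2 = (ζ ^ n - 1) * (ζ - 1) := by
          rw [← this]; ring
        rw [h3]; push_cast; ring
      rw [e]
      refine (IsUltrametricDist.norm_add_le_max _ _).trans (max_le ih ?_)
      rw [norm_mul, norm_pow]
      refine mul_le_of_le_one_left (by positivity) (partB_norm_sum_le _ _ _ zero_le_one ?_)
      intro i _
      rw [norm_pow, hz1, one_pow]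
  set T : F → ℤ := fun x => ((Algebra.trace (ZMod p) F x).val : ℤ) with hT
  have hS := hω T (by
    rw [hT, partB_trace p f hcard hf h2]
    exact neg_ne_zero.2 one_ne_zero)
  have e : gaussSum ω⁻¹ ψ = (ζ - 1) * (∑ x : F, ω⁻¹ x * (T x : A)) +
      ∑ x : F, ω⁻¹ x * (ψ x - 1 - (Algebra.trace (ZMod p) F x).val * (ζ - 1)) := by
    have h0 := MulChar.sum_eq_zero_of_ne_one hω1
    unfold gaussSum
    rw [Finset.mul_sum, ← Finset.sum_add_distrib, ← sub_eq_zero, ← Finset.sum_sub_distrib, ← h0]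
    refine Finset.sum_congr rfl fun x _ => ?_
    simp only [hT]; push_cast; ring
  have hR : ‖∑ x : F, ω⁻¹ x * (ψ x - 1 - (Algebra.trace (ZMod p) F x).val * (ζ - 1))‖ ≤
      ‖ζ - 1‖ ^ 2 := by
    refine partB_norm_sum_le _ _ _ (by positivity) fun x _ => ?_
    rw [norm_mul, hψ]
    exact (mul_le_of_le_one_left (norm_nonneg _) (hχ1 _ _)).trans (hpow _)
  set R := ∑ x : F, ω⁻¹ x * (ψ x - 1 - (Algebra.trace (ZMod p) F x).val * (ζ - 1))
  by_contra hcon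
  have h5 : (ζ - 1) * (∑ x : F, ω⁻¹ x * (T x : A)) = gaussSum ω⁻¹ ψ + (-R) := by rw [e]; ring
  have h6 := congrArg norm h5
  rw [norm_mul, hS, mul_one] at h6
  have h7 := IsUltrametricDist.norm_add_le_max (gaussSum ω⁻¹ ψ) (-R)
  rw [← h6, norm_neg] at h7
  have h8 : ‖ζ - 1‖ ^ 2 < ‖ζ - 1‖ := by nlinarith
  exact absurd h7 (not_le.2 (max_lt (not_le.1 hcon) (hR.trans_lt h8)))

end PartB2

section PartB3

variable {F : Type*} [Field F] [Fintype F] {A : Type*} [NormedField A] [IsUltrametricDist A]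
  [CharZero A] [IsAlgClosed A]

lemma partB_super_pow {ψ : AddChar F A} (hψ : ψ ≠ 1) (χ φ : MulChar F A) (d : ℕ) :
    ‖gaussSum χ ψ‖ * ‖gaussSum φ ψ‖ ^ d ≤ ‖gaussSum (χ * φ ^ d) ψ‖ := by
  induction d with
  | zero => simp
  | succ d ih =>
    rw [pow_succ, pow_succ, ← mul_assoc, ← mul_assoc]
    exact (mul_le_mul_of_nonneg_right ih (norm_nonneg _)).trans (partB_super hψ _ _)

lemma partB_lower (p f : ℕ) [hp : Fact p.Prime] [CharP F p]
    (hcard : Fintype.card F = p ^ f) (N : ℕ) (hN : 0 < N) (hNd : N ∣ p ^ f - 1)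
    (ψ : AddChar F A) (hψ1 : ψ ≠ 1) (hψ : ∀ x, ψ (x ^ p) = ψ x) (c : ℝ) (hc0 : 0 ≤ c)
    (hc : c ^ (p - 1) = (p : ℝ)⁻¹)
    (φ : MulChar F A) (hφ : c ≤ ‖gaussSum φ ψ‖) (t : ℕ) (ht : t < N) :
    ((p : ℝ)⁻¹) ^ (∑ j ∈ Finset.range f, p ^ j * t % N) ≤
      ‖gaussSum (φ ^ ((p ^ f - 1) / N * t)) ψ‖ ^ N := by
  set d : ℕ → ℕ := fun j => p * (p ^ j * t % N) / N with hd
  have step : ∀ n : ℕ, c ^ (∑ j ∈ Finset.range n, d j) ≤ ‖gaussSum (φ ^ (p ^ n * t / N)) ψ‖ := by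
    intro n
    induction n with
    | zero =>
      rw [pow_zero, one_mul, Nat.div_eq_of_lt ht, pow_zero, gaussSum_one_left hψ1]
      simp
    | succ n ih =>
      have e : p ^ (n + 1) * t / N = (p ^ n * t / N) * p + d n := by
        have h1 := Nat.div_add_mod (p ^ n * t) N
        have h2 : p ^ (n + 1) * t = N * ((p ^ n * t / N) * p) + p * (p ^ n * t % N) := by
          calc p ^ (n + 1) * t = p * (p ^ n * t) := by ring
            _ = p * (N * (p ^ n * t / N) + p ^ n * t % N) := by rw [h1]
            _ = _ := by ring
        rw [h2, Nat.mul_add_div hN]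
      rw [Finset.sum_range_succ, pow_add, e, pow_add, pow_mul]
      refine le_trans ?_ (partB_super_pow hψ1 _ _ _)
      rw [partB_frob p ψ hψ]
      exact mul_le_mul ih (pow_le_pow_left₀ hc0 hφ _) (by positivity) (norm_nonneg _)
  have hpf : 1 ≤ p ^ f := Nat.one_le_pow _ _ hp.out.pos
  obtain ⟨k, hk⟩ := hNd
  have hpfk : p ^ f = N * k + 1 := by omega
  have hkt : p ^ f * t / N = (p ^ f - 1) / N * t := by
    rw [hk, Nat.mul_div_cancel_left _ hN, hpfk]
    have : (N * k + 1) * t = N * (k * t) + t := by ring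
    rw [this, Nat.mul_add_div hN, Nat.div_eq_of_lt ht, add_zero]
  have hsum : N * ∑ j ∈ Finset.range f, d j = (p - 1) * ∑ j ∈ Finset.range f, p ^ j * t % N := by
    have h1 : ∀ n, N * ∑ j ∈ Finset.range n, d j + p ^ n * t % N =
        (p - 1) * ∑ j ∈ Finset.range n, p ^ j * t % N + t % N := by
      intro n
      induction n with
      | zero => simp
      | succ n ih =>
        rw [Finset.sum_range_succ, Finset.sum_range_succ]
        have h3 : N * d n + p ^ (n + 1) * t % N = p * (p ^ n * t % N) := by
          have := Nat.div_add_mod (p * (p ^ n * t % N)) N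
          rw [Nat.mul_mod_mod] at this
          rw [← this, pow_succ']
          simp only [hd, mul_assoc]
        obtain ⟨p', rfl⟩ : ∃ p', p = p' + 1 := ⟨p - 1, (Nat.sub_add_cancel hp.out.one_le).symm⟩
        simp only [Nat.add_sub_cancel] at ih ⊢
        nlinarith
    have h2 := h1 f
    have h3 : p ^ f * t % N = t % N := by
      rw [hpfk]
      have : (N * k + 1) * t = t + N * (k * t) := by ring
      rw [this, Nat.add_mul_mod_self_left]
    omega
  have h1 := pow_le_pow_left₀ (by positivity) (step f) N
  rw [← pow_mul, mul_comm _ N, hsum, pow_mul, hc, hkt] at h1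
  exact h1

/-- Stickelberger-type bound. -/
lemma partB (p f : ℕ) [hp : Fact p.Prime] [CharP F p] [Algebra (ZMod p) F]
    (hcard : Fintype.card F = p ^ f) (hf : 0 < f) (h2 : 2 < Fintype.card F)
    (hpA : ‖(p : A)‖ = (p : ℝ)⁻¹)
    (N : ℕ) (hN : 1 < N) (hNodd : Odd N) (hNd : N ∣ p ^ f - 1)
    (γ : Fˣ) (hγ : ∀ x : Fˣ, x ∈ Subgroup.zpowers γ)
    {ζ : A} (hζ : IsPrimitiveRoot ζ p)
    (ψ : AddChar F A) (hψp : ψ.IsPrimitive)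
    (hψ : ∀ x, ψ x = ζ ^ (Algebra.trace (ZMod p) F x).val) :
    ∃ χ : MulChar F A, IsPrimitiveRoot (χ γ) N ∧
      gaussSum χ ψ * gaussSum χ⁻¹ ψ = (p : A) ^ f ∧
      ‖gaussSum χ ψ‖ ^ N ≤ ((p : ℝ)⁻¹) ^ (∑ j ∈ Finset.range f, p ^ j % N) ∧
      ‖gaussSum χ⁻¹ ψ‖ ^ N ≤ ((p : ℝ)⁻¹) ^ (f * N - ∑ j ∈ Finset.range f, p ^ j % N) := by
  have hp1 : (1:ℝ) < p := by exact_mod_cast hp.out.one_lt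
  have hψ1 : ψ ≠ 1 := by
    rintro rfl
    obtain ⟨x, hx⟩ := Algebra.trace_surjective (ZMod p) F 1
    have h2 := hψ x
    haveI : Fact (1 < p) := ⟨hp.out.one_lt⟩
    rw [hx, ZMod.val_one, pow_one] at h2
    simp at h2
    exact hζ.ne_one hp.out.one_lt h2.symm
  have hfrob := partB_psi_frob p ψ hψ
  obtain ⟨ω, hωγ, hω⟩ := partB_teich (A := A) p (by rw [hpA]; exact inv_lt_one_of_one_lt₀ hp1) γ hγ
  rw [hcard] at hωγ
  have hω1 : ω⁻¹ ≠ 1 := by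
    intro h
    rw [inv_eq_one] at h
    rw [h, MulChar.one_apply_coe] at hωγ
    have := hωγ.unique IsPrimitiveRoot.one
    omega
  have hg1 := partB_g1 p f hcard hf h2 hζ hpA ψ hψ ω hω1 hω
  have hpi := partB_pi p hζ hpA
  set k := (p ^ f - 1) / N with hk
  have hkN : N * k = p ^ f - 1 := Nat.mul_div_cancel' hNd
  have hk0 : 0 < p ^ f - 1 := by omega
  set χ : MulChar F A := ω⁻¹ ^ k with hχ
  have hχγ : IsPrimitiveRoot (χ γ) N := by
    have h1 : IsPrimitiveRoot ((ω γ) ^ k) N := hωγ.pow hk0 (by rw [← hkN, mul_comm])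
    have h3 : χ γ = ((ω γ) ^ k)⁻¹ := by
      rw [hχ, MulChar.pow_apply_coe, MulChar.inv_apply_eq_inv', inv_pow]
    rw [h3]; exact h1.inv
  have hχN : χ ^ N = 1 := by
    apply MulChar.ext
    intro a
    obtain ⟨n, hn⟩ := hγ a
    have h5 : (χ γ) ^ N = 1 := hχγ.pow_eq_one
    have h6 : (χ ^ N : MulChar F A).toUnitHom γ = 1 := by
      ext; rw [MulChar.coe_toUnitHom, MulChar.pow_apply_coe, h5]; rfl
    have h7 : (χ ^ N : MulChar F A).toUnitHom a = 1 := by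
      rw [← hn]; simp only []; rw [map_zpow, h6, one_zpow]
    have := congrArg Units.val h7
    rw [MulChar.coe_toUnitHom] at this
    rw [this, MulChar.one_apply_coe]; rfl
  have hχinv : χ⁻¹ = χ ^ (N - 1) := by
    rw [inv_eq_iff_mul_eq_one, ← pow_succ', Nat.sub_add_cancel hN.le, hχN]
  have hχne : χ ≠ 1 := by
    intro h
    rw [h, MulChar.one_apply_coe] at hχγ
    have := hχγ.unique IsPrimitiveRoot.one
    omega
  have hneg : χ (-1) = 1 := by
    have h1 : χ (-1) ^ N = 1 := by
      rw [← MulChar.pow_apply' _ (by omega), hχN, MulChar.one_apply (by simp)]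
    have h2 : χ (-1) ^ 2 = 1 := by rw [← map_pow]; simp
    obtain ⟨j, hj⟩ := hNodd
    rw [hj, pow_add, pow_mul, h2] at h1
    simpa using h1
  have hprod : gaussSum χ ψ * gaussSum χ⁻¹ ψ = (p : A) ^ f := by
    have h1 := gaussSum_mul_gaussSum_eq_card hχne hψp
    have h3 := mul_gaussSum_inv_eq_gaussSum χ⁻¹ ψ
    have h4 : χ⁻¹ (-1) = 1 := by rw [MulChar.inv_apply_eq_inv', hneg, inv_one]
    rw [h4, one_mul] at h3
    rw [h3, hcard] at h1
    rw [h1]; push_cast; rfl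
  set S := ∑ j ∈ Finset.range f, p ^ j % N with hS
  have hlow := partB_lower p f hcard N (by omega) hNd ψ hψ1 hfrob ‖ζ - 1‖ (norm_nonneg _) hpi
    ω⁻¹ hg1
  have hlow1 := hlow 1 hN
  have hlow2 := hlow (N - 1) (by omega)
  simp only [mul_one] at hlow1
  rw [pow_mul, ← hk, ← hχ, ← hχinv] at hlow2
  rw [← hk, ← hχ, ← hS] at hlow1
  have hcop : ∀ j, p ^ j % N ≠ 0 := by
    intro j hj
    have h1 : N ∣ p ^ j := Nat.dvd_of_mod_eq_zero hj
    have h3 : Nat.Coprime N (p ^ j) := by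
      refine Nat.Coprime.pow_right _ ?_
      rw [Nat.coprime_comm, Nat.Prime.coprime_iff_not_dvd hp.out]
      intro h
      have h4 := h.trans hNd
      have h5 : p ∣ p ^ f := dvd_pow_self p hf.ne'
      have h6 := (Nat.dvd_sub h5 h4)
      rw [Nat.sub_sub_self (Nat.one_le_pow _ _ hp.out.pos)] at h6
      exact hp.out.one_lt.ne' (Nat.dvd_one.1 h6)
    have := Nat.Coprime.eq_one_of_dvd h3 h1
    omega
  have hS2 : (∑ j ∈ Finset.range f, p ^ j * (N - 1) % N) + S = f * N := by
    rw [hS, ← Finset.sum_add_distrib, Finset.sum_congr rfl (g := fun _ => N)]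
    · simp
    · intro j _
      have h0 := hcop j
      have hlt := Nat.mod_lt (p ^ j) (show 0 < N by omega)
      have hmod : p ^ j * (N - 1) % N = N - p ^ j % N := by
        have hm : p ^ j * (N - 1) ≡ N - p ^ j % N [MOD N] := by
          have a1 : p ^ j * (N - 1) + p ^ j % N ≡ (N - p ^ j % N) + p ^ j % N [MOD N] := by
            rw [Nat.sub_add_cancel hlt.le]
            calc p ^ j * (N - 1) + p ^ j % N ≡ p ^ j * (N - 1) + p ^ j [MOD N] :=
                  Nat.ModEq.add_left _ (Nat.mod_modEq _ _)
              _ = p ^ j * N := by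
                  obtain ⟨N', rfl⟩ : ∃ N', N = N' + 1 := ⟨N - 1, by omega⟩
                  simp; ring
              _ ≡ N [MOD N] := by
                  rw [Nat.ModEq]; simp
          exact Nat.ModEq.add_right_cancel' _ a1
        rw [show p ^ j * (N - 1) % N = (N - p ^ j % N) % N from hm, Nat.mod_eq_of_lt (by omega)]
      omega
  have hnp := congrArg norm hprod
  rw [norm_mul, norm_pow, hpA] at hnp
  have hnpN : ‖gaussSum χ ψ‖ ^ N * ‖gaussSum χ⁻¹ ψ‖ ^ N = ((p : ℝ)⁻¹) ^ (f * N) := by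
    rw [← mul_pow, hnp, pow_mul]
  set S' := (∑ j ∈ Finset.range f, p ^ j * (N - 1) % N) with hS'
  have hpi0 : 0 < (p : ℝ)⁻¹ := by positivity
  refine ⟨χ, hχγ, hprod, ?_, ?_⟩
  · rw [← hS2, pow_add] at hnpN
    have : 0 < (p : ℝ)⁻¹ ^ S' := by positivity
    nlinarith [pow_nonneg (norm_nonneg (gaussSum χ ψ)) N]
  · rw [← hS2, pow_add] at hnpN
    rw [← hS2, Nat.add_sub_cancel]
    have : 0 < (p : ℝ)⁻¹ ^ S := by positivity
    nlinarith [pow_nonneg (norm_nonneg (gaussSum χ⁻¹ ψ)) N]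

end PartB3

section partA1
open NumberField Polynomial

variable {K : Type*} [Field K] [NumberField K] {α : K} {P : ℕ}

lemma partA_minpoly (hP : P.Prime) (hα : α ^ 2 = -(P : K)) : minpoly ℚ α = X ^ 2 + C (P:ℚ) := by
  have hmon : (X ^ 2 + C (P:ℚ)).Monic := by monicity!
  have hdeg : (X ^ 2 + C (P:ℚ)).natDegree = 2 := by compute_degree!
  have hirr : Irreducible (X ^ 2 + C (P:ℚ)) := by
    rw [hmon.irreducible_iff_roots_eq_zero_of_degree_le_three (by omega) (by omega)]
    rw [Multiset.eq_zero_iff_forall_notMem]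
    intro a ha
    have h1 := (mem_roots'.1 ha).2
    simp only [IsRoot, eval_add, eval_pow, eval_X, eval_C] at h1
    have h2 : (0:ℚ) < P := by exact_mod_cast hP.pos
    nlinarith [sq_nonneg a]
  symm
  exact minpoly.eq_of_irreducible_of_monic hirr (by simp [hα]) hmon

lemma partA_trace (hP : P.Prime) (hα : α ^ 2 = -(P : K)) : Algebra.trace ℚ K α = 0 := by
  rw [trace_eq_finrank_mul_minpoly_nextCoeff, partA_minpoly hP hα]
  have hdeg : (X ^ 2 + C (P:ℚ)).natDegree = 2 := by compute_degree!
  rw [nextCoeff_of_natDegree_pos (by omega), hdeg]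
  simp

lemma partA_finrank (hP : P.Prime) (hα : α ^ 2 = -(P : K)) (hKα : Algebra.adjoin ℚ {α} = ⊤) :
    Module.finrank ℚ K = 2 := by
  have h1 : IntermediateField.adjoin ℚ {α} = ⊤ := by
    rw [← IntermediateField.toSubalgebra_inj, IntermediateField.adjoin_simple_toSubalgebra_of_isAlgebraic
      (Algebra.IsAlgebraic.isAlgebraic α), hKα]
    rfl
  have h2 := IntermediateField.adjoin.finrank (K := ℚ) (x := α) (Algebra.IsIntegral.isIntegral α)
  rw [h1, partA_minpoly hP hα] at h2
  have hdeg : (X ^ 2 + C (P:ℚ)).natDegree = 2 := by compute_degree!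
  rw [← hdeg, ← h2]
  exact (IntermediateField.finrank_top').symm

lemma partA_isIntegral (hα : α ^ 2 = -(P : K)) : IsIntegral ℤ α := by
  refine IsIntegral.of_pow (n := 2) (by norm_num) ?_
  rw [hα]
  exact (isIntegral_natCast P).neg

lemma partA_span (hP : P.Prime) (hα : α ^ 2 = -(P : K)) (hKα : Algebra.adjoin ℚ {α} = ⊤) :
    ∃ I : Ideal (𝓞 K), I ^ 2 = Ideal.span {(P : 𝓞 K)} ∧ Ideal.absNorm I = P := by
  set a : 𝓞 K := ⟨α, partA_isIntegral hα⟩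
  have ha : a ^ 2 = -(P : 𝓞 K) := by
    have h0 : algebraMap (𝓞 K) K a = α := RingOfIntegers.map_mk _ _
    apply FaithfulSMul.algebraMap_injective (𝓞 K) K
    rw [map_pow, h0, hα]
    simp
  have h1 : (Ideal.span {a}) ^ 2 = Ideal.span {(P : 𝓞 K)} := by
    rw [Ideal.span_singleton_pow, ha, Ideal.span_singleton_neg]
  refine ⟨Ideal.span {a}, h1, ?_⟩
  have h2 := congrArg Ideal.absNorm h1
  rw [map_pow, Ideal.absNorm_span_natCast, RingOfIntegers.rank, partA_finrank hP hα hKα] at h2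
  exact Nat.pow_left_injective (n := 2) (by norm_num) h2

lemma partA_discr (hP : P.Prime) (hα : α ^ 2 = -(P : K)) (hKα : Algebra.adjoin ℚ {α} = ⊤) :
    (P : ℤ) ≤ |discr K| := by
  obtain ⟨I, hI, hn⟩ := partA_span hP hα hKα
  haveI : (Ideal.span {(P:ℤ)}).IsMaximal :=
    ((Ideal.span_singleton_prime (by exact_mod_cast hP.ne_zero)).2
      (Nat.prime_iff_prime_int.1 hP)).isMaximal (by simpa using hP.ne_zero)
  have h1 := pow_sub_one_dvd_differentIdeal ℤ (B := 𝓞 K) (p := Ideal.span {(P:ℤ)}) I 2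
    (by simpa using hP.ne_zero) (by rw [hI, Ideal.map_span]; simp)
  rw [show 2 - 1 = 1 from rfl, pow_one] at h1
  have h2 := Ideal.absNorm_dvd_absNorm_of_le (Ideal.dvd_iff_le.mp h1)
  rw [hn, absNorm_differentIdeal K] at h2
  have h3 := Nat.le_of_dvd (Int.natAbs_pos.2 (discr_ne_zero K)) h2
  rw [Int.abs_eq_natAbs]
  exact_mod_cast h3

lemma partA_residue (hP : P.Prime) (hα : α ^ 2 = -(P : K)) (hKα : Algebra.adjoin ℚ {α} = ⊤) :
    dedekindZeta_residue K * Real.sqrt P ≤ Real.pi * classNumber K := by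
  have hfr := partA_finrank hP hα hKα
  have hcard := InfinitePlace.card_add_two_mul_card_eq_rank K
  have hr : InfinitePlace.nrRealPlaces K = 0 := by
    rw [InfinitePlace.nrRealPlaces, Fintype.card_eq_zero_iff, isEmpty_subtype]
    intro v hv
    rw [InfinitePlace.isReal_iff] at hv
    set φ := v.embedding
    have h1 : (starRingEnd ℂ) (φ α) = φ α := by
      have := RingHom.congr_fun hv α
      simpa using this
    rw [Complex.conj_eq_iff_real] at h1
    obtain ⟨r, hr⟩ := h1
    have h2 : (φ α) ^ 2 = -(P:ℂ) := by rw [← map_pow, hα]; simp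
    rw [hr] at h2
    have h3 : r ^ 2 = -(P:ℝ) := by exact_mod_cast h2
    have h4 : (0:ℝ) < P := by exact_mod_cast hP.pos
    nlinarith [sq_nonneg r]
  have hc : InfinitePlace.nrComplexPlaces K = 1 := by omega
  have hplaces : Fintype.card (InfinitePlace K) = 1 := by
    rw [InfinitePlace.card_eq_nrRealPlaces_add_nrComplexPlaces]; omega
  have hreg : Units.regulator K = 1 := by
    rw [Units.regulator_eq_det']
    haveI : Subsingleton (InfinitePlace K) := Fintype.card_le_one_iff_subsingleton.1 hplaces.le
    haveI : IsEmpty {w : InfinitePlace K // w ≠ Units.dirichletUnitTheorem.w₀} :=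
      ⟨fun w => w.2 (Subsingleton.elim _ _)⟩
    rw [Matrix.det_isEmpty, abs_one]
  have htor : 2 ≤ Units.torsionOrder K := by
    have h1 := Units.torsionOrder_pos K
    obtain ⟨k, hk⟩ := Units.even_torsionOrder K
    omega
  rw [dedekindZeta_residue_def, hr, hc, hreg]
  have hd : Real.sqrt P ≤ Real.sqrt |(discr K : ℝ)| := by
    apply Real.sqrt_le_sqrt
    exact_mod_cast partA_discr hP hα hKα
  have hsP : 0 < Real.sqrt P := Real.sqrt_pos.2 (by exact_mod_cast hP.pos)
  have ht : (2:ℝ) ≤ Units.torsionOrder K := by exact_mod_cast htor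
  rw [div_mul_eq_mul_div, div_le_iff₀ (mul_pos (by linarith) (lt_of_lt_of_le hsP (by exact_mod_cast hd)))]
  have hcl : (0:ℝ) ≤ classNumber K := by positivity
  have := Real.pi_pos
  have h5 : 2 * Real.sqrt P ≤ Units.torsionOrder K * Real.sqrt |(discr K : ℝ)| :=
    mul_le_mul ht hd hsP.le (by linarith)
  have h6 := mul_le_mul_of_nonneg_left h5 (mul_nonneg Real.pi_pos.le hcl)
  nlinarith [h6]

end partA1
section partA2
open NumberField

/-- the number of ideals of norm `n` -/
noncomputable def idealCount (K : Type*) [Field K] [NumberField K] (n : ℕ) : ℕ :=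
  Nat.card {I : Ideal (𝓞 K) // Ideal.absNorm I = n}

variable {K : Type*} [Field K] [NumberField K] {α : K} {P : ℕ}

instance partA_finite (n : ℕ) : Finite {I : Ideal (𝓞 K) // Ideal.absNorm I = n} :=
  Ideal.finite_setOfPred_absNorm_eq n

lemma partA_count_of_inj {k n : ℕ} (g : Fin k → Ideal (𝓞 K)) (hg : Function.Injective g)
    (hn : ∀ i, Ideal.absNorm (g i) = n) : k ≤ idealCount K n := by
  have := Nat.card_le_card_of_injective (fun i : Fin k => (⟨g i, hn i⟩ :
    {I : Ideal (𝓞 K) // Ideal.absNorm I = n})) (fun i j h => hg (by simpa using h))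
  simpa [idealCount] using this

lemma partA_count_mul {a b : ℕ} (h : Nat.Coprime a b) :
    idealCount K a * idealCount K b ≤ idealCount K (a * b) := by
  rw [idealCount, idealCount, ← Nat.card_prod]
  have key : ∀ I J : Ideal (𝓞 K), Ideal.absNorm I = a → Ideal.absNorm J = b →
      I * J ⊔ Ideal.span {(a : 𝓞 K)} = I := by
    intro I J hI hJ
    have ha : (a : 𝓞 K) ∈ I := by rw [← hI]; exact Ideal.absNorm_mem I
    have hb : (b : 𝓞 K) ∈ J := by rw [← hJ]; exact Ideal.absNorm_mem J
    apply le_antisymm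
    · exact sup_le Ideal.mul_le_left ((Ideal.span_singleton_le_iff_mem _).2 ha)
    · intro x hx
      have hc : IsCoprime (a:ℤ) (b:ℤ) := Nat.isCoprime_iff_coprime.2 h
      obtain ⟨u, v, huv⟩ := hc
      have huv' : (u : 𝓞 K) * a + v * b = 1 := by exact_mod_cast huv
      have : x = x * (v * b) + x * (u * a) := by
        rw [← mul_add, add_comm, huv', mul_one]
      rw [this]
      exact Submodule.add_mem_sup (Ideal.mul_mem_mul hx (Ideal.mul_mem_left _ _ hb))
        (Ideal.mul_mem_left _ _ (Ideal.mul_mem_left _ _ (Ideal.mem_span_singleton_self _)))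
  refine Nat.card_le_card_of_injective (fun x : {I : Ideal (𝓞 K) // Ideal.absNorm I = a} ×
    {I : Ideal (𝓞 K) // Ideal.absNorm I = b} => (⟨x.1.1 * x.2.1, by
      rw [map_mul, x.1.2, x.2.2]⟩ : {I : Ideal (𝓞 K) // Ideal.absNorm I = a * b})) ?_
  rintro ⟨⟨I, hI⟩, ⟨J, hJ⟩⟩ ⟨⟨I', hI'⟩, ⟨J', hJ'⟩⟩ hxy
  have hxy' : I * J = I' * J' := by simpa using hxy
  have h1 : I = I' := by rw [← key I J hI hJ, hxy', key I' J' hI' hJ']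
  have h2 : J = J' := by
    have e1 : J * I ⊔ Ideal.span {(b : 𝓞 K)} = J := by
      have ha : (a : 𝓞 K) ∈ I := by rw [← hI]; exact Ideal.absNorm_mem I
      have hb : (b : 𝓞 K) ∈ J := by rw [← hJ]; exact Ideal.absNorm_mem J
      apply le_antisymm
      · exact sup_le Ideal.mul_le_left ((Ideal.span_singleton_le_iff_mem _).2 hb)
      · intro x hx
        have hc : IsCoprime (a:ℤ) (b:ℤ) := Nat.isCoprime_iff_coprime.2 h
        obtain ⟨u, v, huv⟩ := hc
        have huv' : (u : 𝓞 K) * a + v * b = 1 := by exact_mod_cast huv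
        have : x = x * (u * a) + x * (v * b) := by
          rw [← mul_add, huv', mul_one]
        rw [this]
        exact Submodule.add_mem_sup (Ideal.mul_mem_mul hx (Ideal.mul_mem_left _ _ ha))
          (Ideal.mul_mem_left _ _ (Ideal.mul_mem_left _ _ (Ideal.mem_span_singleton_self _)))
    have e2 : J' * I' ⊔ Ideal.span {(b : 𝓞 K)} = J' := by
      have ha : (a : 𝓞 K) ∈ I' := by rw [← hI']; exact Ideal.absNorm_mem I'
      have hb : (b : 𝓞 K) ∈ J' := by rw [← hJ']; exact Ideal.absNorm_mem J'
      apply le_antisymm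
      · exact sup_le Ideal.mul_le_left ((Ideal.span_singleton_le_iff_mem _).2 hb)
      · intro x hx
        have hc : IsCoprime (a:ℤ) (b:ℤ) := Nat.isCoprime_iff_coprime.2 h
        obtain ⟨u, v, huv⟩ := hc
        have huv' : (u : 𝓞 K) * a + v * b = 1 := by exact_mod_cast huv
        have : x = x * (u * a) + x * (v * b) := by
          rw [← mul_add, huv', mul_one]
        rw [this]
        exact Submodule.add_mem_sup (Ideal.mul_mem_mul hx (Ideal.mul_mem_left _ _ ha))
          (Ideal.mul_mem_left _ _ (Ideal.mul_mem_left _ _ (Ideal.mem_span_singleton_self _)))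
    rw [← e1, ← e2, mul_comm J I, hxy', mul_comm J' I']
  subst h1 h2
  rfl

/-- the split case: two coprime ideals of norm `l` -/
lemma partA_split (hP : P.Prime) (hα : α ^ 2 = -(P : K)) (hKα : Algebra.adjoin ℚ {α} = ⊤)
    {n0 : ℕ} (hn0 : P + 1 = 4 * n0) {l : ℕ} (hl : l.Prime) (hlP : l ≠ P) {c : ℤ}
    (hc : (l:ℤ) ∣ c ^ 2 - c + n0) :
    ∃ Q Q' : Ideal (𝓞 K), Q ⊔ Q' = ⊤ ∧ Ideal.absNorm Q = l ∧ Ideal.absNorm Q' = l := by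
  have hfr := partA_finrank hP hα hKα
  have hn0' : (P:K) + 1 = 4 * n0 := by exact_mod_cast hn0
  have hlpos := hl.pos
  -- the element ω
  have hωint : IsIntegral ℤ ((1 + α) / 2) := by
    refine ⟨Polynomial.X ^ 2 - Polynomial.X + Polynomial.C (n0:ℤ), by monicity!, ?_⟩
    simp only [Polynomial.eval₂_add, Polynomial.eval₂_sub, Polynomial.eval₂_pow, Polynomial.eval₂_X,
      eq_intCast, Int.cast_natCast, Polynomial.eval₂_natCast]
    field_simp
    linear_combination hα - hn0'
  set w : 𝓞 K := ⟨(1 + α) / 2, hωint⟩ with hw_def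
  have hwK : algebraMap (𝓞 K) K w = (1 + α) / 2 := RingOfIntegers.map_mk _ _
  have hw : w ^ 2 - w + n0 = 0 := by
    apply FaithfulSMul.algebraMap_injective (𝓞 K) K
    simp only [map_add, map_sub, map_pow, hwK, map_natCast, map_zero]
    field_simp
    linear_combination hα - hn0'
  have hv : ¬ (l:ℤ) ∣ 2 * c - 1 := by
    intro h
    have h1 : (l:ℤ) ∣ P := by
      have e : (P:ℤ) = 4 * (c^2 - c + n0) - (2*c-1) * (2*c-1) := by
        have : (P:ℤ) + 1 = 4 * n0 := by exact_mod_cast hn0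
        linear_combination this
      rw [e]
      exact dvd_sub (hc.mul_left _) (h.mul_left _)
    have h2 : l ∣ P := by exact_mod_cast h1
    exact hlP ((Nat.prime_dvd_prime_iff_eq hl hP).1 h2)
  -- no element of the form `w - d` with bad trace is divisible by `l`
  have hnd : ∀ d : ℤ, ¬ (l:ℤ) ∣ 2 * d - 1 → ¬ (l : 𝓞 K) ∣ w - d := by
    rintro d hd ⟨β, hβ⟩
    have h1 := congrArg (algebraMap (𝓞 K) K) hβ
    simp only [map_sub, map_mul, hwK, map_natCast, map_intCast] at h1
    have h2 : α = (2 * l : ℚ) • (algebraMap (𝓞 K) K β) + algebraMap ℚ K (2 * d - 1 : ℚ) := by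
      rw [Algebra.smul_def]
      push_cast [map_mul, map_sub, map_natCast, map_intCast, map_one, map_ofNat]
      linear_combination 2 * h1
    have h3 := congrArg (Algebra.trace ℚ K) h2
    rw [partA_trace hP hα, map_add, map_smul, Algebra.trace_algebraMap, hfr] at h3
    have h4 : IsIntegral ℤ (Algebra.trace ℚ K (algebraMap (𝓞 K) K β)) :=
      Algebra.isIntegral_trace (RingOfIntegers.isIntegral_coe β)
    obtain ⟨t, ht⟩ := IsIntegrallyClosed.isIntegral_iff.1 h4
    rw [← ht] at h3
    simp only [eq_intCast, smul_eq_mul, nsmul_eq_mul] at h3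
    apply hd
    refine ⟨-t, ?_⟩
    have h5 : (2 * d - 1 : ℚ) = l * (-t) := by push_cast at h3; linarith
    exact_mod_cast h5
  set Q : Ideal (𝓞 K) := Ideal.span {(l : 𝓞 K), w - c}
  set Q' : Ideal (𝓞 K) := Ideal.span {(l : 𝓞 K), w - (1 - c : ℤ)}
  have hlQ : (l : 𝓞 K) ∈ Q := Ideal.subset_span (by simp)
  have hlQ' : (l : 𝓞 K) ∈ Q' := Ideal.subset_span (by simp)
  have hwQ : w - c ∈ Q := Ideal.subset_span (by simp)
  have hwQ' : w - (1 - c : ℤ) ∈ Q' := Ideal.subset_span (by simp)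
  have hsup : Q ⊔ Q' = ⊤ := by
    rw [Ideal.eq_top_iff_one]
    have hcop : IsCoprime (l:ℤ) (2 * c - 1) :=
      (Nat.prime_iff_prime_int.1 hl).irreducible.coprime_iff_not_dvd.2 hv
    obtain ⟨u, v, huv⟩ := hcop
    have huv' : (u : 𝓞 K) * l + v * (2 * c - 1) = 1 := by exact_mod_cast huv
    have e : (1 : 𝓞 K) = (u * l - v * (w - c)) + v * (w - (1 - c : ℤ)) := by
      push_cast
      linear_combination -huv'
    rw [e]
    exact Submodule.add_mem_sup (Q.sub_mem (Q.mul_mem_left _ hlQ) (Q.mul_mem_left _ hwQ))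
      (Q'.mul_mem_left _ hwQ')
  have hprod : Q * Q' = Ideal.span {(l : 𝓞 K)} := by
    apply le_antisymm
    · rw [Ideal.span_mul_span', Ideal.span_le]
      rintro _ ⟨x, hx, y, hy, rfl⟩
      simp only [Set.mem_insert_iff, Set.mem_singleton_iff] at hx hy
      simp only [SetLike.mem_coe, Ideal.mem_span_singleton]
      rcases hx with rfl | rfl
      · exact Dvd.intro _ rfl
      · rcases hy with rfl | rfl
        · exact Dvd.intro_left _ rfl
        · obtain ⟨k, hk⟩ := hc
          refine ⟨-k, ?_⟩
          have hk' : (c:𝓞 K)^2 - c + n0 = l * k := by exact_mod_cast hk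
          push_cast
          linear_combination hw - hk'
    · rw [Ideal.span_singleton_le_iff_mem]
      rw [Ideal.mul_eq_inf_of_coprime hsup]
      exact ⟨hlQ, hlQ'⟩
  have hnorm : Ideal.absNorm Q * Ideal.absNorm Q' = l ^ 2 := by
    rw [← map_mul, hprod, Ideal.absNorm_span_natCast, RingOfIntegers.rank, hfr]
  have hne : ∀ I J : Ideal (𝓞 K), ∀ d : ℤ, ¬ (l:ℤ) ∣ 2 * d - 1 → w - d ∈ J →
      I * J = Ideal.span {(l : 𝓞 K)} → Ideal.absNorm I ≠ 1 := by
    intro I J d hd hJ hIJ h1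
    rw [Ideal.absNorm_eq_one_iff] at h1
    rw [h1, Ideal.top_mul] at hIJ
    rw [hIJ, Ideal.mem_span_singleton] at hJ
    exact hnd d hd hJ
  have hQ1 := hne Q Q' (1 - c) (by
    intro h; apply hv
    obtain ⟨t, ht⟩ := h
    exact ⟨-t, by linarith⟩) hwQ' hprod
  have hQ1' := hne Q' Q c hv hwQ (by rw [mul_comm]; exact hprod)
  have h1 := (Nat.Prime.mul_eq_prime_sq_iff hl hQ1 hQ1').1 hnorm
  exact ⟨Q, Q', hsup, h1.1, h1.2⟩

lemma partA_split_count {l : ℕ} (hl : l.Prime) {Q Q' : Ideal (𝓞 K)} (hsup : Q ⊔ Q' = ⊤)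
    (hQ : Ideal.absNorm Q = l) (hQ' : Ideal.absNorm Q' = l) (k : ℕ) :
    k + 1 ≤ idealCount K (l ^ k) := by
  have hQ0 : Q ≠ 0 := by
    rintro rfl
    rw [Submodule.zero_eq_bot, Ideal.absNorm_bot] at hQ; exact hl.ne_zero hQ.symm
  have hQ0' : Q' ≠ 0 := by
    rintro rfl
    rw [Submodule.zero_eq_bot, Ideal.absNorm_bot] at hQ'; exact hl.ne_zero hQ'.symm
  refine partA_count_of_inj (fun i : Fin (k+1) => Q ^ (i:ℕ) * Q' ^ (k - i)) ?_ ?_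
  · have key : ∀ i j : ℕ, i < j → j ≤ k → Q ^ i * Q' ^ (k - i) ≠ Q ^ j * Q' ^ (k - j) := by
      intro i j hij hjk h
      have e1 : Q ^ j = Q ^ i * Q ^ (j - i) := by rw [← pow_add]; congr 1; omega
      have e2 : Q' ^ (k - i) = Q' ^ (j - i) * Q' ^ (k - j) := by rw [← pow_add]; congr 1; omega
      rw [e1, e2, mul_assoc] at h
      have h2 := mul_left_cancel₀ (pow_ne_zero _ hQ0) h
      have h3 := mul_right_cancel₀ (pow_ne_zero _ hQ0') h2
      have h4 : Q ^ (j-i) ⊔ Q' ^ (j-i) = ⊤ := Ideal.pow_sup_pow_eq_top hsup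
      rw [h3, sup_idem] at h4
      have h5 := congrArg Ideal.absNorm h4
      rw [map_pow, hQ, Ideal.absNorm_top] at h5
      have := Nat.one_lt_pow (n := j - i) (by omega) hl.one_lt
      omega
    intro i j hij
    simp only at hij
    rcases lt_trichotomy (i:ℕ) (j:ℕ) with h | h | h
    · exact absurd hij (key i j h (by omega))
    · exact Fin.ext h
    · exact absurd hij.symm (key j i h (by omega))
  · intro i
    simp only [map_mul, map_pow, hQ, hQ']
    rw [← pow_add]; congr 1; omega

end partA2
open Filter Topology in
lemma partA_hurwitz_bound {n : ℕ} (hn : 1 ≤ n) {x y s : ℝ} (hx : (n:ℝ) ≤ x) (hx' : x ≤ n + 1)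
    (hy : (n:ℝ) ≤ y) (hy' : y ≤ n + 1) (hs : 1 ≤ s) (hs2 : s ≤ 2) :
    |1 / x ^ s - 1 / y ^ s| ≤ 2 / (n:ℝ) ^ 2 := by
  have hn0 : (1:ℝ) ≤ n := by exact_mod_cast hn
  have hnp : (0:ℝ) < n := by linarith
  have key : ∀ z : ℝ, (n:ℝ) ≤ z → z ≤ n + 1 → 1 / z ^ s ≤ 1 / (n:ℝ) ^ s ∧
      1 / ((n:ℝ)+1) ^ s ≤ 1 / z ^ s := by
    intro z h1 h2
    constructor
    · exact one_div_le_one_div_of_le (by positivity) (Real.rpow_le_rpow hnp.le h1 (by linarith))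
    · have : 0 < z := by linarith
      exact one_div_le_one_div_of_le (by positivity) (Real.rpow_le_rpow this.le h2 (by linarith))
  have h3 : 1 / (n:ℝ) ^ s - 1 / ((n:ℝ)+1) ^ s ≤ 2 / (n:ℝ)^2 := by
    have e : 1 / (n:ℝ) ^ s - 1 / ((n:ℝ)+1) ^ s = 1 / (n:ℝ)^s * (1 - ((n:ℝ)/(n+1)) ^ s) := by
      rw [Real.div_rpow hnp.le (by linarith)]
      field_simp
    have h4 : 1 / (n:ℝ)^s ≤ 1 / n := by
      apply one_div_le_one_div_of_le hnp
      calc (n:ℝ) = (n:ℝ)^(1:ℝ) := by simp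
        _ ≤ _ := Real.rpow_le_rpow_of_exponent_le hn0 hs
    have h5 : ((n:ℝ)/(n+1)) ^ (2:ℝ) ≤ ((n:ℝ)/(n+1)) ^ s := by
      apply Real.rpow_le_rpow_of_exponent_ge (by positivity) _ hs2
      rw [div_le_one (by linarith)]; linarith
    have h6 : 1 - ((n:ℝ)/(n+1)) ^ (2:ℝ) ≤ 2 / n := by
      rw [Real.rpow_two, div_pow, sub_le_iff_le_add, div_add_div _ _ hnp.ne' (by positivity),
        le_div_iff₀ (by positivity)]
      nlinarith [pow_pos hnp 3, pow_pos hnp 2]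
    have h7 : ((n:ℝ)/(n+1)) ^ s ≤ 1 := by
      apply Real.rpow_le_one (by positivity) _ (by linarith)
      rw [div_le_one (by linarith)]; linarith
    rw [e]
    calc 1 / (n:ℝ)^s * (1 - ((n:ℝ)/(n+1)) ^ s) ≤ 1 / n * (2 / n) := by
          apply mul_le_mul h4 (by linarith) (by linarith) (by positivity)
      _ = _ := by field_simp
  rw [abs_le]
  have := key x hx hx'
  have := key y hy hy'
  constructor <;> linarith

open Filter Topology in
lemma partA_hurwitz_one {a : ℝ} (h0 : 0 < a) (h1 : a < 1) :
    HasSum (fun n : ℕ ↦ ((1 / ((n:ℝ) + a) - 1 / ((n:ℝ) + 1 - a)) / 2 : ℝ))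
      (HurwitzZeta.hurwitzZetaOdd (a : UnitAddCircle) 1).re ∧
      (HurwitzZeta.hurwitzZetaOdd (a : UnitAddCircle) 1).im = 0 := by
  set bound : ℕ → ℝ := fun n => if n = 0 then 1 / a ^ 2 + 1 / (1 - a) ^ 2 else 2 / (n:ℝ) ^ 2
  have hb : Summable bound := by
    rw [← summable_nat_add_iff 1]
    have : Summable (fun n : ℕ => 2 / (n:ℝ)^2) := by
      have := (Real.summable_one_div_nat_pow (p := 2)).2 (by norm_num)
      exact (this.mul_left 2).congr fun n => by ring
    have h2 := (summable_nat_add_iff 1).2 this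
    refine h2.congr fun n => ?_
    simp [bound]
  set F : ℝ → ℕ → ℝ := fun s n => (1 / ((n:ℝ) + a)^s - 1 / ((n:ℝ) + 1 - a)^s) / 2
  have hF : ∀ s : ℝ, 1 ≤ s → s ≤ 2 → ∀ n, ‖F s n‖ ≤ bound n := by
    intro s hs hs2 n
    rcases Nat.eq_zero_or_pos n with rfl | hn
    · simp only [F, bound, Nat.cast_zero, zero_add, if_true]
      have hx : ∀ x : ℝ, 0 < x → x < 1 → 0 ≤ 1 / x ^ s ∧ 1 / x^s ≤ 1 / x^2 := by
        intro x hx0 hx1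
        refine ⟨by positivity, one_div_le_one_div_of_le (by positivity) ?_⟩
        rw [← Real.rpow_two]
        exact Real.rpow_le_rpow_of_exponent_ge hx0 hx1.le hs2
      have := hx a h0 h1
      have := hx (1 - a) (by linarith) (by linarith)
      rw [Real.norm_eq_abs, abs_le]
      constructor <;> linarith
    · have := partA_hurwitz_bound (n := n) hn (x := n + a) (y := n + 1 - a) (s := s) (by linarith)
        (by linarith) (by linarith) (by linarith) hs hs2
      simp only [F, bound, if_neg hn.ne']
      rw [Real.norm_eq_abs, abs_div, abs_two]
      have := abs_nonneg (1 / ((n:ℝ) + a)^s - 1 / ((n:ℝ) + 1 - a)^s)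
      linarith
  have hsum : Summable (F 1) := Summable.of_norm_bounded hb (hF 1 le_rfl (by norm_num))
  have htend : Tendsto (fun s : ℝ => ∑' n, F s n) (𝓝[>] 1) (𝓝 (∑' n, F 1 n)) := by
    refine tendsto_tsum_of_dominated_convergence hb ?_ ?_
    · intro n
      apply tendsto_nhdsWithin_of_tendsto_nhds
      have ha : (n:ℝ) + a ≠ 0 := by positivity
      have hb' : (n:ℝ) + 1 - a ≠ 0 := by
        have : (0:ℝ) ≤ n := by positivity
        linarith
      have hpos1 : 0 < (n:ℝ) + a := by positivity
      have hpos2 : 0 < (n:ℝ) + 1 - a := by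
        have : (0:ℝ) ≤ n := by positivity
        linarith
      have : ContinuousAt (fun s : ℝ => F s n) 1 := by
        simp only [F]
        refine ContinuousAt.div_const (ContinuousAt.sub ?_ ?_) _
        · exact continuousAt_const.div (Real.continuousAt_const_rpow ha) (by positivity)
        · exact continuousAt_const.div (Real.continuousAt_const_rpow hb') (by positivity)
      exact this
    · have : Set.Ioo (1:ℝ) 2 ∈ 𝓝[>] (1:ℝ) := Ioo_mem_nhdsGT (by norm_num)
      filter_upwards [this] with s hs n
      exact hF s hs.1.le hs.2.le n
  have heq : ∀ s : ℝ, 1 < s →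
      HurwitzZeta.hurwitzZetaOdd (a : UnitAddCircle) (s:ℂ) = ((∑' n, F s n : ℝ) : ℂ) := by
    intro s hs
    have := HurwitzZeta.hasSum_nat_hurwitzZetaOdd_of_mem_Icc (a := a) ⟨h0.le, h1.le⟩ (s := (s:ℂ))
      (by simpa using hs)
    rw [← this.tsum_eq, Complex.ofReal_tsum]
    refine tsum_congr fun n => ?_
    have hpos1 : 0 ≤ (n:ℝ) + a := by positivity
    have hpos2 : 0 ≤ (n:ℝ) + 1 - a := by
        have : (0:ℝ) ≤ n := by positivity
        linarith
    simp only [F]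
    push_cast [Complex.ofReal_cpow hpos1, Complex.ofReal_cpow hpos2]
    rfl
  have hcont : Tendsto (fun s : ℝ => HurwitzZeta.hurwitzZetaOdd (a : UnitAddCircle) (s:ℂ)) (𝓝[>] 1)
      (𝓝 (HurwitzZeta.hurwitzZetaOdd (a : UnitAddCircle) 1)) := by
    apply tendsto_nhdsWithin_of_tendsto_nhds
    have h2 := (HurwitzZeta.differentiable_hurwitzZetaOdd (a : UnitAddCircle)).continuous.comp
      Complex.continuous_ofReal
    have h3 := h2.tendsto 1
    simp only [Function.comp_def, Complex.ofReal_one] at h3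
    exact h3
  have hlim : Tendsto (fun s : ℝ => HurwitzZeta.hurwitzZetaOdd (a : UnitAddCircle) (s:ℂ)) (𝓝[>] 1)
      (𝓝 ((∑' n, F 1 n : ℝ) : ℂ)) := by
    have h2 := (Complex.continuous_ofReal.tendsto _).comp htend
    refine h2.congr' ?_
    filter_upwards [self_mem_nhdsWithin] with s hs
    exact (heq s hs).symm
  have hfin := tendsto_nhds_unique hcont hlim
  rw [hfin]
  refine ⟨?_, Complex.ofReal_im _⟩
  rw [Complex.ofReal_re]
  have := hsum.hasSum
  simpa [F] using this

open Filter Topology in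
lemma partA_hurwitz_cot {a : ℝ} (h0 : 0 < a) (h1 : a < 1) :
    HurwitzZeta.hurwitzZetaOdd (a : UnitAddCircle) 1 = Real.pi / 2 * Complex.cot (Real.pi * a) := by
  obtain ⟨hs, him⟩ := partA_hurwitz_one h0 h1
  have hz : (a:ℂ) ∈ Complex.integerComplement := by
    rintro ⟨n, hn⟩
    have hn' : (n:ℝ) = a := by exact_mod_cast hn
    have h2 : (0:ℝ) < n := by rw [hn']; exact h0
    have h3 : (n:ℝ) < 1 := by rw [hn']; exact h1
    have h2' : 0 < n := by exact_mod_cast h2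
    have h3' : n < 1 := by exact_mod_cast h3
    omega
  have hT := tendsto_logDeriv_euler_cot_sub hz
  have hC : HurwitzZeta.hurwitzZetaOdd (a : UnitAddCircle) 1 =
      ((HurwitzZeta.hurwitzZetaOdd (a : UnitAddCircle) 1).re : ℂ) := by
    apply Complex.ext <;> simp [him]
  have h2 := ((Complex.continuous_ofReal.tendsto _).comp hs.tendsto_sum_nat)
  rw [← hC] at h2
  have h3 := (h2.comp (tendsto_add_atTop_nat 1))
  have hzero : Tendsto (fun k : ℕ => (1 / ((k:ℂ) + 1 - a))) atTop (𝓝 0) := by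
    have : Tendsto (fun k : ℕ => (1 / ((k:ℝ) + (1 - a)))) atTop (𝓝 0) := by
      simp only [one_div]
      exact tendsto_inv_atTop_zero.comp (tendsto_atTop_add_const_right _ _ tendsto_natCast_atTop_atTop)
    have h4 := (Complex.continuous_ofReal.tendsto _).comp this
    simp only [Complex.ofReal_zero] at h4
    refine h4.congr fun k => ?_
    simp only [Function.comp]
    push_cast
    ring
  have h5 := ((hT.add_const (1 / (a:ℂ))).sub hzero).div_const 2
  have h6 := tendsto_nhds_unique h3 (h5.congr fun k => ?_)
  · rw [h6]; ring
  · simp only [Function.comp]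
    have : ∀ k : ℕ, ((∑ n ∈ Finset.range (k+1), ((1 / ((n:ℝ) + a) - 1 / ((n:ℝ) + 1 - a)) / 2 : ℝ) : ℝ) : ℂ)
        = ((∑ n ∈ Finset.range k, cotTerm (a:ℂ) n) + 1 / (a:ℂ) - 1 / ((k:ℂ)+1-a)) / 2 := by
      intro k
      induction k with
      | zero => simp
      | succ k ih =>
        rw [Finset.sum_range_succ, Complex.ofReal_add, ih, Finset.sum_range_succ, cotTerm]
        have e : (1:ℂ) / ((a:ℂ) - (k+1)) = - (1 / ((k:ℂ) + 1 - a)) := by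
          rw [← one_div_neg_eq_neg_one_div]; congr 1; ring
        rw [e]
        push_cast
        ring
    exact (this k).symm
/-- the quadratic Dirichlet character mod `P` with complex values -/
noncomputable def quadC (P : ℕ) [Fact P.Prime] : DirichletCharacter ℂ P :=
  (quadraticChar (ZMod P)).ringHomComp (Int.castRingHom ℂ)

lemma quadC_apply (P : ℕ) [Fact P.Prime] (x : ZMod P) :
    quadC P x = ((quadraticChar (ZMod P) x : ℤ) : ℂ) := rfl

lemma quadC_neg_one (P : ℕ) [Fact P.Prime] (hP : P % 4 = 3) :
    quadraticChar (ZMod P) (-1) = -1 := by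
  have h2 : ringChar (ZMod P) ≠ 2 := by
    rw [ZMod.ringChar_zmod_n]; omega
  rw [quadraticChar_neg_one h2, ZMod.card]
  exact ZMod.χ₄_nat_three_mod_four hP

lemma quadC_ne_one (P : ℕ) [Fact P.Prime] (hP : P % 4 = 3) : quadC P ≠ 1 := by
  intro h
  have h1 := quadC_apply P (-1)
  rw [quadC_neg_one P hP, h, MulChar.one_apply (by simp)] at h1
  norm_num at h1

lemma quadC_gauss (P : ℕ) [Fact P.Prime] (hP : P % 4 = 3) :
    gaussSum (quadC P) (ZMod.stdAddChar (N := P)) ^ 2 = -(P:ℂ) := by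
  rw [gaussSum_sq (quadC_ne_one P hP) ((quadraticChar_isQuadratic (ZMod P)).comp _)
    (ZMod.isPrimitive_stdAddChar P), ZMod.card, quadC_apply, quadC_neg_one P hP]
  simp

lemma partA_inv_sum {P : ℕ} {z : ℂ} (hz : z ≠ 1) (hzP : z ^ P = 1) :
    ∑ k ∈ Finset.range P, (k:ℂ) * z ^ k = P / (z - 1) := by
  have h : ∀ n : ℕ, (∑ k ∈ Finset.range n, (k:ℂ) * z ^ k) * (z - 1) =
      n * z ^ n - ∑ k ∈ Finset.range n, z ^ (k + 1) := by
    intro n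
    induction n with
    | zero => simp
    | succ n ih =>
      rw [Finset.sum_range_succ, add_mul, ih, Finset.sum_range_succ]
      push_cast; ring
  have hz1 : z - 1 ≠ 0 := sub_ne_zero.2 hz
  rw [eq_div_iff hz1, h, hzP]
  have : ∑ k ∈ Finset.range P, z ^ k = 0 := by
    rw [geom_sum_eq hz, hzP]; simp
  simp only [pow_succ, ← Finset.sum_mul, this]
  simp

lemma partA_cot {x : ℝ} (hx : Complex.exp (2 * Real.pi * Complex.I * x) ≠ 1) :
    Complex.cot (Real.pi * x) =
      Complex.I + 2 * Complex.I * (1 / (Complex.exp (2 * Real.pi * Complex.I * x) - 1)) := by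
  rw [Complex.cot_eq_exp_ratio]
  have e : 2 * Complex.I * ((Real.pi:ℂ) * x) = 2 * Real.pi * Complex.I * x := by ring
  rw [e]
  set z := Complex.exp (2 * Real.pi * Complex.I * x)
  have h1 : z - 1 ≠ 0 := sub_ne_zero.2 hx
  have h2 : 1 - z ≠ 0 := sub_ne_zero.2 hx.symm
  have hI := Complex.I_sq
  field_simp
  rw [hI]
  ring

lemma partA_Lone (P : ℕ) [Fact P.Prime] (hP : P % 4 = 3) :
    ‖(quadC P).LFunction 1‖ * (P:ℝ) * Real.sqrt P =
      Real.pi * |((∑ j : ZMod P, quadraticChar (ZMod P) j * (j.val : ℤ) : ℤ) : ℝ)| := by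
  have hPr : P.Prime := Fact.out
  have hP0 : (P:ℂ) ≠ 0 := by exact_mod_cast hPr.ne_zero
  set S : ℤ := ∑ j : ZMod P, quadraticChar (ZMod P) j * (j.val : ℤ) with hS
  set G := gaussSum (quadC P) (ZMod.stdAddChar (N := P)) with hG
  have hodd : Function.Odd (quadC P) := by
    intro x
    rw [quadC_apply, quadC_apply, neg_eq_neg_one_mul, map_mul, quadC_neg_one P hP]
    simp
  have hsum0 : ∑ j, quadC P j = 0 := MulChar.sum_eq_zero_of_ne_one (quadC_ne_one P hP)
  -- sum against additive characters
  have hshift : ∀ k : ZMod P, ∑ r, quadC P r * ZMod.stdAddChar (k * r) = quadC P k * G := by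
    intro k
    by_cases hk : k = 0
    · subst hk
      rw [quadC_apply, quadraticChar_zero]
      simp [hsum0]
    · have := gaussSum_mulShift (quadC P) (ZMod.stdAddChar (N := P)) (Units.mk0 k hk)
      rw [gaussSum] at this
      simp only [AddChar.mulShift_apply, Units.val_mk0] at this
      rw [hG, ← this, ← mul_assoc, quadC_apply P k, ← Int.cast_mul, ← sq,
        quadraticChar_sq_one hk]
      simp
  have hterm : ∀ j : ZMod P, quadC P j * HurwitzZeta.hurwitzZetaOdd (ZMod.toAddCircle j) 1 =
      quadC P j * (Real.pi / 2 * (Complex.I + 2 * Complex.I / P *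
        ∑ k : ZMod P, (k.val : ℂ) * ZMod.stdAddChar (k * j))) := by
    intro j
    by_cases hj : j = 0
    · subst hj
      rw [quadC_apply, quadraticChar_zero]; simp
    · congr 1
      have hv : 0 < j.val := Nat.pos_of_ne_zero (by rwa [Ne, ZMod.val_eq_zero])
      have hPpos : (0:ℝ) < P := by exact_mod_cast hPr.pos
      have hz : ZMod.stdAddChar j = Complex.exp (2 * Real.pi * Complex.I * ((j.val / P : ℝ) : ℂ)) := by
        rw [ZMod.stdAddChar_apply, ZMod.toCircle_apply]
        push_cast
        congr 1; ring
      have hne : ZMod.stdAddChar j ≠ (1:ℂ) := by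
        intro h
        apply hj
        have := ZMod.injective_stdAddChar (N := P) (a₁ := j) (a₂ := 0) (by rw [h]; simp)
        exact this
      have hpow : (ZMod.stdAddChar j : ℂ) ^ P = 1 := by
        rw [← AddChar.map_nsmul_eq_pow]; simp
      rw [ZMod.toAddCircle_apply, partA_hurwitz_cot (by positivity)
        (by rw [div_lt_one hPpos]; exact_mod_cast j.val_lt), partA_cot (by rw [← hz]; exact hne), ← hz]
      have h3 := partA_inv_sum hne hpow
      have h4 : ∑ k : ZMod P, (k.val : ℂ) * ZMod.stdAddChar (k * j) =
          ∑ k ∈ Finset.range P, (k:ℂ) * (ZMod.stdAddChar j : ℂ) ^ k := by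
        rw [Finset.sum_range]
        refine Fintype.sum_equiv (ZMod.finEquiv P).symm.toEquiv _ _ fun k => ?_
        have hk : (((ZMod.finEquiv P).symm.toEquiv k : Fin P) : ℕ) = k.val := by
          obtain ⟨n, rfl⟩ : ∃ n, P = n + 1 := ⟨P - 1, by have := hPr.pos; omega⟩
          rfl
        rw [hk, ← AddChar.map_nsmul_eq_pow, nsmul_eq_mul, ZMod.natCast_zmod_val]
      rw [h4, h3]
      field_simp
  have hL : (quadC P).LFunction 1 = Complex.I * Real.pi * G * S / P ^ 2 := by
    have h1 : (quadC P).LFunction 1 = ZMod.LFunction (quadC P) 1 := rfl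
    rw [h1, ZMod.LFunction_def_odd hodd]
    simp_rw [hterm]
    have h2 : ∑ j, quadC P j * (Real.pi / 2 * (Complex.I + 2 * Complex.I / P *
        ∑ k : ZMod P, (k.val : ℂ) * ZMod.stdAddChar (k * j))) =
        (Real.pi / 2 * Complex.I) * ∑ j, quadC P j + Real.pi * Complex.I / P *
          ∑ k : ZMod P, (k.val : ℂ) * ∑ r, quadC P r * ZMod.stdAddChar (k * r) := by
      simp_rw [Finset.mul_sum]
      rw [Finset.sum_comm, ← Finset.sum_add_distrib]
      refine Finset.sum_congr rfl fun j _ => ?_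
      rw [mul_add, mul_add, Finset.mul_sum, Finset.mul_sum]
      congr 1
      · ring
      · exact Finset.sum_congr rfl fun k _ => by ring
    rw [h2, hsum0]
    simp_rw [hshift]
    have h3 : (S:ℂ) = ∑ k : ZMod P, (k.val:ℂ) * quadC P k := by
      rw [hS]; push_cast
      exact Finset.sum_congr rfl fun k _ => by rw [quadC_apply]; ring
    have h4 : ∑ k : ZMod P, (k.val:ℂ) * (quadC P k * G) = S * G := by
      rw [h3, Finset.sum_mul]
      exact Finset.sum_congr rfl fun k _ => by ring
    rw [h4, Complex.cpow_neg_one]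
    field_simp
    ring
  have hGn : ‖G‖ = Real.sqrt P := by
    have := congrArg norm (quadC_gauss P hP)
    rw [norm_pow, norm_neg, Complex.norm_natCast] at this
    rw [← this, Real.sqrt_sq (norm_nonneg _)]
  rw [hL]
  simp only [norm_mul, norm_div, norm_pow, Complex.norm_I, Complex.norm_natCast, hGn,
    Complex.norm_real, Complex.norm_intCast, Real.norm_eq_abs, abs_of_pos Real.pi_pos]
  have hPpos : (0:ℝ) < P := by exact_mod_cast hPr.pos
  have hsq := Real.mul_self_sqrt hPpos.le
  field_simp
  rw [sq, hsq]
  ring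
section partA4
open NumberField

lemma partA_exists_c {P : ℕ} [Fact P.Prime] (hP : P % 4 = 3) {n0 : ℕ} (hn0 : P + 1 = 4 * n0)
    {l : ℕ} [Fact l.Prime] (hlP : l ≠ P) (h1 : quadraticChar (ZMod P) (l : ZMod P) = 1) :
    ∃ c : ℤ, (l:ℤ) ∣ c ^ 2 - c + n0 := by
  have hl : l.Prime := Fact.out
  have hPp : P.Prime := Fact.out
  have hl0 : (l : ZMod P) ≠ 0 := by
    intro h; rw [h] at h1; simp at h1
  have hsq : IsSquare (l : ZMod P) := (quadraticChar_one_iff_isSquare hl0).1 h1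
  rcases hl.eq_two_or_odd with h2 | h2
  · subst h2
    have := (ZMod.exists_sq_eq_two_iff (p := P) (by omega)).1 (by exact_mod_cast hsq)
    refine ⟨0, ?_⟩
    have : 2 ∣ n0 := by omega
    simpa using (by exact_mod_cast this : (2:ℤ) ∣ n0)
  · have hl2 : l ≠ 2 := by omega
    have hPl0 : (P : ZMod l) ≠ 0 := by
      intro h
      rw [ZMod.natCast_eq_zero_iff] at h
      exact hlP ((Nat.prime_dvd_prime_iff_eq hl hPp).1 h)
    have hlchar : ringChar (ZMod l) ≠ 2 := by rw [ZMod.ringChar_zmod_n]; exact hl2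
    have hs : IsSquare (-(P : ZMod l)) := by
      rw [← quadraticChar_one_iff_isSquare (neg_ne_zero.2 hPl0), neg_eq_neg_one_mul, map_mul]
      have hl4 : l % 4 = 1 ∨ l % 4 = 3 := by omega
      rcases hl4 with h4 | h4
      · have e1 := (ZMod.exists_sq_eq_prime_iff_of_mod_four_eq_one (p := l) (q := P) h4
          (by omega)).2 hsq
        have e2 := (ZMod.exists_sq_eq_neg_one_iff (p := l)).2 (by omega)
        rw [(quadraticChar_one_iff_isSquare hPl0).2 e1,
          (quadraticChar_one_iff_isSquare (neg_ne_zero.2 one_ne_zero)).2 e2]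
        norm_num
      · have e1 := (ZMod.exists_sq_eq_prime_iff_of_mod_four_eq_three (p := P) (q := l) hP h4
          hlP.symm).1 hsq
        have e2 : ¬ IsSquare (-1 : ZMod l) := fun h => (ZMod.exists_sq_eq_neg_one_iff (p := l)).1 h h4
        rw [quadraticChar_neg_one_iff_not_isSquare.2 e1, quadraticChar_neg_one_iff_not_isSquare.2 e2]
        norm_num
    obtain ⟨s, hs⟩ := hs
    have h20 : (2 : ZMod l) ≠ 0 := Ring.two_ne_zero hlchar
    set c : ZMod l := (s + 1) / 2 with hc
    obtain ⟨c', hc'⟩ := ZMod.intCast_surjective c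
    refine ⟨c', ?_⟩
    rw [← ZMod.intCast_zmod_eq_zero_iff_dvd]
    push_cast
    rw [hc', hc]
    have hn : (P : ZMod l) + 1 = 4 * n0 := by exact_mod_cast congrArg (Nat.cast (R := ZMod l)) hn0
    have h40 : (4 : ZMod l) ≠ 0 := by
      have : (4 : ZMod l) = 2 * 2 := by norm_num
      rw [this]; exact mul_ne_zero h20 h20
    apply (mul_eq_zero.1 _).resolve_left h40
    have h2c : 2 * ((s + 1) / 2) = s + 1 := mul_div_cancel₀ _ h20
    linear_combination -hs - hn + (2 * ((s+1)/2) + s + 1 - 2) * h2c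

open scoped ComplexOrder in
lemma partA_zetaMul_le {K : Type*} [Field K] [NumberField K] {α : K} {P : ℕ} [Fact P.Prime]
    (hP : P % 4 = 3) (hα : α ^ 2 = -(P : K)) (hKα : Algebra.adjoin ℚ {α} = ⊤) (n : ℕ) :
    (quadC P).zetaMul n ≤ (idealCount K n : ℂ) := by
  have hPp : P.Prime := Fact.out
  have hsq : (quadC P) ^ 2 = 1 := by
    apply MulChar.isQuadratic_iff_sq_eq_one.1
    exact (quadraticChar_isQuadratic (ZMod P)).comp _
  induction n using Nat.recOnPosPrimePosCoprime with
  | zero => simp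
  | one =>
    rw [(quadC P).isMultiplicative_zetaMul.map_one]
    have : 1 ≤ idealCount K 1 := partA_count_of_inj (fun _ : Fin 1 => (⊤ : Ideal (𝓞 K)))
      (fun _ _ _ => Subsingleton.elim _ _) (by simp)
    exact_mod_cast this
  | coprime a b ha hb hab iha ihb =>
    rw [(quadC P).isMultiplicative_zetaMul.map_mul_of_coprime hab]
    calc _ ≤ (idealCount K a : ℂ) * idealCount K b :=
          mul_le_mul iha ihb (DirichletCharacter.zetaMul_nonneg hsq b) (by positivity)
      _ ≤ _ := by exact_mod_cast partA_count_mul hab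
  | prime_pow l k hl hk =>
    haveI : Fact l.Prime := ⟨hl⟩
    have e : (quadC P).zetaMul (l^k) =
        ((∑ i ∈ Finset.range (k+1), (quadraticChar (ZMod P) (l : ZMod P))^i : ℤ) : ℂ) := by
      have h0 : (quadC P).zetaMul (l^k) = ∑ i ∈ (l^k).divisors,
          toArithmeticFunction (fun n : ℕ => quadC P n) i :=
        ArithmeticFunction.coe_zeta_mul_apply
      rw [h0, Nat.sum_divisors_prime_pow hl]
      push_cast
      refine Finset.sum_congr rfl fun i _ => ?_
      have h1 : toArithmeticFunction (fun n : ℕ => quadC P n) (l^i) =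
        if l^i = 0 then 0 else quadC P ((l^i : ℕ) : ZMod P) := rfl
      rw [h1, if_neg (pow_ne_zero _ hl.ne_zero), quadC_apply]
      push_cast
      rw [map_pow]
      push_cast
      rfl
    rw [e]
    have one_of : ∀ I : Ideal (𝓞 K), Ideal.absNorm I = l^k → 1 ≤ idealCount K (l^k) := fun I hI =>
      partA_count_of_inj (fun _ : Fin 1 => I) (fun _ _ _ => Subsingleton.elim _ _) (fun _ => hI)
    have goal : (∑ i ∈ Finset.range (k+1), (quadraticChar (ZMod P) (l : ZMod P))^i : ℤ) ≤
        idealCount K (l^k) := by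
      by_cases hlP : l = P
      · have : quadraticChar (ZMod P) (l : ZMod P) = 0 := by rw [hlP]; simp
        rw [this, Finset.sum_range_succ']
        simp only [ne_eq, Nat.add_eq_zero_iff, one_ne_zero, and_false, not_false_eq_true, zero_pow,
          Finset.sum_const_zero, pow_zero, zero_add]
        obtain ⟨I, -, hI⟩ := partA_span hPp hα hKα
        exact_mod_cast one_of (I^k) (by rw [map_pow, hI, hlP])
      · have hl0 : (l : ZMod P) ≠ 0 := by
          intro h
          rw [ZMod.natCast_eq_zero_iff] at h
          exact hlP ((Nat.prime_dvd_prime_iff_eq hPp hl).1 h).symm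
        rcases quadraticChar_dichotomy hl0 with h | h
        · rw [h]
          obtain ⟨n0, hn0⟩ : ∃ n0, P + 1 = 4 * n0 := ⟨(P+1)/4, by omega⟩
          obtain ⟨c, hc⟩ := partA_exists_c hP hn0 hlP h
          obtain ⟨Q, Q', h1, h2, h3⟩ := partA_split hPp hα hKα hn0 hl hlP hc
          have := partA_split_count hl h1 h2 h3 k
          simp only [one_pow, Finset.sum_const, Finset.card_range, nsmul_eq_mul, mul_one]
          exact_mod_cast this
        · rw [h, neg_one_geom_sum]
          split_ifs with hk2
          · positivity
          · have : Odd (k+1) := Nat.not_even_iff_odd.1 hk2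
            obtain ⟨j, hj⟩ : ∃ j, k = 2 * j := ⟨k/2, by obtain ⟨t, ht⟩ := this; omega⟩
            exact_mod_cast one_of (Ideal.span {((l^j : ℕ) : 𝓞 K)}) (by
              rw [Ideal.absNorm_span_natCast, RingOfIntegers.rank, partA_finrank hPp hα hKα, hj,
                ← pow_mul]; congr 1; ring)
    exact_mod_cast goal

end partA4
section partA5
open NumberField Filter Topology

open scoped ComplexOrder in
lemma partA_norm_LSeries_le {a b : ℕ → ℂ} (ha : ∀ n, 0 ≤ a n) (hab : ∀ n, a n ≤ b n) {s : ℝ}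
    (hsa : LSeriesSummable a s) (hsb : LSeriesSummable b s) :
    ‖LSeries a s‖ ≤ ‖LSeries b s‖ := by
  have h1 : 0 ≤ LSeries a s := tsum_nonneg fun n => LSeries.term_nonneg (ha n) s
  have h2 : LSeries a s ≤ LSeries b s := by
    rw [← sub_nonneg, ← LSeries_sub hsb hsa]
    exact tsum_nonneg fun n => LSeries.term_nonneg (sub_nonneg.2 (hab n)) s
  have h3 := h1.trans h2
  have e1 : ‖LSeries a s‖ = (LSeries a s).re := by
    have := Complex.eq_coe_norm_of_nonneg h1
    rw [this]; simp
  have e2 : ‖LSeries b s‖ = (LSeries b s).re := by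
    have := Complex.eq_coe_norm_of_nonneg h3
    rw [this]; simp
  rw [e1, e2]
  exact (Complex.le_def.1 h2).1

lemma partA_LSeries_zetaMul {N : ℕ} [NeZero N] (χ : DirichletCharacter ℂ N) {s : ℂ} (hs : 1 < s.re) :
    LSeries χ.zetaMul s = riemannZeta s * χ.LFunction s := by
  rw [DirichletCharacter.zetaMul, ← ArithmeticFunction.coe_mul, LSeries_convolution']
  · rw [χ.LFunction_eq_LSeries hs]
    congr 1
    · simp_rw [← ArithmeticFunction.LSeries_zeta_eq_riemannZeta hs, ← ArithmeticFunction.natCoe_apply]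
    · exact (LSeries_congr χ.apply_eq_toArithmeticFunction_apply s).symm
  · exact ArithmeticFunction.LSeriesSummable_zeta_iff.mpr hs
  · exact (LSeriesSummable_congr _ fun h ↦ (χ.apply_eq_toArithmeticFunction_apply h).symm).mpr <|
      ZMod.LSeriesSummable_of_one_lt_re χ hs

lemma partA_Lone_le {K : Type*} [Field K] [NumberField K] {α : K} {P : ℕ} [Fact P.Prime]
    (hP : P % 4 = 3) (hα : α ^ 2 = -(P : K)) (hKα : Algebra.adjoin ℚ {α} = ⊤) :
    ‖(quadC P).LFunction 1‖ ≤ dedekindZeta_residue K := by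
  have hsq : (quadC P) ^ 2 = 1 := by
    apply MulChar.isQuadratic_iff_sq_eq_one.1
    exact (quadraticChar_isQuadratic (ZMod P)).comp _
  have hT := tendsto_sub_one_mul_dedekindZeta_nhdsGT K
  have hpos := dedekindZeta_residue_pos K
  have hne : ∀ᶠ s : ℝ in 𝓝[>] 1, ((s:ℂ) - 1) * dedekindZeta K s ≠ 0 :=
    hT.eventually_ne (by exact_mod_cast hpos.ne')
  have hT' := hT.norm
  have hinj : Tendsto (fun s : ℝ => (s:ℂ)) (𝓝[>] 1) (𝓝[≠] 1) := by
    apply tendsto_nhdsWithin_of_tendsto_nhds_of_eventually_within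
    · have : Tendsto (fun s : ℝ => (s:ℂ)) (𝓝 1) (𝓝 ((1:ℝ):ℂ)) :=
        Complex.continuous_ofReal.continuousAt
      rw [Complex.ofReal_one] at this
      exact this.mono_left nhdsWithin_le_nhds
    · filter_upwards [self_mem_nhdsWithin] with s hs
      simp only [Set.mem_compl_iff, Set.mem_singleton_iff]
      have : (1:ℝ) < s := hs
      exact_mod_cast this.ne'
  have hZ := riemannZeta_residue_one.comp hinj
  have hL : Tendsto (fun s : ℝ => (quadC P).LFunction s) (𝓝[>] 1) (𝓝 ((quadC P).LFunction 1)) :=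
    ((DirichletCharacter.differentiable_LFunction (quadC_ne_one P hP)).continuous.continuousAt).tendsto.comp
      (hinj.mono_right nhdsWithin_le_nhds)
  have hZL := (hZ.mul hL).norm
  rw [one_mul] at hZL
  have : ‖((dedekindZeta_residue K : ℝ) : ℂ)‖ = dedekindZeta_residue K := by
    simp [abs_of_pos hpos]
  rw [← this]
  refine le_of_tendsto_of_tendsto hZL hT' ?_
  filter_upwards [hne, self_mem_nhdsWithin] with s hs hs1
  have hs1' : (1:ℝ) < s := hs1
  have hre : 1 < (s:ℂ).re := by simpa using hs1'
  simp only [Function.comp]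
  rw [mul_assoc, ← partA_LSeries_zetaMul _ hre, norm_mul, norm_mul]
  apply mul_le_mul_of_nonneg_left _ (norm_nonneg _)
  have hsum : LSeriesSummable (fun n => (idealCount K n : ℂ)) s := by
    by_contra hcon
    apply hs
    have : dedekindZeta K s = 0 := tsum_eq_zero_of_not_summable hcon
    rw [this, mul_zero]
  exact partA_norm_LSeries_le (DirichletCharacter.zetaMul_nonneg hsq)
    (partA_zetaMul_le hP hα hKα) ((quadC P).LSeriesSummable_zetaMul hre) hsum

lemma partA {K : Type*} [Field K] [NumberField K] {α : K} {P : ℕ} [Fact P.Prime]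
    (hP : P % 4 = 3) (hα : α ^ 2 = -(P : K)) (hKα : Algebra.adjoin ℚ {α} = ⊤) :
    |∑ j : ZMod P, quadraticChar (ZMod P) j * (j.val : ℤ)| ≤ P * classNumber K := by
  have hPp : P.Prime := Fact.out
  have h1 := partA_Lone P hP
  have h2 := partA_residue hPp hα hKα
  have h3 := partA_Lone_le hP hα hKα
  have hP0 : (0:ℝ) < P := by exact_mod_cast hPp.pos
  have h4 : Real.pi * |((∑ j : ZMod P, quadraticChar (ZMod P) j * (j.val : ℤ) : ℤ) : ℝ)| ≤
      Real.pi * (P * classNumber K) := by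
    rw [← h1]
    calc _ ≤ dedekindZeta_residue K * P * √P := by gcongr
      _ = (dedekindZeta_residue K * √P) * P := by ring
      _ ≤ (Real.pi * classNumber K) * P := by gcongr
      _ = _ := by ring
  have h5 := le_of_mul_le_mul_left h4 Real.pi_pos
  exact_mod_cast h5

end partA5
section partL

/-- the subgroup generated by `p` consists of the classes with character value one -/
lemma partL_class (P m : ℕ) [Fact P.Prime] (hP : P % 4 = 3) (hm : 1 ≤ m) (p f : ℕ)
    (hf : f = orderOf (p : ZMod (P ^ m))) (hford : 2 * f = Nat.totient (P ^ m)) :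
    0 < f ∧ Odd f ∧ quadraticChar (ZMod P) (p : ZMod P) = 1 ∧
    (∀ t : ℕ, quadraticChar (ZMod P) (t : ZMod P) = 1 →
      ∃ j < f, (t : ZMod (P ^ m)) = (p : ZMod (P ^ m)) ^ j) ∧
    (∀ t : ℕ, quadraticChar (ZMod P) (t : ZMod P) = -1 →
      ∃ j < f, (t : ZMod (P ^ m)) = -(p : ZMod (P ^ m)) ^ j) := by
  have hPp : P.Prime := Fact.out
  have hPN : P ∣ P ^ m := dvd_pow_self P (by omega)
  set N := P ^ m with hN
  haveI : NeZero N := ⟨(pow_pos hPp.pos m).ne'⟩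
  have hf0 : 0 < f := by
    have : 0 < Nat.totient N := Nat.totient_pos.2 (pow_pos hPp.pos m)
    omega
  have hfodd : Odd f := by
    rw [hN, Nat.totient_prime_pow hPp (by omega)] at hford
    have h1 : f = P ^ (m-1) * ((P-1)/2) := by
      obtain ⟨k, hk⟩ : ∃ k, P = 4 * k + 3 := ⟨P/4, by omega⟩
      have e1 : P - 1 = 2 * (2 * k + 1) := by omega
      rw [e1] at hford ⊢
      rw [Nat.mul_div_cancel_left _ (by norm_num)]
      nlinarith
    rw [h1]
    apply Odd.mul
    · exact Odd.pow (Nat.odd_iff.2 (by omega))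
    · exact Nat.odd_iff.2 (by omega)
  have hpu : IsUnit (p : ZMod N) := by
    apply IsUnit.of_pow_eq_one (n := f) _ hf0.ne'
    rw [hf]; exact pow_orderOf_eq_one _
  obtain ⟨x, hx⟩ := hpu
  have hxord : orderOf x = f := by rw [hf, ← hx, orderOf_units]
  have hcast : ∀ y : ℕ, ZMod.castHom hPN (ZMod P) (y : ZMod N) = (y : ZMod P) := fun y => by simp
  have hpc : quadraticChar (ZMod P) (p : ZMod P) = 1 := by
    have h1 : (p : ZMod P) ^ f = 1 := by
      have := congrArg (ZMod.castHom hPN (ZMod P)) (pow_orderOf_eq_one (p : ZMod N))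
      rw [map_pow, hcast, map_one, ← hf] at this
      exact this
    have h2 : (p : ZMod P) ≠ 0 := by
      intro h; rw [h, zero_pow hf0.ne'] at h1; exact zero_ne_one h1
    rcases quadraticChar_dichotomy h2 with h | h
    · exact h
    · exfalso
      have h3 := congrArg (quadraticChar (ZMod P)) h1
      rw [map_pow, h, hfodd.neg_one_pow, map_one] at h3
      omega
  have hindex : (Subgroup.zpowers x).index = 2 := by
    have h1 := (Subgroup.zpowers x).index_mul_card
    rw [Nat.card_zpowers, hxord, Nat.card_eq_fintype_card, ZMod.card_units_eq_totient, ← hford] at h1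
    exact Nat.eq_of_mul_eq_mul_right hf0 h1
  have hneg1 : (-1 : (ZMod N)ˣ) ∉ Subgroup.zpowers x := by
    intro h
    obtain ⟨j, hj⟩ := Subgroup.mem_zpowers_iff.1 h
    have h1 : (-1 : (ZMod N)ˣ) ^ f = 1 := by
      rw [← hj, ← zpow_natCast, ← zpow_mul, mul_comm, zpow_mul, zpow_natCast, ← hxord,
        pow_orderOf_eq_one, one_zpow]
    rw [hfodd.neg_one_pow] at h1
    have h2 := congrArg (fun u : (ZMod N)ˣ => ZMod.castHom hPN (ZMod P) (u : ZMod N)) h1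
    simp only [Units.val_neg, Units.val_one, map_neg, map_one] at h2
    have h3 : ringChar (ZMod P) ≠ 2 := by rw [ZMod.ringChar_zmod_n]; omega
    exact Ring.neg_one_ne_one_of_char_ne_two h3 h2
  have hmem : ∀ u : (ZMod N)ˣ, u ∈ Subgroup.zpowers x → ∃ j < f, (u : ZMod N) = (p : ZMod N) ^ j := by
    intro u hu
    rw [← mem_powers_iff_mem_zpowers, mem_powers_iff_mem_range_orderOf, hxord] at hu
    obtain ⟨j, hj, hj'⟩ := Finset.mem_image.1 hu
    refine ⟨j, Finset.mem_range.1 hj, ?_⟩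
    rw [← hj', ← hx]; simp
  have hcop : ∀ t : ℕ, quadraticChar (ZMod P) (t : ZMod P) ≠ 0 → IsUnit (t : ZMod N) := by
    intro t ht
    rw [ZMod.isUnit_iff_coprime, hN]
    apply Nat.Coprime.pow_right
    rw [Nat.coprime_comm, hPp.coprime_iff_not_dvd]
    intro hd
    apply ht
    rw [(ZMod.natCast_eq_zero_iff _ _).2 hd]; simp
  have hdich : ∀ u : (ZMod N)ˣ, (∃ j < f, (u : ZMod N) = (p : ZMod N) ^ j) ∨
      (∃ j < f, (u : ZMod N) = -(p : ZMod N) ^ j) := by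
    intro u
    by_cases hu : u ∈ Subgroup.zpowers x
    · exact Or.inl (hmem u hu)
    · right
      have h1 : (-1) * u ∈ Subgroup.zpowers x :=
        (Subgroup.mul_mem_iff_of_index_two hindex).2 (by simp [hneg1, hu])
      obtain ⟨j, hj, hj'⟩ := hmem _ h1
      refine ⟨j, hj, ?_⟩
      rw [← hj']; simp
  have hneg := quadC_neg_one P hP
  refine ⟨hf0, hfodd, hpc, ?_, ?_⟩
  · intro t ht
    obtain ⟨u, hu⟩ := hcop t (by rw [ht]; norm_num)
    rcases hdich u with ⟨j, hj, hj'⟩ | ⟨j, hj, hj'⟩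
    · exact ⟨j, hj, by rw [← hu, hj']⟩
    · exfalso
      rw [hu] at hj'
      have h1 := congrArg (ZMod.castHom hPN (ZMod P)) hj'
      rw [hcast, map_neg, map_pow, hcast] at h1
      rw [h1, neg_eq_neg_one_mul, map_mul, map_pow, hpc, hneg] at ht
      norm_num at ht
  · intro t ht
    obtain ⟨u, hu⟩ := hcop t (by rw [ht]; norm_num)
    rcases hdich u with ⟨j, hj, hj'⟩ | ⟨j, hj, hj'⟩
    · exfalso
      rw [hu] at hj'
      have h1 := congrArg (ZMod.castHom hPN (ZMod P)) hj'
      rw [hcast, map_pow, hcast] at h1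
      rw [h1, map_pow, hpc] at ht
      norm_num at ht
    · exact ⟨j, hj, by rw [← hu, hj']⟩

lemma partL_sum (P : ℕ) [Fact P.Prime] (M : ℕ) (hP : P % 4 = 3) :
    ∑ u ∈ Finset.range (M * P), quadraticChar (ZMod P) (u : ZMod P) * (u : ℤ) =
      M * ∑ j : ZMod P, quadraticChar (ZMod P) j * (j.val : ℤ) := by
  have hPp : P.Prime := Fact.out
  haveI : NeZero P := ⟨hPp.ne_zero⟩
  have hconv : ∀ g : ZMod P → ℕ → ℤ, ∑ r ∈ Finset.range P, g (r : ZMod P) r = ∑ j : ZMod P, g j j.val := by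
    intro g
    symm
    refine Finset.sum_bij (fun j _ => j.val) ?_ ?_ ?_ ?_
    · intro j _; exact Finset.mem_range.2 (ZMod.val_lt j)
    · intro a _ b _ h; exact ZMod.val_injective P h
    · intro r hr
      exact ⟨(r : ZMod P), Finset.mem_univ _, ZMod.val_cast_of_lt (Finset.mem_range.1 hr)⟩
    · intro j _; simp
  have h0 : ∑ j : ZMod P, quadraticChar (ZMod P) j = 0 :=
    quadraticChar_sum_zero (by rw [ZMod.ringChar_zmod_n]; omega)
  induction M with
  | zero => simp
  | succ M ih =>
    rw [Nat.succ_mul, Finset.sum_range_add, ih]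
    have : ∑ x ∈ Finset.range P, quadraticChar (ZMod P) ((M * P + x : ℕ) : ZMod P) * ((M * P + x : ℕ) : ℤ)
        = ∑ j : ZMod P, quadraticChar (ZMod P) j * (j.val : ℤ) := by
      have e : ∀ x ∈ Finset.range P, quadraticChar (ZMod P) ((M * P + x : ℕ) : ZMod P) *
          ((M * P + x : ℕ) : ℤ) = quadraticChar (ZMod P) (x : ZMod P) * ((M * P : ℕ) : ℤ) +
            quadraticChar (ZMod P) (x : ZMod P) * (x : ℤ) := by
        intro x _
        push_cast
        simp only [CharP.cast_eq_zero, mul_zero, zero_add]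
        ring
      rw [Finset.sum_congr rfl e, Finset.sum_add_distrib,
        hconv (fun z _ => quadraticChar (ZMod P) z * ((M * P : ℕ) : ℤ)),
        hconv (fun z n => quadraticChar (ZMod P) z * (n : ℤ)), ← Finset.sum_mul, h0, zero_mul, zero_add]
    rw [this]; push_cast; ring

lemma partL (P m : ℕ) [Fact P.Prime] (hP : P % 4 = 3) (hm : 1 ≤ m) (p f : ℕ)
    (hf : f = orderOf (p : ZMod (P ^ m))) (hford : 2 * f = Nat.totient (P ^ m)) :
    2 * ((∑ j ∈ Finset.range f, p ^ j % (P ^ m) : ℕ) : ℤ) - f * (P ^ m : ℕ) =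
      (P ^ (m - 1) : ℕ) * ∑ j : ZMod P, quadraticChar (ZMod P) j * (j.val : ℤ) := by
  have hPp : P.Prime := Fact.out
  have hPN : P ∣ P ^ m := dvd_pow_self P (by omega)
  obtain ⟨hf0, hfodd, hpc, hc1, hc2⟩ := partL_class P m hP hm p f hf hford
  rw [← partL_sum P _ hP]
  have hNM : P ^ (m-1) * P = P ^ m := by rw [← pow_succ]; congr 1; omega
  rw [hNM]
  set N := P ^ m with hN
  have hNpos : 0 < N := pow_pos hPp.pos m
  haveI : NeZero N := ⟨hNpos.ne'⟩
  have hcast : ∀ y : ℕ, ZMod.castHom hPN (ZMod P) (y : ZMod N) = (y : ZMod P) := fun y => by simp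
  have hneg := quadC_neg_one P hP
  -- the residues
  have hres : ∀ j, quadraticChar (ZMod P) ((p ^ j % N : ℕ) : ZMod P) = 1 := by
    intro j
    have : ((p ^ j % N : ℕ) : ZMod P) = (p : ZMod P) ^ j := by
      rw [← hcast, ZMod.natCast_mod, hcast]; push_cast; rfl
    rw [this, map_pow, hpc, one_pow]
  have hpos : ∀ j, 0 < p ^ j % N := by
    intro j
    rcases Nat.eq_zero_or_pos (p ^ j % N) with h | h
    · have := hres j; rw [h] at this; simp at this
    · exact h
  have hlt : ∀ j, p ^ j % N < N := fun j => Nat.mod_lt _ hNpos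
  have hinj : ∀ i < f, ∀ j < f, p ^ i % N = p ^ j % N → i = j := by
    intro i hi j hj h
    have h1 : (p : ZMod N) ^ i = (p : ZMod N) ^ j := by
      have := congrArg (Nat.cast (R := ZMod N)) h
      rw [ZMod.natCast_mod, ZMod.natCast_mod] at this
      push_cast at this; exact this
    have h2 := pow_injOn_Iio_orderOf (x := (p : ZMod N)) (by rw [← hf]; exact hi)
      (by rw [← hf]; exact hj) h1
    exact h2
  have hS1 : (Finset.range N).filter (fun u : ℕ => quadraticChar (ZMod P) (u : ZMod P) = 1) =
      (Finset.range f).image (fun j => p ^ j % N) := by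
    ext u
    simp only [Finset.mem_filter, Finset.mem_range, Finset.mem_image]
    constructor
    · rintro ⟨h1, h2⟩
      obtain ⟨j, hj, hj'⟩ := hc1 u h2
      refine ⟨j, hj, ?_⟩
      have : ((u : ℕ) : ZMod N) = ((p ^ j : ℕ) : ZMod N) := by push_cast; exact hj'
      rw [ZMod.natCast_eq_natCast_iff'] at this
      rw [← this, Nat.mod_eq_of_lt h1]
    · rintro ⟨j, hj, rfl⟩
      exact ⟨hlt j, hres j⟩
  have hS2 : (Finset.range N).filter (fun u : ℕ => quadraticChar (ZMod P) (u : ZMod P) = -1) =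
      (Finset.range f).image (fun j => N - p ^ j % N) := by
    ext u
    simp only [Finset.mem_filter, Finset.mem_range, Finset.mem_image]
    constructor
    · rintro ⟨h1, h2⟩
      obtain ⟨j, hj, hj'⟩ := hc2 u h2
      refine ⟨j, hj, ?_⟩
      have : ((u : ℕ) : ZMod N) = ((N - p ^ j % N : ℕ) : ZMod N) := by
        rw [Nat.cast_sub (hlt j).le, ZMod.natCast_mod]; push_cast; simp [hj']
      rw [ZMod.natCast_eq_natCast_iff', Nat.mod_eq_of_lt h1,
        Nat.mod_eq_of_lt (by have := hpos j; omega)] at this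
      exact this.symm
    · rintro ⟨j, hj, rfl⟩
      refine ⟨by have := hpos j; omega, ?_⟩
      have : ((N - p ^ j % N : ℕ) : ZMod P) = -((p ^ j % N : ℕ) : ZMod P) := by
        rw [Nat.cast_sub (hlt j).le, (ZMod.natCast_eq_zero_iff N P).2 hPN, zero_sub]
      rw [this, neg_eq_neg_one_mul, map_mul, hres, hneg]; norm_num
  have hsplit : ∀ u ∈ Finset.range N, quadraticChar (ZMod P) (u : ZMod P) * (u : ℤ) =
      (if quadraticChar (ZMod P) (u : ZMod P) = 1 then (u:ℤ) else 0) -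
      (if quadraticChar (ZMod P) (u : ZMod P) = -1 then (u:ℤ) else 0) := by
    intro u _
    by_cases h0 : (u : ZMod P) = 0
    · rw [h0]; simp
    · rcases quadraticChar_dichotomy h0 with h | h <;> rw [h] <;> simp
  rw [Finset.sum_congr rfl hsplit, Finset.sum_sub_distrib, ← Finset.sum_filter, ← Finset.sum_filter,
    hS1, hS2, Finset.sum_image, Finset.sum_image]
  · have : ∑ j ∈ Finset.range f, ((N - p ^ j % N : ℕ) : ℤ) = f * (N:ℕ) -
        ∑ j ∈ Finset.range f, ((p ^ j % N : ℕ) : ℤ) := by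
      rw [Finset.sum_congr rfl (fun j _ => Nat.cast_sub (hlt j).le), Finset.sum_sub_distrib]
      simp
    rw [this]; push_cast; ring
  · intro i hi j hj h
    simp only at h
    have := hlt i; have := hlt j
    exact hinj i (by simpa using hi) j (by simpa using hj) (by omega)
  · intro i hi j hj h
    exact hinj i (by simpa using hi) j (by simpa using hj) h

end partL
section partC1
variable {A : Type*} [Field A]

lemma partC_rootsum {y : A} {N : ℕ} (hy : y ^ N = 1) :
    ∑ t ∈ Finset.range N, y ^ t = if y = 1 then (N : A) else 0 := by
  split_ifs with h
  · simp [h]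
  · have := mul_geom_sum y N
    rw [hy, sub_self] at this
    exact (mul_eq_zero.1 this).resolve_left (sub_ne_zero.2 h)

lemma partC_sum_range_mul (P M : ℕ) (F : ℕ → A) :
    ∑ t ∈ Finset.range (P * M), F t = ∑ k ∈ Finset.range M, ∑ r ∈ Finset.range P, F (r + P * k) := by
  induction M with
  | zero => simp
  | succ M ih =>
    rw [Nat.mul_succ, Finset.sum_range_add, ih, Finset.sum_range_succ]
    simp only [add_comm]

lemma partC_periodic {P M : ℕ} (hP : 0 < P) {z : A} (hz : IsPrimitiveRoot z (P * M))
    (d : ℕ → A) (hd : ∀ r k, d (r + P * k) = d r) {n n' i0 : ℕ} (hi0 : i0 < M)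
    (hn : n + i0 = M * n') :
    ∑ t ∈ Finset.range (P * M), (∑ i ∈ Finset.range M, z ^ (t * (i + n))) * d t =
      M * ∑ r ∈ Finset.range P, d r * (z ^ M) ^ (r * n') := by
  rw [partC_sum_range_mul, Finset.sum_comm, Finset.mul_sum]
  refine Finset.sum_congr rfl fun r _ => ?_
  simp only [hd]
  rw [← Finset.sum_mul, Finset.sum_comm]
  have key : ∀ i ∈ Finset.range M, ∑ k ∈ Finset.range M, z ^ ((r + P * k) * (i + n)) =
      if i = i0 then (M:A) * (z ^ M) ^ (r * n') else 0 := by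
    intro i hi
    rw [Finset.mem_range] at hi
    have e : ∀ k ∈ Finset.range M, z ^ ((r + P * k) * (i + n)) =
        z ^ (r * (i + n)) * (z ^ (P * (i + n))) ^ k := by
      intro k _
      rw [← pow_mul, ← pow_add]; congr 1; ring
    rw [Finset.sum_congr rfl e, ← Finset.mul_sum, partC_rootsum]
    · have hiff : z ^ (P * (i + n)) = 1 ↔ i = i0 := by
        rw [hz.pow_eq_one_iff_dvd, Nat.mul_dvd_mul_iff_left hP]
        constructor
        · rintro ⟨c, hc⟩
          have h1 : (i:ℤ) - i0 = M * (c - n') := by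
            have h2 : (n:ℤ) + i0 = M * n' := by exact_mod_cast hn
            have h3 : (i:ℤ) + n = M * c := by exact_mod_cast hc
            linear_combination h3 - h2
          have h2 : ((i:ℤ) - i0) = 0 := by
            apply Int.eq_zero_of_abs_lt_dvd ⟨_, h1⟩
            rw [abs_lt]; omega
          omega
        · rintro rfl
          exact ⟨n', by rw [add_comm]; exact hn⟩
      simp only [hiff]
      split_ifs with h
      · subst h
        rw [mul_comm, ← pow_mul]; congr 2
        rw [add_comm, hn]; ring
      · simp
    · rw [← pow_mul, hz.pow_eq_one_iff_dvd]
      exact ⟨i + n, by ring⟩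
  rw [Finset.sum_congr rfl key, Finset.sum_ite_eq' , if_pos (Finset.mem_range.2 hi0)]
  ring

lemma partC_w_zero {P M : ℕ} {z : A} (hz : IsPrimitiveRoot z (P * M)) (n : ℕ) {t : ℕ} (ht : t < P * M)
    (ht0 : t ≠ 0) (hPt : P ∣ t) : ∑ i ∈ Finset.range M, z ^ (t * (i + n)) = 0 := by
  have e : ∀ i ∈ Finset.range M, z ^ (t * (i + n)) = z ^ (t * n) * (z ^ t) ^ i := by
    intro i _
    rw [← pow_mul, ← pow_add]; congr 1; ring
  rw [Finset.sum_congr rfl e, ← Finset.mul_sum, partC_rootsum, if_neg, mul_zero]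
  · exact hz.pow_ne_one_of_pos_of_lt ht0 ht
  · obtain ⟨k, rfl⟩ := hPt
    rw [← pow_mul, hz.pow_eq_one_iff_dvd]
    exact ⟨k, by ring⟩

/-- the combination of the Gauss sums with two-valued coefficients -/
lemma partC_comb {P M : ℕ} [Fact P.Prime] [CharZero A] (hP : P % 4 = 3) (hM : 0 < M) {z : A}
    (hz : IsPrimitiveRoot z (P * M)) :
    ∃ G : A, G ^ 2 = -(P : A) ∧ ∀ (g : ℕ → A) (gp gm : A), g 0 = -1 →
      (∀ t : ℕ, quadraticChar (ZMod P) (t : ZMod P) = 1 → g t = gp) →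
      (∀ t : ℕ, quadraticChar (ZMod P) (t : ZMod P) = -1 → g t = gm) →
      ∀ n n' i0 : ℕ, i0 < M → n + i0 = M * n' →
        2 * ∑ t ∈ Finset.range (P * M), (∑ i ∈ Finset.range M, z ^ (t * (i + n))) * g t =
          M * ((gp + gm) * ((if P ∣ n' then (P : A) else 0) - 1) +
            (gp - gm) * (quadraticChar (ZMod P) (n' : ZMod P) : ℤ) * G - 2) := by
  have hPp : P.Prime := Fact.out
  haveI : NeZero P := ⟨hPp.ne_zero⟩
  set om := z ^ M with hom
  have hω : IsPrimitiveRoot om P := hz.pow (Nat.mul_pos hPp.pos hM) (by ring)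
  set φ : AddChar (ZMod P) A := AddChar.zmodChar P hω.pow_eq_one with hφ
  have hφp : φ.IsPrimitive := AddChar.zmodChar_primitive_of_primitive_root P hω
  set X : MulChar (ZMod P) A := (quadraticChar (ZMod P)).ringHomComp (Int.castRingHom A) with hX
  have hXa : ∀ x, X x = ((quadraticChar (ZMod P) x : ℤ) : A) := fun x => rfl
  have hneg := quadC_neg_one P hP
  have hX1 : X ≠ 1 := by
    intro h
    have h1 := hXa (-1)
    rw [hneg, h, MulChar.one_apply (by simp)] at h1
    norm_num at h1
  have hconv : ∀ g : ZMod P → A, ∑ r ∈ Finset.range P, g (r : ZMod P) = ∑ j : ZMod P, g j := by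
    intro g
    symm
    refine Finset.sum_bij (fun j _ => j.val) ?_ ?_ ?_ ?_
    · intro j _; exact Finset.mem_range.2 (ZMod.val_lt j)
    · intro a _ b _ h; exact ZMod.val_injective P h
    · intro r hr
      exact ⟨(r : ZMod P), Finset.mem_univ _, ZMod.val_cast_of_lt (Finset.mem_range.1 hr)⟩
    · intro j _; simp
  have hφa : ∀ r n' : ℕ, om ^ (r * n') = φ ((n' : ZMod P) * (r : ZMod P)) := by
    intro r n'
    rw [mul_comm r n', ← Nat.cast_mul, hφ, AddChar.zmodChar_apply']
  refine ⟨gaussSum X φ, ?_, ?_⟩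
  · rw [gaussSum_sq hX1 ((quadraticChar_isQuadratic (ZMod P)).comp _) hφp, ZMod.card, hXa, hneg]
    push_cast; ring
  intro g gp gm hg0 hg1 hg2 n n' i0 hi0 hn
  set c : ℕ → A := fun t => ((quadraticChar (ZMod P) (t : ZMod P) : ℤ) : A) with hc
  have hcper : ∀ r k, c (r + P * k) = c r := by
    intro r k; simp [hc]
  have h1 := partC_periodic hPp.pos hz c hcper hi0 hn
  have h2 := partC_periodic hPp.pos hz (fun t => c t ^ 2) (fun r k => by simp only [hcper]) hi0 hn
  -- evaluate the two sums
  have e1 : ∑ r ∈ Finset.range P, c r * om ^ (r * n') =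
      (quadraticChar (ZMod P) (n' : ZMod P) : ℤ) * gaussSum X φ := by
    have : ∀ r ∈ Finset.range P, c r * om ^ (r * n') =
        (fun j : ZMod P => X j * φ ((n' : ZMod P) * j)) (r : ZMod P) := by
      intro r _
      simp only [hφa, hc, hXa]
    rw [Finset.sum_congr rfl this, hconv (fun j : ZMod P => X j * φ ((n' : ZMod P) * j))]
    by_cases h0 : (n' : ZMod P) = 0
    · simp only [h0, zero_mul, AddChar.map_zero_eq_one, mul_one]
      rw [MulChar.sum_eq_zero_of_ne_one hX1, quadraticChar_zero]; simp
    · have h3 := gaussSum_mulShift X φ (Units.mk0 _ h0)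
      rw [Units.val_mk0] at h3
      have h4 : gaussSum X (φ.mulShift (n' : ZMod P)) = ∑ j, X j * φ ((n' : ZMod P) * j) := by
        simp [gaussSum, AddChar.mulShift_apply]
      rw [← h4, ← h3, ← mul_assoc, hXa, ← Int.cast_mul, ← sq, quadraticChar_sq_one h0]
      simp
  have e2 : ∑ r ∈ Finset.range P, c r ^ 2 * om ^ (r * n') =
      (if P ∣ n' then (P : A) else 0) - 1 := by
    have : ∀ r ∈ Finset.range P, c r ^ 2 * om ^ (r * n') =
        (om ^ n') ^ r - if r = 0 then 1 else 0 := by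
      intro r hr
      rw [Finset.mem_range] at hr
      by_cases h0 : r = 0
      · subst h0; simp [hc]
      · have h5 : (r : ZMod P) ≠ 0 := by
          rw [Ne, ZMod.natCast_eq_zero_iff]
          exact fun h => absurd (Nat.le_of_dvd (by omega) h) (by omega)
        simp only [hc]
        rw [← Int.cast_pow, quadraticChar_sq_one h5, if_neg h0, mul_comm r n', pow_mul om]
        simp
    rw [Finset.sum_congr rfl this, Finset.sum_sub_distrib, partC_rootsum, Finset.sum_ite_eq',
      if_pos (Finset.mem_range.2 hPp.pos)]
    · simp only [hω.pow_eq_one_iff_dvd]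
    · rw [← pow_mul, mul_comm, pow_mul, hω.pow_eq_one, one_pow]
  rw [e1] at h1
  rw [e2] at h2
  have h0w : ∑ i ∈ Finset.range M, z ^ (0 * (i + n)) = (M : A) := by simp
  have hterm : ∀ t ∈ Finset.range (P * M), 2 * ((∑ i ∈ Finset.range M, z ^ (t * (i + n))) * g t) =
      (gp + gm) * ((∑ i ∈ Finset.range M, z ^ (t * (i + n))) * c t ^ 2) +
      (gp - gm) * ((∑ i ∈ Finset.range M, z ^ (t * (i + n))) * c t) -
      (if t = 0 then 2 * (M:A) else 0) := by
    intro t ht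
    rw [Finset.mem_range] at ht
    by_cases h0 : t = 0
    · subst h0
      rw [h0w, hg0, if_pos rfl]
      simp [hc]
    · rw [if_neg h0]
      by_cases hPt : P ∣ t
      · rw [partC_w_zero hz n ht h0 hPt]; ring
      · have h5 : (t : ZMod P) ≠ 0 := by rwa [Ne, ZMod.natCast_eq_zero_iff]
        rcases quadraticChar_dichotomy h5 with h | h
        · rw [hg1 t h]; simp only [hc, h]; push_cast; ring
        · rw [hg2 t h]; simp only [hc, h]; push_cast; ring
  rw [Finset.mul_sum, Finset.sum_congr rfl hterm, Finset.sum_sub_distrib, Finset.sum_add_distrib,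
    ← Finset.mul_sum, ← Finset.mul_sum, h1, h2, Finset.sum_ite_eq',
    if_pos (Finset.mem_range.2 (Nat.mul_pos hPp.pos hM))]
  ring

end partC1
section partC2
variable {F : Type*} [Field F] [Fintype F] {A : Type*} [Field A] [CharZero A]

lemma partC_order (γ : Fˣ) (hγ : ∀ x : Fˣ, x ∈ Subgroup.zpowers γ) :
    orderOf γ = Fintype.card F - 1 := by
  rw [orderOf_eq_card_of_forall_mem_zpowers hγ, Nat.card_eq_fintype_card, Fintype.card_units]

lemma partC_exists_pow (γ : Fˣ) (hγ : ∀ x : Fˣ, x ∈ Subgroup.zpowers γ) (x : F) (hx : x ≠ 0) :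
    ∃ j : ℕ, x = ((γ ^ j : Fˣ) : F) := by
  have := hγ (Units.mk0 x hx)
  rw [← mem_powers_iff_mem_zpowers] at this
  obtain ⟨j, hj⟩ := this
  exact ⟨j, by rw [show γ ^ j = _ from hj]; rfl⟩

lemma partC_mem {M N : ℕ} (hMN : M ≤ N) (hN : 0 < N) (γ : Fˣ)
    (hγ : ∀ x : Fˣ, x ∈ Subgroup.zpowers γ) (hNd : N ∣ Fintype.card F - 1)
    {D : Set F} (hD : D = ⋃ i < M, cycClass γ N i) (j : ℕ) :
    ((γ ^ j : Fˣ) : F) ∈ D ↔ j % N < M := by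
  rw [hD]
  simp only [Set.mem_iUnion, cycClass, Set.mem_ofPred_eq, exists_prop]
  constructor
  · rintro ⟨i, hi, k, hk⟩
    have h1 : γ ^ (j:ℤ) = γ ^ ((i : ℤ) + (N : ℤ) * k) := by
      rw [zpow_natCast]; exact Units.ext hk
    rw [zpow_eq_zpow_iff_modEq, partC_order γ hγ] at h1
    have h2 : (j:ℤ) ≡ (i : ℤ) + (N : ℤ) * k [ZMOD N] := h1.of_dvd (by exact_mod_cast hNd)
    have h3 : (j:ℤ) ≡ (i:ℤ) [ZMOD N] := h2.trans (by simp [Int.ModEq])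
    have h4 : j % N = i % N := (Int.natCast_modEq_iff.1 h3)
    rw [h4, Nat.mod_eq_of_lt (lt_of_lt_of_le hi hMN)]
    exact hi
  · intro h
    refine ⟨j % N, h, ((j / N : ℕ) : ℤ), ?_⟩
    congr 1
    rw [← Nat.cast_mul, ← Nat.cast_add, Nat.mod_add_div, zpow_natCast]

lemma partC_zero {M N : ℕ} (γ : Fˣ) {D : Set F} (hD : D = ⋃ i < M, cycClass γ N i) : (0:F) ∉ D := by
  rw [hD]
  simp only [Set.mem_iUnion, cycClass, Set.mem_ofPred_eq, exists_prop, not_exists, not_and]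
  intro i _ k hk
  exact (Units.ne_zero _) hk.symm

/-- multiplying by an element whose exponent is divisible by `N` preserves `D` -/
lemma partC_smul {M N : ℕ} (hMN : M ≤ N) (hN : 0 < N) (γ : Fˣ)
    (hγ : ∀ x : Fˣ, x ∈ Subgroup.zpowers γ) (hNd : N ∣ Fintype.card F - 1)
    {D : Set F} (hD : D = ⋃ i < M, cycClass γ N i) {c : F} (hc0 : c ≠ 0) {e : ℕ}
    (hce : c ^ e = 1) (hNe : N.Coprime e) {x : F} (hx : x ∈ D) :
    c * x ∈ D := by
  obtain ⟨i, rfl⟩ := partC_exists_pow γ hγ c hc0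
  have hx0 : x ≠ 0 := by
    rintro rfl; exact partC_zero γ hD hx
  obtain ⟨j, rfl⟩ := partC_exists_pow γ hγ x hx0
  rw [partC_mem hMN hN γ hγ hNd hD] at hx
  rw [← Units.val_mul, ← pow_add, partC_mem hMN hN γ hγ hNd hD]
  have h1 : γ ^ (i * e) = 1 := by
    rw [pow_mul]; apply Units.ext; rw [Units.val_pow_eq_pow_val, hce, Units.val_one]
  have h2 := orderOf_dvd_of_pow_eq_one h1
  rw [partC_order γ hγ] at h2
  have h3 : N ∣ i := hNe.dvd_of_dvd_mul_right (hNd.trans h2)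
  obtain ⟨k, rfl⟩ := h3
  rwa [Nat.mul_add_mod]

lemma partC_neg {M N : ℕ} (hMN : M ≤ N) (hN : 0 < N) (γ : Fˣ)
    (hγ : ∀ x : Fˣ, x ∈ Subgroup.zpowers γ) (hNd : N ∣ Fintype.card F - 1) (hNodd : Odd N)
    {D : Set F} (hD : D = ⋃ i < M, cycClass γ N i) : -D = D := by
  have h : ∀ x ∈ D, -x ∈ D := by
    intro x hx
    rw [neg_eq_neg_one_mul]
    exact partC_smul hMN hN γ hγ hNd hD (neg_ne_zero.2 one_ne_zero) (e := 2) (by ring)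
      (Nat.coprime_two_right.2 hNodd) hx
  ext x
  rw [Set.mem_neg]
  exact ⟨fun hx => by simpa using h _ hx, h x⟩

lemma partC_int (p : ℕ) [hp : Fact p.Prime] [CharP F p] [Algebra (ZMod p) F] {ζ : A}
    (hζ : IsPrimitiveRoot ζ p) (ψ : AddChar F A)
    (hψ : ∀ x, ψ x = ζ ^ (Algebra.trace (ZMod p) F x).val) (E : Finset F)
    (hE : ∀ c : ZMod p, c ≠ 0 → ∀ x ∈ E, algebraMap (ZMod p) F c * x ∈ E) (a : F) :
    ∃ k : ℤ, ∑ x ∈ E, ψ (x * a) = k := by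
  haveI : NeZero p := ⟨hp.out.ne_zero⟩
  set n : ZMod p → ℕ := fun c => (E.filter (fun x => Algebra.trace (ZMod p) F (x * a) = c)).card with hn
  have hle : ∀ c d : ZMod p, c ≠ 0 → n d ≤ n (c * d) := by
    intro c d hc
    apply Finset.card_le_card_of_injOn (fun x => algebraMap (ZMod p) F c * x)
    · intro x hx
      simp only [Finset.coe_filter, Set.mem_ofPred_eq] at hx ⊢
      refine ⟨hE c hc x hx.1, ?_⟩
      rw [mul_assoc, ← Algebra.smul_def, map_smul, hx.2, smul_eq_mul]
    · intro x _ y _ h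
      exact mul_left_cancel₀ (by simpa using hc) h
  have heq : ∀ c : ZMod p, c ≠ 0 → n c = n 1 := by
    intro c hc
    apply le_antisymm
    · have := hle c⁻¹ c (inv_ne_zero hc)
      rwa [inv_mul_cancel₀ hc] at this
    · have := hle c 1 hc
      rwa [mul_one] at this
  have h1 : ∑ x ∈ E, ψ (x * a) = ∑ c : ZMod p, (n c : A) * ζ ^ c.val := by
    rw [← Finset.sum_fiberwise E (fun x => Algebra.trace (ZMod p) F (x * a))]
    refine Finset.sum_congr rfl fun c _ => ?_
    have : ∀ x ∈ E.filter (fun x => Algebra.trace (ZMod p) F (x * a) = c), ψ (x * a) = ζ ^ c.val := by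
      intro x hx
      rw [hψ, (Finset.mem_filter.1 hx).2]
    rw [Finset.sum_congr rfl this, Finset.sum_const, nsmul_eq_mul]
  have h2 : ∑ c : ZMod p, ζ ^ c.val = 0 := by
    have : ∑ c : ZMod p, ζ ^ c.val = ∑ t ∈ Finset.range p, ζ ^ t := by
      refine Finset.sum_bij (fun j _ => j.val) ?_ ?_ ?_ ?_
      · intro j _; exact Finset.mem_range.2 (ZMod.val_lt j)
      · intro a _ b _ h; exact ZMod.val_injective p h
      · intro r hr
        exact ⟨(r : ZMod p), Finset.mem_univ _, ZMod.val_cast_of_lt (Finset.mem_range.1 hr)⟩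
      · intro j _; rfl
    rw [this, hζ.geom_sum_eq_zero hp.out.one_lt]
  refine ⟨(n 0 : ℤ) - n 1, ?_⟩
  have h3 : ∀ c ∈ Finset.univ, (n c : A) * ζ ^ c.val = n 1 * ζ ^ c.val +
      if c = 0 then (n 0 : A) - n 1 else 0 := by
    intro c _
    by_cases hc : c = 0
    · subst hc; simp
    · rw [heq c hc, if_neg hc, add_zero]
  rw [h1, Finset.sum_congr rfl h3, Finset.sum_add_distrib, ← Finset.mul_sum, h2,
    Finset.sum_ite_eq' ]
  simp

lemma partC_theta {M N : ℕ} (hMN : M ≤ N) (hN : 0 < N) (γ : Fˣ)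
    (hγ : ∀ x : Fˣ, x ∈ Subgroup.zpowers γ) (hNd : N ∣ Fintype.card F - 1)
    {D : Set F} (hD : D = ⋃ i < M, cycClass γ N i) (χ : MulChar F A)
    (hχ : IsPrimitiveRoot (χ γ) N) (ψ : AddChar F A) (n : ℕ) :
    (N : A) * ∑ x ∈ D.toFinset, ψ (x * ((γ ^ n : Fˣ) : F)) =
      ∑ t ∈ Finset.range N, (∑ i ∈ Finset.range M, ((χ γ)⁻¹) ^ (t * (i + n))) * gaussSum (χ ^ t) ψ := by
  set z := (χ γ)⁻¹ with hz
  have hχ0 : χ γ ≠ 0 := hχ.ne_zero hN.ne'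
  have hzN : z ^ N = 1 := by rw [hz, inv_pow, hχ.pow_eq_one, inv_one]
  have hpow : ∀ t j : ℕ, (χ ^ t) ((γ ^ j : Fˣ) : F) = (χ γ) ^ (t * j) := by
    intro t j
    rw [MulChar.pow_apply_coe, Units.val_pow_eq_pow_val, map_pow, ← pow_mul, mul_comm]
  have hind : ∀ x : F, (if x ∈ D then (N : A) else 0) =
      ∑ t ∈ Finset.range N, ∑ i ∈ Finset.range M, z ^ (t * i) * (χ ^ t) x := by
    intro x
    by_cases hx : x = 0
    · subst hx
      rw [if_neg (partC_zero γ hD)]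
      simp [MulChar.map_zero]
    · obtain ⟨j, rfl⟩ := partC_exists_pow γ hγ x hx
      rw [Finset.sum_comm]
      have : ∀ i ∈ Finset.range M, ∑ t ∈ Finset.range N, z ^ (t * i) * (χ ^ t) ((γ ^ j : Fˣ) : F) =
          if i = j % N then (N:A) else 0 := by
        intro i hi
        have e : ∀ t ∈ Finset.range N, z ^ (t * i) * (χ ^ t) ((γ ^ j : Fˣ) : F) =
            (z ^ i * (χ γ) ^ j) ^ t := by
          intro t _
          rw [hpow, mul_pow, ← pow_mul, ← pow_mul, mul_comm t i, mul_comm t j]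
        rw [Finset.sum_congr rfl e, partC_rootsum]
        · congr 1
          rw [hz, inv_pow, inv_mul_eq_one₀ (pow_ne_zero _ hχ0)]
          have hmod : (χ γ) ^ j = (χ γ) ^ (j % N) := by
            conv_lhs => rw [← Nat.mod_add_div j N, pow_add, pow_mul, hχ.pow_eq_one, one_pow, mul_one]
          rw [hmod, eq_iff_iff]
          have hi' : i < N := lt_of_lt_of_le (Finset.mem_range.1 hi) hMN
          constructor
          · intro h; exact hχ.pow_inj hi' (Nat.mod_lt _ hN) h
          · intro h; rw [h]
        · rw [mul_pow, ← pow_mul, mul_comm i, pow_mul, hzN, ← pow_mul, mul_comm j, pow_mul,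
            hχ.pow_eq_one]; simp
      rw [Finset.sum_congr rfl this, Finset.sum_ite_eq']
      simp only [Finset.mem_range, partC_mem hMN hN γ hγ hNd hD]
  have hg : ∀ t : ℕ, ∑ x, (χ ^ t) x * ψ (x * ((γ ^ n : Fˣ) : F)) = z ^ (t * n) * gaussSum (χ ^ t) ψ := by
    intro t
    have h1 := gaussSum_mulShift (χ ^ t) ψ (γ ^ n)
    have h4 : gaussSum (χ ^ t) (ψ.mulShift ((γ ^ n : Fˣ) : F)) =
        ∑ x, (χ ^ t) x * ψ (x * ((γ ^ n : Fˣ) : F)) := by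
      simp only [gaussSum, AddChar.mulShift_apply]
      exact Finset.sum_congr rfl fun x _ => by rw [mul_comm x]
    rw [← h4, ← h1, hpow, ← mul_assoc, hz, inv_pow, inv_mul_cancel₀ (pow_ne_zero _ hχ0), one_mul]
  calc (N : A) * ∑ x ∈ D.toFinset, ψ (x * ((γ ^ n : Fˣ) : F))
      = ∑ x, (if x ∈ D then (N : A) else 0) * ψ (x * ((γ ^ n : Fˣ) : F)) := by
        rw [Finset.mul_sum]
        simp only [ite_mul, zero_mul]
        rw [← Finset.sum_filter]
        refine Finset.sum_congr ?_ fun _ _ => rfl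
        ext x; simp
    _ = ∑ x, ∑ t ∈ Finset.range N, ∑ i ∈ Finset.range M,
          z ^ (t * i) * ((χ ^ t) x * ψ (x * ((γ ^ n : Fˣ) : F))) := by
        refine Finset.sum_congr rfl fun x _ => ?_
        rw [hind, Finset.sum_mul]
        refine Finset.sum_congr rfl fun t _ => ?_
        rw [Finset.sum_mul]
        exact Finset.sum_congr rfl fun i _ => by ring
    _ = _ := by
        rw [Finset.sum_comm]
        refine Finset.sum_congr rfl fun t _ => ?_
        rw [Finset.sum_comm, Finset.sum_mul]
        refine Finset.sum_congr rfl fun i _ => ?_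
        rw [← Finset.mul_sum, hg, ← mul_assoc, ← pow_add, ← mul_add]

end partC2

/-! ### Part E : final assembly -/

lemma partE_hodd {P p h : ℕ} (hP : P.Prime) (hP3 : P ≠ 3) (hp : p.Prime)
    (hcl : 1 + P = 4 * p ^ h) : Odd h := by
  rw [← Nat.not_even_iff_odd]
  rintro ⟨k, rfl⟩
  have hk : 1 ≤ p ^ k := Nat.one_le_pow _ _ hp.pos
  obtain ⟨a, ha⟩ : ∃ a, p ^ k = a + 1 := ⟨p ^ k - 1, by omega⟩
  rw [pow_add, ha] at hcl
  have h1 : P = (2 * a + 1) * (2 * a + 3) := by nlinarith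
  rw [h1, Nat.prime_mul_iff] at hP
  rcases hP with ⟨_, h2⟩ | ⟨_, h2⟩
  · omega
  · have : a = 0 := by omega
    subst this
    omega

lemma partE_dio {P p h f b : ℕ} (hP3 : 3 < P) (hp : p.Prime) (hodd : Odd h)
    (hcl : 1 + P = 4 * p ^ h) (hf : f = h + 2 * b) {X y : ℤ}
    (hXy : X ^ 2 + P * y ^ 2 = 4 * (p : ℤ) ^ f) (hX : ((p ^ b : ℕ) : ℤ) ∣ X)
    (hy : ((p ^ b : ℕ) : ℤ) ∣ y) : X = y ∨ X = -y := by
  obtain ⟨x, rfl⟩ := hX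
  obtain ⟨z, rfl⟩ := hy
  have hpb : ((p ^ b : ℕ) : ℤ) ≠ 0 := by
    have := pow_pos hp.pos b
    exact_mod_cast this.ne'
  have hcl' : 1 + (P : ℤ) = 4 * (p : ℤ) ^ h := by exact_mod_cast hcl
  have h1 : x ^ 2 + P * z ^ 2 = 1 + P := by
    have h2 : ((p ^ b : ℕ) : ℤ) ^ 2 * (x ^ 2 + P * z ^ 2) = ((p ^ b : ℕ) : ℤ) ^ 2 * (1 + P) := by
      rw [hcl']
      have : 4 * (p : ℤ) ^ f = ((p ^ b : ℕ) : ℤ) ^ 2 * (4 * (p : ℤ) ^ h) := by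
        rw [hf, pow_add, pow_mul']
        push_cast
        ring
      rw [← this, ← hXy]
      ring
    exact mul_left_cancel₀ (pow_ne_zero 2 hpb) h2
  have hPz : (3 : ℤ) < P := by exact_mod_cast hP3
  have hz : z ^ 2 = 1 := by
    have hz2 : z ^ 2 < 2 := by
      by_contra hc
      push Not at hc
      nlinarith [sq_nonneg x]
    have hz0 : z ≠ 0 := by
      rintro rfl
      have h3 : x ^ 2 = 4 * (p : ℤ) ^ h := by rw [← hcl']; linarith
      obtain ⟨k, rfl⟩ := hodd
      have h4 : (2 * (p : ℤ) ^ k) ^ 2 ∣ x ^ 2 := ⟨p, by rw [h3]; ring⟩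
      rw [Int.pow_dvd_pow_iff (by norm_num)] at h4
      obtain ⟨w, rfl⟩ := h4
      have h5 : (2 * (p : ℤ) ^ k) ^ 2 ≠ 0 := by
        have : (p : ℤ) ≠ 0 := by exact_mod_cast hp.ne_zero
        positivity
      have h6 : w ^ 2 = p := mul_left_cancel₀ h5 (by rw [← mul_pow, h3]; ring)
      exact (Nat.prime_iff_prime_int.1 hp).not_isSquare ⟨w, by rw [← h6, sq]⟩
    have : 0 < z ^ 2 := by positivity
    omega
  have hx : x ^ 2 = z ^ 2 := by rw [hz] at h1 ⊢; linarith
  rcases sq_eq_sq_iff_eq_or_eq_neg.1 hx with h | h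
  · left; rw [h]
  · right; rw [h]; ring

lemma partE_coprime {P m p f : ℕ} (hP : P.Prime) (hP7 : 7 ≤ P) (hm : 1 ≤ m) (hp : p.Prime)
    (hf : f = orderOf ((p : ZMod (P ^ m)))) (hford : 2 * f = P ^ (m - 1) * (P - 1)) :
    (P ^ m).Coprime (p - 1) := by
  apply Nat.Coprime.pow_left
  rw [hP.coprime_iff_not_dvd]
  intro hd
  have h1 : (P : ℤ) ∣ (p : ℤ) - 1 := by
    have := hp.one_le
    zify [this] at hd
    exact hd
  have h2 : ((P : ℤ)) ^ (m - 1 + 1) ∣ (p : ℤ) ^ (P ^ (m - 1)) - 1 ^ (P ^ (m - 1)) :=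
    dvd_sub_pow_of_dvd_sub h1 (m - 1)
  rw [Nat.sub_add_cancel hm, one_pow] at h2
  have h3 : (p : ZMod (P ^ m)) ^ (P ^ (m - 1)) = 1 := by
    have h4 := (ZMod.intCast_zmod_eq_zero_iff_dvd ((p : ℤ) ^ (P ^ (m - 1)) - 1) (P ^ m)).2
      (by push_cast; exact h2)
    push_cast at h4
    exact sub_eq_zero.1 h4
  have h4 := orderOf_dvd_of_pow_eq_one h3
  rw [← hf] at h4
  have hpos : 0 < P ^ (m - 1) := pow_pos hP.pos _
  have h5 := Nat.le_of_dvd hpos h4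
  obtain ⟨r, rfl⟩ : ∃ r, P = r + 1 := ⟨P - 1, by omega⟩
  simp only [Nat.add_sub_cancel] at hford
  nlinarith

section partE
variable {F : Type*} [Field F] [Fintype F] {A : Type*} [Field A]

lemma partE_pow_frob (p : ℕ) (ψ : AddChar F A)
    (hfrob : ∀ χ : MulChar F A, gaussSum (χ ^ p) ψ = gaussSum χ ψ) (χ : MulChar F A) (j : ℕ) :
    gaussSum (χ ^ (p ^ j)) ψ = gaussSum χ ψ := by
  induction j with
  | zero => simp
  | succ j ih => rw [pow_succ, pow_mul, hfrob, ih]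

lemma partE_chi_pow {N : ℕ} (γ : Fˣ) (hγ : ∀ x : Fˣ, x ∈ Subgroup.zpowers γ)
    (χ : MulChar F A) (hχ : (χ γ) ^ N = 1) : χ ^ N = 1 := by
  ext x
  obtain ⟨j, hj⟩ := partC_exists_pow γ hγ (x : F) x.ne_zero
  rw [MulChar.pow_apply_coe, hj, Units.val_pow_eq_pow_val, map_pow, ← pow_mul, mul_comm, pow_mul,
    hχ, one_pow, ← Units.val_pow_eq_pow_val, MulChar.one_apply_coe]

lemma partE_gt {N p : ℕ} {χ : MulChar F A} (hχ : χ ^ N = 1) (ψ : AddChar F A)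
    (hfrob : ∀ (χ : MulChar F A) (j : ℕ), gaussSum (χ ^ (p ^ j)) ψ = gaussSum χ ψ) (t j : ℕ) :
    ((t : ZMod N) = (p : ZMod N) ^ j → gaussSum (χ ^ t) ψ = gaussSum χ ψ) ∧
    ((t : ZMod N) = -(p : ZMod N) ^ j → gaussSum (χ ^ t) ψ = gaussSum χ⁻¹ ψ) := by
  constructor
  · intro h
    have h1 : t ≡ p ^ j [MOD N] := (ZMod.natCast_eq_natCast_iff _ _ _).1 (by push_cast; exact h)
    rw [pow_eq_pow_of_modEq h1 hχ, hfrob]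
  · intro h
    have h1 : t + p ^ j ≡ 0 [MOD N] := (ZMod.natCast_eq_natCast_iff _ _ _).1 (by
      push_cast; rw [h]; ring)
    have h2 := pow_eq_pow_of_modEq h1 hχ
    rw [pow_add, pow_zero] at h2
    rw [eq_inv_of_mul_eq_one_left h2, ← inv_pow, hfrob]

end partE

lemma partE_norm {p : ℕ} [hp : Fact p.Prime] {b : ℕ} {k : ℤ}
    (h : ‖(k : PadicAlgCl p)‖ ≤ ((p : ℝ)⁻¹) ^ b) : ((p ^ b : ℕ) : ℤ) ∣ k := by
  rw [← map_intCast (algebraMap ℚ_[p] (PadicAlgCl p)), PadicAlgCl.norm_extends] at h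
  have := (Padic.norm_int_le_pow_iff_dvd (p := p) k b).1 (by
    rwa [zpow_neg, zpow_natCast, ← inv_pow])
  exact_mod_cast this

lemma partE_norm_one {p : ℕ} [hp : Fact p.Prime] {n : ℕ} (h : p.Coprime n) :
    ‖(n : PadicAlgCl p)‖ = 1 := by
  rw [← map_natCast (algebraMap ℚ_[p] (PadicAlgCl p)), PadicAlgCl.norm_extends]
  exact Padic.norm_natCast_eq_one_iff.2 h

lemma partE_norm_p {p : ℕ} [hp : Fact p.Prime] :
    ‖(p : PadicAlgCl p)‖ = (p : ℝ)⁻¹ := by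
  rw [← map_natCast (algebraMap ℚ_[p] (PadicAlgCl p)), PadicAlgCl.norm_extends]
  exact Padic.norm_p

lemma partE_bound {p N b S : ℕ} (hp : p.Prime) (hN : 0 < N) {x : ℝ} (hx : 0 ≤ x)
    (h : x ^ N ≤ ((p : ℝ)⁻¹) ^ S) (hS : b * N ≤ S) : x ≤ ((p : ℝ)⁻¹) ^ b := by
  have hp1 : (1 : ℝ) ≤ p := by exact_mod_cast hp.one_le
  have h1 : ((p : ℝ)⁻¹) ^ S ≤ ((p : ℝ)⁻¹) ^ (b * N) :=
    pow_le_pow_of_le_one (by positivity) (inv_le_one_of_one_le₀ hp1) hS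
  rw [pow_mul] at h1
  exact (pow_le_pow_iff_left₀ hx (by positivity) hN.ne').1 (h.trans h1)

/-- Theorem 1.2(i) of the paper. -/
theorem statement_2 (p₁ m : ℕ) (hp₁ : p₁.Prime) (hp₁mod : p₁ % 4 = 3) (hp₁ne : p₁ ≠ 3)
    (hm : 1 ≤ m) (N : ℕ) (hN : N = p₁ ^ m)
    (p : ℕ) (hp : p.Prime) (f : ℕ) (hf : f = orderOf ((p : ZMod N)))
    (hford : 2 * f = Nat.totient N)
    (F : Type*) [Field F] [Fintype F] (hcard : Fintype.card F = p ^ f)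
    (γ : Fˣ) (hγ : ∀ x : Fˣ, x ∈ Subgroup.zpowers γ)
    (D : Set F) (hD : D = ⋃ i < p₁ ^ (m - 1), cycClass γ N i)
    -- `h` is the class number of `ℚ(√-p₁)`
    (K : Type*) [Field K] [NumberField K] (α : K)
    (hα : α ^ 2 = -(p₁ : K)) (hKα : Algebra.adjoin ℚ {α} = ⊤)
    (h : ℕ) (hh : h = NumberField.classNumber K)
    (hcl : 1 + p₁ = 4 * p ^ h) :
    (0 : F) ∉ D ∧ -D = D ∧
      ∃ k lam mu : ℕ, (cayley D).IsSRGWith (Fintype.card F) k lam mu := by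
  subst hN
  haveI : Fact p₁.Prime := ⟨hp₁⟩
  haveI : Fact p.Prime := ⟨hp⟩
  have hP7 : 7 ≤ p₁ := by
    have := hp₁.two_le
    omega
  obtain ⟨hf0, hfodd, -, hcp, hcm⟩ := partL_class p₁ m hp₁mod hm p f hf hford
  have hL := partL p₁ m hp₁mod hm p f hf hford
  have hA := partA hp₁mod hα hKα
  rw [← hh] at hA
  rw [Nat.totient_prime_pow hp₁ hm] at hford
  have hNe : (p₁ ^ m).Coprime (p - 1) := partE_coprime hp₁ hP7 hm hp hf hford
  have hNM : p₁ ^ m = p₁ * p₁ ^ (m - 1) := by rw [← pow_succ', Nat.sub_add_cancel hm]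
  have hM0 : 0 < p₁ ^ (m - 1) := pow_pos hp₁.pos _
  have hf3 : (p₁ - 1) / 2 ≤ f := by
    have : p₁ - 1 ≤ p₁ ^ (m - 1) * (p₁ - 1) := Nat.le_mul_of_pos_left _ hM0
    omega
  have hfp : (p : ZMod (p₁ ^ m)) ^ f = 1 := by rw [hf]; exact pow_orderOf_eq_one _
  have hpf1 : 1 ≤ p ^ f := Nat.one_le_pow _ _ hp.pos
  have hNd : p₁ ^ m ∣ p ^ f - 1 := by
    rw [← ZMod.natCast_eq_zero_iff, Nat.cast_sub hpf1]
    push_cast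
    push_cast at hfp
    rw [hfp, sub_self]
  have hNd' : p₁ ^ m ∣ Fintype.card F - 1 := by rw [hcard]; exact hNd
  have h2c : 2 < Fintype.card F := by
    rw [hcard]
    calc 2 < 2 ^ 3 := by norm_num
      _ ≤ p ^ 3 := Nat.pow_le_pow_left hp.two_le 3
      _ ≤ p ^ f := Nat.pow_le_pow_right hp.pos (by omega)
  have hPodd : Odd p₁ := Nat.odd_iff.2 (by omega)
  have hNodd : Odd (p₁ ^ m) := hPodd.pow
  have hN1 : 1 < p₁ ^ m := Nat.one_lt_pow (by omega) (by omega)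
  have hN0 : 0 < p₁ ^ m := by omega
  have hMN : p₁ ^ (m - 1) ≤ p₁ ^ m := Nat.pow_le_pow_right hp₁.pos (by omega)
  have hcopP : p.Coprime p₁ := by
    rw [Nat.coprime_primes hp hp₁]
    rintro rfl
    have h1 : p ∣ p ^ f - 1 := (dvd_pow_self p (by omega)).trans hNd
    have h2 : p ∣ p ^ f := dvd_pow_self p (by omega)
    have h3 : p ∣ 1 := (Nat.dvd_sub_iff_right hpf1 h2).1 h1
    exact hp.one_lt.ne' (Nat.dvd_one.1 h3)
  have h0D : (0 : F) ∉ D := partC_zero γ hD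
  have hnD : -D = D := partC_neg hMN hN0 γ hγ hNd' hNodd hD
  refine ⟨h0D, hnD, ?_⟩
  haveI : CharP F p := charP_of_card_eq_prime_pow hcard
  letI : Algebra (ZMod p) F := ZMod.algebra F p
  -- the parity of `h` and the exponent `b`
  have hhodd := partE_hodd hp₁ hp₁ne hp hcl
  have hhf : h ≤ f := by
    have h1 : h < 2 ^ h := Nat.lt_two_pow_self
    have h2 : 2 ^ h ≤ p ^ h := Nat.pow_le_pow_left hp.two_le h
    omega
  obtain ⟨b, hb⟩ : ∃ b, f = h + 2 * b := by
    obtain ⟨u, hu⟩ := hfodd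
    obtain ⟨v, hv⟩ := hhodd
    exact ⟨u - v, by omega⟩
  -- additive and multiplicative characters
  haveI : NeZero ((p : ℕ) : PadicAlgCl p) := ⟨by exact_mod_cast hp.ne_zero⟩
  obtain ⟨ζ, hζ⟩ := HasEnoughRootsOfUnity.exists_primitiveRoot (PadicAlgCl p) p
  obtain ⟨ψ, hψp, hψ⟩ := partB_psi (F := F) p hζ
  obtain ⟨χ, hχ, hprod, hgp, hgm⟩ := partB p f hcard hf0 h2c partE_norm_p (p₁ ^ m) hN1 hNodd hNd
    γ hγ hζ ψ hψp hψ
  have hfrob := partE_pow_frob p ψ (partB_frob p ψ (partB_psi_frob p ψ hψ))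
  have hχN := partE_chi_pow γ hγ χ hχ.pow_eq_one
  obtain ⟨G, hG2, hG⟩ := partC_comb (M := p₁ ^ (m - 1)) hp₁mod hM0
    (z := (χ γ)⁻¹) (by rw [← hNM]; exact hχ.inv)
  set S := ∑ j ∈ Finset.range f, p ^ j % p₁ ^ m with hS
  -- norm estimates
  have hSle : S ≤ f * p₁ ^ m := by
    rw [hS]
    calc _ ≤ ∑ j ∈ Finset.range f, p₁ ^ m := Finset.sum_le_sum fun j _ => (Nat.mod_lt _ hN0).le
      _ = f * p₁ ^ m := by simp
  have habs : |2 * (S : ℤ) - f * (p₁ ^ m : ℕ)| ≤ (p₁ ^ m : ℕ) * h := by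
    rw [hL, abs_mul, hNM]
    calc _ ≤ |((p₁ ^ (m - 1) : ℕ) : ℤ)| * (p₁ * h) := by gcongr
      _ = _ := by rw [Nat.abs_cast]; push_cast; ring
  have hfN : (f : ℤ) * (p₁ ^ m : ℕ) = h * (p₁ ^ m : ℕ) + 2 * (b * (p₁ ^ m : ℕ)) := by
    rw [hb]; push_cast; ring
  have hcomm : ((p₁ ^ m : ℕ) : ℤ) * h = h * (p₁ ^ m : ℕ) := mul_comm _ _
  rw [abs_le] at habs
  have hS1 : b * p₁ ^ m ≤ S := by
    zify
    push_cast at *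
    linarith [habs.1]
  have hS2 : b * p₁ ^ m ≤ f * p₁ ^ m - S := by
    zify [hSle]
    push_cast at *
    linarith [habs.2]
  have hgp' := partE_bound hp hN0 (norm_nonneg _) hgp hS1
  have hgm' := partE_bound hp hN0 (norm_nonneg _) hgm hS2
  set gp := gaussSum χ ψ with hgpdef
  set gm := gaussSum χ⁻¹ ψ with hgmdef
  have hψ1 : ψ ≠ 1 := by
    rintro rfl
    have := hψp one_ne_zero
    simp at this
  specialize hG (fun t => gaussSum (χ ^ t) ψ) gp gm
    (by simpa using gaussSum_one_left hψ1)
    (fun t ht => by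
      obtain ⟨j, -, hj⟩ := hcp t ht
      exact (partE_gt hχN ψ hfrob t j).1 hj)
    (fun t ht => by
      obtain ⟨j, -, hj⟩ := hcm t ht
      exact (partE_gt hχN ψ hfrob t j).2 hj)
  -- the character sums are integers
  have hintegral : ∀ n : ℕ, ∃ k : ℤ, ∑ x ∈ D.toFinset, ψ (x * ((γ ^ n : Fˣ) : F)) = k := by
    intro n
    refine partC_int p hζ ψ hψ D.toFinset ?_ _
    intro c hc x hx
    rw [Set.mem_toFinset] at hx ⊢
    exact partC_smul hMN hN0 γ hγ hNd' hD ((map_ne_zero _).2 hc) (e := p - 1)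
      (by rw [← map_pow, ZMod.pow_card_sub_one_eq_one hc, map_one]) hNe hx
  choose θ hθ using hintegral
  have hMA : ((p₁ ^ (m - 1) : ℕ) : PadicAlgCl p) ≠ 0 := by exact_mod_cast hM0.ne'
  have hPA : (p₁ : PadicAlgCl p) ≠ 0 := by exact_mod_cast hp₁.ne_zero
  have key : ∀ n n' i0 : ℕ, i0 < p₁ ^ (m - 1) → n + i0 = p₁ ^ (m - 1) * n' →
      2 * (p₁ : PadicAlgCl p) * θ n + 2 = (gp + gm) * ((if p₁ ∣ n' then (p₁ : PadicAlgCl p) else 0) - 1)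
        + (gp - gm) * (quadraticChar (ZMod p₁) (n' : ZMod p₁) : ℤ) * G := by
    intro n n' i0 hi0 hn
    have h1 := hG n n' i0 hi0 hn
    have h2 := partC_theta hMN hN0 γ hγ hNd' hD χ hχ ψ n
    rw [hθ] at h2
    rw [← hNM] at h1
    beta_reduce at h1
    rw [← h2, hNM] at h1
    have h3 : ((p₁ ^ (m - 1) : ℕ) : PadicAlgCl p) * (2 * (p₁ : PadicAlgCl p) * θ n) =
        ((p₁ ^ (m - 1) : ℕ) : PadicAlgCl p) * ((gp + gm) * ((if p₁ ∣ n' then (p₁ : PadicAlgCl p) else 0) - 1)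
        + (gp - gm) * (quadraticChar (ZMod p₁) (n' : ZMod p₁) : ℤ) * G - 2) := by
      rw [← h1]; push_cast; ring
    rw [mul_left_cancel₀ hMA h3]
    ring
  have k1 := key (p₁ ^ (m - 1)) 1 0 hM0 (by ring)
  have k2 := key (p₁ ^ (m - 1) * (p₁ - 1)) (p₁ - 1) 0 hM0 (by ring)
  have hc2 : quadraticChar (ZMod p₁) ((p₁ - 1 : ℕ) : ZMod p₁) = -1 := by
    rw [Nat.cast_sub hp₁.one_le]
    simpa using quadC_neg_one p₁ hp₁mod
  have hnd1 : ¬ p₁ ∣ 1 := fun h => by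
    have := Nat.le_of_dvd one_pos h
    omega
  have hnd2 : ¬ p₁ ∣ p₁ - 1 := fun h => by
    have := Nat.le_of_dvd (by omega) h
    omega
  rw [hc2, if_neg hnd2] at k2
  rw [if_neg hnd1, Nat.cast_one, map_one] at k1
  set T1 := θ (p₁ ^ (m - 1)) with hT1
  set T2 := θ (p₁ ^ (m - 1) * (p₁ - 1)) with hT2
  obtain ⟨X, hXdef⟩ : ∃ X : ℤ, X = -2 - p₁ * (T1 + T2) := ⟨_, rfl⟩
  obtain ⟨y, hydef⟩ : ∃ y : ℤ, y = T1 - T2 := ⟨_, rfl⟩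
  push_cast at k1 k2
  have hX : gp + gm = (X : PadicAlgCl p) := by
    rw [hXdef]; push_cast
    linear_combination (1 / 2 : PadicAlgCl p) * (k1 + k2)
  have hZG : (gp - gm) * G = p₁ * (y : PadicAlgCl p) := by
    rw [hydef]; push_cast
    linear_combination (-1 / 2 : PadicAlgCl p) * (k1 - k2)
  have hZ : gp - gm = -(y : PadicAlgCl p) * G := by
    apply mul_left_cancel₀ hPA
    linear_combination (-G) * hZG + (gp - gm) * hG2
  have hXy : X ^ 2 + p₁ * y ^ 2 = 4 * (p : ℤ) ^ f := by
    have : (X : PadicAlgCl p) ^ 2 + p₁ * (y : PadicAlgCl p) ^ 2 = 4 * (p : PadicAlgCl p) ^ f := by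
      rw [← hprod, ← hX]
      linear_combination (gp - gm - (y : PadicAlgCl p) * G) * hZ + (y : PadicAlgCl p) ^ 2 * hG2
    exact_mod_cast this
  have hGn : ‖G‖ = 1 := by
    have h1 : ‖G‖ ^ 2 = 1 := by
      rw [← norm_pow, hG2, norm_neg, partE_norm_one hcopP]
    exact (pow_eq_one_iff_of_nonneg (norm_nonneg _) two_ne_zero).1 h1
  have hXd : ((p ^ b : ℕ) : ℤ) ∣ X := by
    apply partE_norm
    rw [← hX]
    exact (IsUltrametricDist.norm_add_le_max _ _).trans (max_le hgp' hgm')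
  have hyd : ((p ^ b : ℕ) : ℤ) ∣ y := by
    apply partE_norm
    have h1 : ‖gp - gm‖ = ‖(y : PadicAlgCl p)‖ := by rw [hZ, norm_mul, norm_neg, hGn, mul_one]
    rw [← h1, sub_eq_add_neg]
    exact (IsUltrametricDist.norm_add_le_max _ _).trans (max_le hgp' (by rwa [norm_neg]))
  have hXY := partE_dio (by omega) hp hhodd hcl hb hXy hXd hyd
  -- conclusion
  refine partD ψ hψp D h0D hnD T1 T2 ?_
  intro a ha
  obtain ⟨n, rfl⟩ := partC_exists_pow γ hγ a ha
  rw [hθ]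
  suffices hs : θ n = T1 ∨ θ n = T2 by
    rcases hs with hs | hs
    · left; rw [hs]
    · right; rw [hs]
  obtain ⟨n', i0, hi0, hn⟩ : ∃ n' i0, i0 < p₁ ^ (m - 1) ∧ n + i0 = p₁ ^ (m - 1) * n' := by
    set M := p₁ ^ (m - 1) with hMdef
    have h1 := Nat.div_add_mod (n + (M - 1)) M
    have h2 := Nat.mod_lt (n + (M - 1)) hM0
    refine ⟨(n + (M - 1)) / M, M - 1 - (n + (M - 1)) % M, by omega, by omega⟩
  have k3 := key n n' i0 hi0 hn
  have hP0 : (2 * p₁ : ℤ) ≠ 0 := by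
    have := hp₁.pos
    positivity
  by_cases hd : p₁ ∣ n'
  · rw [if_pos hd, (ZMod.natCast_eq_zero_iff _ _).2 hd, MulChar.map_zero, hX] at k3
    have k4 : 2 * (p₁ : ℤ) * θ n + 2 = X * (p₁ - 1) := by
      have : 2 * (p₁ : PadicAlgCl p) * θ n + 2 = X * (p₁ - 1) := by
        rw [k3]; push_cast; ring
      exact_mod_cast this
    rcases hXY with h' | h'
    · left
      apply mul_left_cancel₀ hP0
      linear_combination k4 + (p₁ : ℤ) * h' - hXdef + (p₁ : ℤ) * hydef
    · right
      apply mul_left_cancel₀ hP0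
      linear_combination k4 + (p₁ : ℤ) * h' - hXdef - (p₁ : ℤ) * hydef
  · have hne : (n' : ZMod p₁) ≠ 0 := fun h => hd ((ZMod.natCast_eq_zero_iff _ _).1 h)
    have h2P : (2 * p₁ : PadicAlgCl p) ≠ 0 := mul_ne_zero two_ne_zero hPA
    rw [if_neg hd] at k3
    rcases quadraticChar_dichotomy hne with hq | hq
    · left
      rw [hq] at k3
      have : (θ n : PadicAlgCl p) = T1 := by
        apply mul_left_cancel₀ h2P
        push_cast at k3
        linear_combination k3 - k1
      exact_mod_cast this
    · right
      rw [hq] at k3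
      have : (θ n : PadicAlgCl p) = T2 := by
        apply mul_left_cancel₀ h2P
        push_cast at k3
        linear_combination k3 - k2
      exact_mod_cast this
end

section
/- Let p₁ ≡ 7 (mod 8) be a prime, let m ≥ 1, set N = 2p₁^m, and let p ≡ 3 (mod 4) be a prime with f := ord_N(p) = φ(N)/2. Let s be an odd positive integer and set q = p^{fs}. Let γ be any primitive element of F_q, let C_i = γ^i⟨γ^N⟩ (0 ≤ i ≤ N−1) be the cyclotomic classes of order N of F_q, let I ⊆ {0, 1, …, N−1} be any subset such that reduction modulo p₁^m maps I bijectively onto Z_{p₁^m}, and let D = ⋃_{i∈I} C_i. Then D is a skew Hadamard difference set in the additive group of F_q. -/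
open scoped Classical

/-- `D` is a skew Hadamard difference set in `(G, +)`: it is a difference set
(every nonzero `g` has the same number of representations `g = d₁ - d₂` with
`d₁, d₂ ∈ D`) and `G` is the disjoint union of `D`, `-D` and `{0}`. -/
def IsSkewHadamardDifferenceSet {G : Type*} [AddCommGroup G] (D : Set G) : Prop :=
  (0 : G) ∉ D ∧ (∀ g : G, g ≠ 0 → (g ∈ D ↔ -g ∉ D)) ∧
    ∃ l : ℕ, ∀ g : G, g ≠ 0 →
      Nat.card {x : G × G // x.1 ∈ D ∧ x.2 ∈ D ∧ x.1 - x.2 = g} = l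

open Finset


lemma cyc_count {F : Type*} [Field F] [Fintype F] (ψ : AddChar F ℂ) (hψ : ψ.IsPrimitive)
    (e : F → ℂ) (h0 : e 0 = 0) (hpm : ∀ x, x ≠ 0 → e x = 1 ∨ e x = -1)
    (hodd : ∀ x, e (-x) = - e x)
    (hE : ∀ a : F, a ≠ 0 → (∑ x, e x * ψ (a * x)) ^ 2 = - (Fintype.card F : ℂ))
    (g : F) (hg : g ≠ 0) :
    4 * Nat.card {x : F × F // e x.1 = 1 ∧ e x.2 = 1 ∧ x.1 - x.2 = g} + 3 = Fintype.card F := by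
  have hneg : ∀ a, (∑ x, e x * ψ (-a * x)) = - ∑ x, e x * ψ (a * x) := by
    intro a
    rw [← Equiv.sum_comp (Equiv.neg F), ← Finset.sum_neg_distrib]
    refine Finset.sum_congr rfl fun x _ => ?_
    simp [hodd]
  have hS0 : ∑ x, e x = 0 := by
    have : ∑ x, e x = - ∑ x, e x := by
      conv_lhs => rw [← Equiv.sum_comp (Equiv.neg F)]
      rw [← Finset.sum_neg_distrib]
      exact Finset.sum_congr rfl fun x _ => by simp [hodd]
    linear_combination this / 2
  have hq : (Fintype.card F : ℂ) ≠ 0 := by simp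
  have hψ0 : ∑ a, ψ (a * g) = 0 := by
    rw [AddChar.sum_mulShift _ hψ]; simp [hg]
  have hA : ∑ x, e x * e (x + g) = -1 := by
    have h1 : ∑ a, (∑ x, e x * ψ (a * x)) * (∑ x, e x * ψ (-a * x)) * ψ (a * g)
        = -(Fintype.card F : ℂ) := by
      have : ∀ a, (∑ x, e x * ψ (a * x)) * (∑ x, e x * ψ (-a * x)) * ψ (a * g)
        = (Fintype.card F : ℂ) * ψ (a * g) - if a = 0 then (Fintype.card F : ℂ) else 0 := by
        intro a
        rw [hneg]
        split_ifs with h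
        · subst h; simp [hS0]
        · linear_combination (-(ψ (a * g))) * hE a h
      simp_rw [this]
      rw [Finset.sum_sub_distrib, ← Finset.mul_sum, hψ0]
      simp
    have h2 : ∑ a, (∑ x, e x * ψ (a * x)) * (∑ x, e x * ψ (-a * x)) * ψ (a * g)
        = (Fintype.card F : ℂ) * ∑ x, e x * e (x + g) := by
      calc _ = ∑ a, ∑ x, ∑ y, e x * e y * ψ (a * (x - y + g)) := by
            refine Finset.sum_congr rfl fun a _ => ?_
            rw [Finset.sum_mul_sum, Finset.sum_mul]
            refine Finset.sum_congr rfl fun x _ => ?_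
            rw [Finset.sum_mul]
            refine Finset.sum_congr rfl fun y _ => ?_
            rw [show a * (x - y + g) = a * x + -a * y + a * g by ring, AddChar.map_add_eq_mul,
              AddChar.map_add_eq_mul]
            ring
        _ = ∑ x, ∑ y, e x * e y * ∑ a, ψ (a * (x - y + g)) := by
            rw [Finset.sum_comm]
            refine Finset.sum_congr rfl fun x _ => ?_
            rw [Finset.sum_comm]
            simp_rw [Finset.mul_sum]
        _ = _ := by
            rw [Finset.mul_sum]
            refine Finset.sum_congr rfl fun x _ => ?_
            rw [Finset.sum_eq_single (x + g)]
            · rw [AddChar.sum_mulShift _ hψ]; simp; ring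
            · intro y _ hy
              rw [AddChar.sum_mulShift _ hψ, if_neg]
              · simp
              · intro h; apply hy; linear_combination -h
            · simp
    rw [h2] at h1
    have := mul_left_cancel₀ hq (h1.trans (mul_neg_one _).symm)
    exact this
  have hc : Nat.card {x : F × F // e x.1 = 1 ∧ e x.2 = 1 ∧ x.1 - x.2 = g} =
      (univ.filter fun y : F => e y = 1 ∧ e (y + g) = 1).card := by
    rw [← Fintype.card_subtype, ← Nat.card_eq_fintype_card]
    refine Nat.card_congr ⟨fun x => ⟨x.1.2, x.2.2.1, ?_⟩, fun y => ⟨(y.1 + g, y.1), ?_⟩, ?_, ?_⟩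
    · have := x.2.2.2
      have h : x.1.2 + g = x.1.1 := by linear_combination -this
      rw [h]; exact x.2.1
    · exact ⟨y.2.2, y.2.1, by simp⟩
    · rintro ⟨⟨a, b⟩, h1, h2, h3⟩
      simp only [Subtype.mk.injEq, Prod.mk.injEq, and_true]
      simp only at h3
      rw [← h3, add_sub_cancel]
    · rintro ⟨y, hy⟩; rfl
  rw [hc]
  have hind : ∀ y : F, (4 : ℂ) * (if e y = 1 ∧ e (y + g) = 1 then 1 else 0) =
      (1 - (if y = 0 then 1 else 0) + e y) * (1 - (if y = -g then 1 else 0) + e (y + g)) := by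
    have key : ∀ x : F, (2 : ℂ) * (if e x = 1 then 1 else 0) = 1 - (if x = 0 then 1 else 0) + e x := by
      intro x
      by_cases hx : x = 0
      · subst hx; simp [h0]
      · rcases hpm x hx with h | h
        · simp [h, hx]; norm_num
        · rw [h, if_neg (by norm_num), if_neg hx]; norm_num
    intro y
    have h1 := key y
    have h2 := key (y + g)
    rw [if_congr (add_eq_zero_iff_eq_neg (a := y) (b := g)) rfl rfl] at h2
    rw [← h1, ← h2]
    by_cases a : e y = 1 <;> by_cases b : e (y + g) = 1 <;> simp [a, b]
    norm_num
  have hfin : (4 : ℂ) * ((univ.filter fun y : F => e y = 1 ∧ e (y + g) = 1).card : ℂ) + 3 =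
      Fintype.card F := by
    rw [Finset.card_filter]
    push_cast
    rw [Finset.mul_sum, Finset.sum_congr rfl fun y _ => hind y]
    have hexp : ∀ y : F, (1 - (if y = 0 then 1 else 0) + e y) * (1 - (if y = -g then 1 else 0) + e (y + g))
       = 1 + e y + e (y + g) + e y * e (y + g) - (if y = 0 then 1 + e (y + g) else 0)
        - (if y = -g then 1 + e y else 0) := by
      intro y
      by_cases a : y = 0
      · have : (0 : F) ≠ -g := fun h => hg (by simpa using h.symm)
        subst a; simp [this]; ring
      · by_cases b : y = -g
        · simp [b, hg, h0]
        · simp [a, b]; ring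
    rw [Finset.sum_congr rfl fun y _ => hexp y]
    simp only [Finset.sum_sub_distrib, Finset.sum_add_distrib, hA, hS0, Finset.sum_ite_eq', Finset.mem_univ, if_true]
    rw [Equiv.sum_comp (Equiv.addRight g) e |>.symm.trans rfl |>.symm.trans hS0 |> fun h => (by simpa using h : ∑ x, e (x + g) = 0)]
    simp [hodd]
    ring
  exact_mod_cast hfin

lemma jac_two {F : Type*} [Field F] [Fintype F] (hF : ringChar F ≠ 2) (χ : MulChar F ℂ) (hχ : χ ≠ 1)
   (h4 : χ 4 = 1) : jacobiSum χ χ = jacobiSum χ ((quadraticChar F).ringHomComp (Int.castRingHom ℂ)) := by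
  have h2 : (2 : F) ≠ 0 := Ring.two_ne_zero hF
  have h40 : (4 : F) ≠ 0 := by
    rw [show (4 : F) = 2 * 2 by norm_num]; exact mul_ne_zero h2 h2
  -- left side: substitute x = (1 + t)/2
  have e1 : jacobiSum χ χ = ∑ t : F, χ (1 - t ^ 2) := by
    unfold jacobiSum
    rw [← Equiv.sum_comp ((Equiv.addLeft (1 : F)).trans (Equiv.mulLeft₀ (2 : F)⁻¹ (inv_ne_zero h2)))]
    refine Finset.sum_congr rfl fun t _ => ?_
    rw [← map_mul, ← one_mul (χ _), ← h4, ← map_mul]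
    congr 1
    simp
    field_simp
    ring
  have e2 : ∑ t : F, χ (1 - t ^ 2) = ∑ a : F, χ (1 - a) * ((quadraticChar F a : ℂ) + 1) := by
    rw [← Finset.sum_fiberwise (s := univ) (g := fun t : F => t ^ 2)]
    refine Finset.sum_congr rfl fun a _ => ?_
    have := quadraticChar_card_sqrts hF a
    have h' : ((quadraticChar F a : ℂ) + 1) = ((univ.filter fun t : F => t ^ 2 = a).card : ℂ) := by
      have h'' : {x : F | x ^ 2 = a}.toFinset = (univ.filter fun t : F => t ^ 2 = a) := by
        ext; simp
      rw [h''] at this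
      exact_mod_cast this.symm
    rw [h', Finset.sum_congr rfl (g := fun _ => χ (1 - a)), Finset.sum_const]
    · simp [mul_comm]
    · intro x hx; simp at hx; rw [hx]
  have e3 : ∑ a : F, χ (1 - a) = 0 := by
    rw [← MulChar.sum_eq_zero_of_ne_one hχ, ← Equiv.sum_comp (Equiv.subLeft (1 : F)) χ]
    rfl
  rw [e1, e2, jacobiSum_comm, jacobiSum]
  simp_rw [mul_add, mul_one]
  rw [Finset.sum_add_distrib, e3, add_zero]
  refine Finset.sum_congr rfl fun a _ => ?_
  simp [mul_comm]

lemma exists_frob_char {F : Type*} [Field F] [Fintype F] (p : ℕ) [Fact p.Prime] [CharP F p] :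
    ∃ ψ : AddChar F ℂ, ψ.IsPrimitive ∧ ∀ x, ψ (x ^ p) = ψ x := by
  let _ : Algebra (ZMod p) F := ZMod.algebra F p
  refine ⟨ZMod.stdAddChar.compAddMonoidHom (Algebra.trace (ZMod p) F).toAddMonoidHom, ?_, ?_⟩
  · apply AddChar.IsPrimitive.of_ne_one
    obtain ⟨b, hb⟩ := Algebra.trace_surjective (ZMod p) F 1
    rw [AddChar.ne_one_iff]
    refine ⟨b, ?_⟩
    simp only [AddChar.compAddMonoidHom_apply, LinearMap.toAddMonoidHom_coe, hb]
    intro h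
    have := ZMod.injective_stdAddChar (N := p) (h.trans (AddChar.map_zero_eq_one _).symm)
    exact one_ne_zero this
  · intro x
    simp only [AddChar.compAddMonoidHom_apply, LinearMap.toAddMonoidHom_coe]
    congr 1
    have := Algebra.trace_eq_of_algEquiv (FiniteField.frobeniusAlgEquiv (ZMod p) F p) x
    rw [← this]
    simp

lemma gauss_frob {F : Type*} [Field F] [Fintype F] (p : ℕ) [Fact p.Prime] [CharP F p]
    (ψ : AddChar F ℂ) (hψp : ∀ x, ψ (x ^ p) = ψ x) (χ : MulChar F ℂ) (j : ℕ) :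
    gaussSum (χ ^ p ^ j) ψ = gaussSum χ ψ := by
  induction j generalizing χ with
  | zero => simp
  | succ j ih =>
    rw [pow_succ, pow_mul]
    refine Eq.trans ?_ (ih χ)
    unfold gaussSum
    conv_rhs => rw [← Equiv.sum_comp (frobeniusEquiv F p).toEquiv]
    refine Finset.sum_congr rfl fun x _ => ?_
    have hp : p ≠ 0 := (Fact.out : p.Prime).ne_zero
    rw [MulChar.pow_apply' _ hp]
    simp [frobeniusEquiv_apply, frobenius_def, hψp, map_pow]

lemma gauss_const {F : Type*} [Field F] [Fintype F] (p : ℕ) [Fact p.Prime] [CharP F p]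
    (hp2 : p ≠ 2) (ψ : AddChar F ℂ) (hψ : ψ.IsPrimitive) (hψp : ∀ x, ψ (x ^ p) = ψ x)
    (M : ℕ) (hM : Odd M) (hcop : M.Coprime (p - 1)) (j : ℕ) (hj : p ^ j ≡ 2 [MOD M])
    (χ : MulChar F ℂ) (hχ : χ ^ M = 1) :
    gaussSum (χ * (quadraticChar F).ringHomComp (Int.castRingHom ℂ)) ψ =
      gaussSum ((quadraticChar F).ringHomComp (Int.castRingHom ℂ)) ψ := by
  by_cases h1 : χ = 1
  · rw [h1, one_mul]
  set ρ := (quadraticChar F).ringHomComp (Int.castRingHom ℂ) with hρ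
  have hp : p.Prime := Fact.out
  have hF : ringChar F ≠ 2 := by rwa [ringChar.eq F p]
  have hord : orderOf χ ∣ M := orderOf_dvd_of_pow_eq_one hχ
  have hsq : χ * χ ≠ 1 := by
    intro h
    rw [← pow_two] at h
    have h2 := orderOf_dvd_of_pow_eq_one h
    have : orderOf χ ∣ 1 := by
      have := Nat.dvd_gcd hord h2
      rwa [(Nat.coprime_two_right.mpr hM : Nat.gcd M 2 = 1)] at this
    exact h1 (orderOf_eq_one_iff.mp (Nat.dvd_one.mp this))
  have hρ2 : ρ * ρ = 1 := by
    rw [← pow_two]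
    exact ((quadraticChar_isQuadratic F).comp _).sq_eq_one
  have hχρ : χ * ρ ≠ 1 := by
    intro h
    apply hsq
    calc χ * χ = (χ * ρ) * (χ * ρ) := by rw [mul_mul_mul_comm, hρ2, mul_one]
      _ = 1 := by rw [h, one_mul]
  have h40 : (4 : F) ≠ 0 := by
    have h2 : (2 : F) ≠ 0 := Ring.two_ne_zero hF
    rw [show (4 : F) = 2 * 2 by norm_num]; exact mul_ne_zero h2 h2
  have h4 : χ 4 = 1 := by
    have a1 : χ 4 ^ M = 1 := by
      rw [← MulChar.pow_apply' _ hM.pos.ne', hχ, MulChar.one_apply h40.isUnit]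
    have a2 : χ 4 ^ (p - 1) = 1 := by
      rw [← map_pow]
      have : (4 : F) ^ (p - 1) = 1 := by
        have hz : (4 : ZMod p) ≠ 0 := by
          intro h
          apply h40
          have := congrArg (ZMod.castHom (dvd_refl p) F) h
          rwa [map_ofNat, map_zero] at this
        have := congrArg (ZMod.castHom (dvd_refl p) F) (ZMod.pow_card_sub_one_eq_one hz)
        rwa [map_pow, map_ofNat, map_one] at this
      rw [this, map_one]
    have := orderOf_dvd_of_pow_eq_one a1
    have h3 := Nat.dvd_gcd this (orderOf_dvd_of_pow_eq_one a2)
    rw [hcop] at h3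
    exact orderOf_eq_one_iff.mp (Nat.dvd_one.mp h3)
  have hg : gaussSum (χ * χ) ψ = gaussSum χ ψ := by
    rw [← gauss_frob p ψ hψp χ j]
    congr 1
    rw [← pow_two, pow_eq_pow_iff_modEq]
    exact (hj.of_dvd hord).symm
  have hne : gaussSum χ ψ ≠ 0 := gaussSum_ne_zero_of_nontrivial (by simp) h1 hψ
  have r1 := jacobiSum_mul_nontrivial hsq ψ
  have r2 := jacobiSum_mul_nontrivial hχρ ψ
  rw [hg] at r1
  have r3 := mul_left_cancel₀ hne r1
  rw [jac_two hF χ h1 h4] at r3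
  rw [r3, mul_comm] at r2
  exact mul_left_cancel₀ hne r2

lemma arith_tot (p₁ m : ℕ) (hp₁ : p₁.Prime) (hp₁mod : p₁ % 8 = 7) (hm : 1 ≤ m) (f : ℕ)
    (hford : 2 * f = Nat.totient (2 * p₁ ^ m)) : f = p₁ ^ (m - 1) * (p₁ / 2) := by
  have hodd : Odd (p₁ ^ m) := (Nat.odd_iff.mpr (by omega)).pow
  rw [Nat.totient_mul (Nat.coprime_two_left.mpr hodd), Nat.totient_two, one_mul,
    Nat.totient_prime_pow hp₁ hm] at hford
  have : p₁ - 1 = 2 * (p₁ / 2) := by omega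
  rw [this] at hford
  have h2 : 2 * f = 2 * (p₁ ^ (m - 1) * (p₁ / 2)) := by rw [hford]; ring
  omega

lemma arith_ord (p₁ m : ℕ) (hp₁mod : p₁ % 8 = 7) 
    (p : ℕ) (hpmod : p % 4 = 3) (k : ℕ) :
    ((p : ZMod (2 * p₁ ^ m)) ^ k = 1 ↔ (p : ZMod (p₁ ^ m)) ^ k = 1) := by
  have hodd : Odd (p₁ ^ m) := (Nat.odd_iff.mpr (by omega)).pow
  have a : ∀ n : ℕ, ((p : ZMod n) ^ k = 1 ↔ p ^ k ≡ 1 [MOD n]) := by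
    intro n
    rw [← ZMod.natCast_eq_natCast_iff]; push_cast; rfl
  rw [a, a, ← Nat.modEq_and_modEq_iff_modEq_mul (Nat.coprime_two_left.mpr hodd)]
  refine and_iff_right ?_
  have : Odd (p ^ k) := (Nat.odd_iff.mpr (by omega)).pow
  exact Nat.odd_iff.mp this

lemma pow_lift (p₁ m : ℕ) (hm : 1 ≤ m) (a : ℕ) (h : a ≡ 1 [MOD p₁]) :
    a ^ p₁ ^ (m - 1) ≡ 1 [MOD p₁ ^ m] := by
  have h1 : (p₁ : ℤ) ∣ (a : ℤ) - 1 := by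
    have := (Int.natCast_modEq_iff.mpr h).symm.dvd
    simpa using this
  have h2 := dvd_sub_pow_of_dvd_sub h1 (m - 1)
  rw [Nat.sub_add_cancel hm, one_pow] at h2
  rw [← Int.natCast_modEq_iff]
  push_cast
  exact (Int.modEq_iff_dvd.mpr h2).symm

lemma arith_main (p₁ m : ℕ) (hp₁ : p₁.Prime) (hp₁mod : p₁ % 8 = 7)
    (hm : 1 ≤ m) (p : ℕ) (hp : p.Prime) (hpmod : p % 4 = 3)
    (f : ℕ) (hf : f = orderOf ((p : ZMod (2 * p₁ ^ m)))) (hford : 2 * f = Nat.totient (2 * p₁ ^ m)) :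
    Odd f ∧ (p₁ ^ m).Coprime (p - 1) ∧ ∃ j, p ^ j ≡ 2 [MOD p₁ ^ m] := by
  have hF := arith_tot p₁ m hp₁ hp₁mod hm f hford
  have hoddp : Odd p₁ := Nat.odd_iff.mpr (by omega)
  have hfo : Odd f := by
    rw [hF]; exact hoddp.pow.mul (Nat.odd_iff.mpr (by omega))
  have hf' : f = orderOf ((p : ZMod (p₁ ^ m))) := by
    rw [hf]
    apply Nat.dvd_antisymm
    · rw [orderOf_dvd_iff_pow_eq_one, arith_ord p₁ m hp₁mod p hpmod, pow_orderOf_eq_one]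
    · rw [orderOf_dvd_iff_pow_eq_one, ← arith_ord p₁ m hp₁mod p hpmod, pow_orderOf_eq_one]
  have cast1 : ∀ a k : ℕ, ((a : ZMod (p₁ ^ m)) ^ k = 1 ↔ a ^ k ≡ 1 [MOD p₁ ^ m]) := by
    intro a k
    rw [← ZMod.natCast_eq_natCast_iff]; push_cast; rfl
  refine ⟨hfo, ?_, ?_⟩
  · apply Nat.Coprime.pow_left
    rw [Nat.Prime.coprime_iff_not_dvd hp₁]
    intro h
    have h1 : p ≡ 1 [MOD p₁] := ((Nat.modEq_iff_dvd' hp.one_lt.le).mpr h).symm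
    have h2 := (cast1 _ _).mpr (pow_lift p₁ m hm p h1)
    have h3 := orderOf_dvd_of_pow_eq_one h2
    rw [← hf'] at h3
    have h4 := Nat.le_of_dvd (pow_pos hp₁.pos _) h3
    have h5 : 0 < p₁ ^ (m - 1) := pow_pos hp₁.pos _
    have h6 : 3 ≤ p₁ / 2 := by omega
    rw [hF] at h4
    nlinarith
  · have : Fact p₁.Prime := ⟨hp₁⟩
    have : NeZero (p₁ ^ m) := ⟨(pow_pos hp₁.pos _).ne'⟩
    have h2 : 2 ^ (p₁ / 2) ≡ 1 [MOD p₁] := by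
      have hz : (2 : ZMod p₁) ≠ 0 := by
        intro h
        have : ((2 : ℕ) : ZMod p₁) = 0 := by exact_mod_cast h
        rw [ZMod.natCast_eq_zero_iff] at this
        have := Nat.le_of_dvd (by norm_num) this
        omega
      have := (ZMod.euler_criterion p₁ hz).mp ((ZMod.exists_sq_eq_two_iff (by omega)).mpr (Or.inr hp₁mod))
      rw [← ZMod.natCast_eq_natCast_iff]
      push_cast
      exact this
    have h3 := pow_lift p₁ m hm _ h2
    rw [← pow_mul, mul_comm, ← hF] at h3
    have hcyc := ZMod.isCyclic_units_of_prime_pow p₁ hp₁ (by omega) m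
    have hfpos : 0 < f := hfo.pos
    have u2 : (2 : ZMod (p₁ ^ m)) ^ f = 1 := by exact_mod_cast (cast1 2 f).mpr h3
    have up : (p : ZMod (p₁ ^ m)) ^ f = 1 := by rw [hf']; exact pow_orderOf_eq_one _
    let U2 : (ZMod (p₁ ^ m))ˣ := Units.ofPowEqOne _ f u2 hfpos.ne'
    let UP : (ZMod (p₁ ^ m))ˣ := Units.ofPowEqOne _ f up hfpos.ne'
    have hUP : orderOf UP = f := by
      rw [← orderOf_units, hf']; rfl
    have hsub : (univ.filter fun x => x ∈ Subgroup.zpowers UP) ⊆ (univ.filter fun x : (ZMod (p₁ ^ m))ˣ => x ^ f = 1) := by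
      intro x hx
      simp only [mem_filter, mem_univ, true_and] at hx ⊢
      obtain ⟨k, rfl⟩ := hx
      simp only
      rw [← zpow_natCast, ← zpow_mul, mul_comm, zpow_mul, zpow_natCast, ← hUP, pow_orderOf_eq_one, one_zpow]
    have hcard : (univ.filter fun x => x ∈ Subgroup.zpowers UP).card = f := by
      rw [← Fintype.card_subtype, ← hUP, ← Nat.card_zpowers, Nat.card_eq_fintype_card]
    have heq := Finset.eq_of_subset_of_card_le hsub (by rw [hcard]; exact IsCyclic.card_pow_eq_one_le hfpos)
    have hmem : U2 ∈ (univ.filter fun x : (ZMod (p₁ ^ m))ˣ => x ^ f = 1) := by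
      simp only [mem_filter, mem_univ, true_and]
      ext; exact u2
    rw [← heq] at hmem
    simp only [mem_filter, mem_univ, true_and] at hmem
    rw [← mem_powers_iff_mem_zpowers] at hmem
    obtain ⟨j, hj⟩ := hmem
    refine ⟨j, ?_⟩
    rw [← ZMod.natCast_eq_natCast_iff]
    push_cast
    exact congrArg Units.val hj

lemma fourier_sum {F : Type*} [Field F] [Fintype F] (M : ℕ) [NeZero M]
    (ψ : AddChar F ℂ) (ρ : MulChar F ℂ) (hρ : ρ⁻¹ = ρ)
    (hG : ∀ χ : MulChar F ℂ, χ ^ M = 1 → gaussSum (χ * ρ) ψ = gaussSum ρ ψ)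
    (L : Fˣ →* Multiplicative (ZMod M)) (w : ZMod M → ℂ) (e : F → ℂ) (he0 : e 0 = 0)
    (he : ∀ x : Fˣ, e x = ρ x * w (L x).toAdd) (a : Fˣ) :
    ∑ x, e x * ψ (a * x) = ρ a * w (L a⁻¹).toAdd * gaussSum ρ ψ := by
  let H : ZMod M → Fˣ →* ℂ := fun j =>
    ((ZMod.stdAddChar (N := M)).mulShift j).toMonoidHom.comp L
  let χ : ZMod M → MulChar F ℂ := fun j => MulChar.ofUnitHom (H j).toHomUnits
  have hχ : ∀ j (x : Fˣ), χ j x = ZMod.stdAddChar (j * (L x).toAdd) := by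
    intro j x
    simp only [χ]
    rw [MulChar.ofUnitHom_coe]
    rfl
  have hχM : ∀ j, χ j ^ M = 1 := by
    intro j
    ext x
    rw [MulChar.pow_apply_coe, hχ, MulChar.one_apply_coe, ← AddChar.map_nsmul_eq_pow]
    simp
  have hw : ∀ k, w k = (M : ℂ)⁻¹ * ∑ j, ZMod.stdAddChar (j * k) * ZMod.dft w j := by
    intro k
    have := ZMod.invDFT_apply (ZMod.dft w) k
    rw [LinearEquiv.symm_apply_apply] at this
    simpa using this
  have hex : ∀ x : F, e x = (M : ℂ)⁻¹ * ∑ j, ZMod.dft w j * (χ j * ρ) x := by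
    intro x
    by_cases hx : x = 0
    · subst hx; rw [he0]; simp [MulChar.map_nonunit]
    · obtain ⟨x, rfl⟩ := (Ne.isUnit hx)
      rw [he, hw, mul_left_comm, Finset.mul_sum]
      congr 1
      refine Finset.sum_congr rfl fun j _ => ?_
      rw [MulChar.mul_apply, hχ]; ring
  calc ∑ x, e x * ψ (a * x)
      = (M : ℂ)⁻¹ * ∑ j, ZMod.dft w j * gaussSum (χ j * ρ) (ψ.mulShift a) := by
        simp_rw [gaussSum, hex, Finset.mul_sum, Finset.sum_mul]
        rw [Finset.sum_comm]
        refine Finset.sum_congr rfl fun j _ => Finset.sum_congr rfl fun x _ => ?_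
        rw [AddChar.mulShift_apply]; ring
    _ = _ := by
        rw [hw, Finset.mul_sum, Finset.mul_sum, Finset.mul_sum, Finset.sum_mul]
        refine Finset.sum_congr rfl fun j _ => ?_
        rw [gaussSum_mulShift_eq, hG _ (hχM j), mul_inv, MulChar.mul_apply, hρ, ← hχ,
          MulChar.inv_apply', ← Units.val_inv_eq_inv_val]
        ring

theorem statement_4 (p₁ m : ℕ) (hp₁ : p₁.Prime) (hp₁mod : p₁ % 8 = 7)
    (hm : 1 ≤ m) (N : ℕ) (hN : N = 2 * p₁ ^ m)
    (p : ℕ) (hp : p.Prime) (hpmod : p % 4 = 3)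
    (f : ℕ) (hf : f = orderOf ((p : ZMod N))) (hford : 2 * f = Nat.totient N)
    (s : ℕ) (hs : Odd s) (hspos : 0 < s)
    (F : Type*) [Field F] [Fintype F] (hcard : Fintype.card F = p ^ (f * s))
    (γ : Fˣ) (hγ : ∀ x : Fˣ, x ∈ Subgroup.zpowers γ)
    (I : Finset ℕ) (hIN : ∀ i ∈ I, i < N)
    (hI : Set.BijOn (fun i : ℕ => (i : ZMod (p₁ ^ m))) ↑I Set.univ)
    (D : Set F) (hD : D = ⋃ i ∈ I, cycClass γ N i) :
    IsSkewHadamardDifferenceSet D := by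
  subst hN
  obtain ⟨hfodd, hcop, j, hj⟩ := arith_main p₁ m hp₁ hp₁mod hm p hp hpmod f hf hford
  have : Fact p.Prime := ⟨hp⟩
  have hCP : CharP F p := charP_of_card_eq_prime_pow hcard
  have hp2 : p ≠ 2 := by omega
  have hF : ringChar F ≠ 2 := by rwa [ringChar.eq F p]
  have hdvd : p₁ ^ m ∣ Fintype.card F - 1 := by
    have h1 : (p : ZMod (2 * p₁ ^ m)) ^ (f * s) = 1 := by
      rw [pow_mul, hf, pow_orderOf_eq_one, one_pow]
    rw [arith_ord p₁ m hp₁mod p hpmod] at h1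
    have h2 : p ^ (f * s) ≡ 1 [MOD p₁ ^ m] := by
      rw [← ZMod.natCast_eq_natCast_iff]; push_cast; exact h1
    rw [hcard]
    exact (Nat.modEq_iff_dvd' (Nat.one_le_pow _ _ hp.pos)).mp h2.symm
  have hcard4 : Fintype.card F % 4 = 3 := by
    rw [hcard]
    obtain ⟨k, hk⟩ := hfodd.mul hs
    rw [hk, pow_succ, pow_mul, Nat.mul_mod, Nat.pow_mod, Nat.pow_mod p 2, hpmod]
    norm_num
  have hModd : Odd (p₁ ^ m) := (Nat.odd_iff.mpr (by omega)).pow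
  generalize p₁ ^ m = M at *
  have : NeZero M := ⟨hModd.pos.ne'⟩
  obtain ⟨ψ, hψ, hψp⟩ := exists_frob_char (F := F) p
  set ρ : MulChar F ℂ := (quadraticChar F).ringHomComp (Int.castRingHom ℂ) with hρdef
  have hρq : ρ.IsQuadratic := (quadraticChar_isQuadratic F).comp _
  have hG : ∀ χ : MulChar F ℂ, χ ^ M = 1 → gaussSum (χ * ρ) ψ = gaussSum ρ ψ :=
    fun χ hχ => gauss_const p hp2 ψ hψ hψp M hModd hcop j hj χ hχ
  have hρ1 : quadraticChar F ≠ 1 := quadraticChar_ne_one hF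
  have hργ : ρ γ = -1 := by
    have h : quadraticChar F γ ≠ 1 := by
      intro h
      apply hρ1
      rw [MulChar.eq_iff hγ, h]; simp
    have h2 := (quadraticChar_dichotomy (F := F) γ.ne_zero).resolve_left h
    rw [hρdef, MulChar.ringHomComp_apply, h2]; simp
  have hρneg : ρ (-1) = -1 := by
    have h : ¬ IsSquare (-1 : F) := by
      rw [FiniteField.isSquare_neg_one_iff]; omega
    have h2 := quadraticChar_neg_one_iff_not_isSquare.mpr h
    rw [hρdef, MulChar.ringHomComp_apply, h2]; simp
  have hρne : ρ ≠ 1 := by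
    intro h
    rw [h, MulChar.one_apply_coe] at hργ
    norm_num at hργ
  have hρsq : ∀ x : Fˣ, ρ x = 1 ∨ ρ x = -1 := by
    intro x
    rcases hρq x with h | h | h
    · exact absurd h ((x.isUnit.map ρ).ne_zero)
    · exact Or.inl h
    · exact Or.inr h
  -- logarithm
  have hord : orderOf (Multiplicative.ofAdd (1 : ZMod M)) ∣ orderOf γ := by
    rw [orderOf_ofAdd_eq_addOrderOf, ZMod.addOrderOf_one, orderOf_eq_card_of_forall_mem_zpowers hγ,
      Nat.card_eq_fintype_card, Fintype.card_units]
    exact hdvd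
  let L : Fˣ →* Multiplicative (ZMod M) := monoidHomOfForallMemZpowers hγ hord
  have hLγ : L γ = Multiplicative.ofAdd (1 : ZMod M) := monoidHomOfForallMemZpowers_apply_gen hγ hord
  have hLpow : ∀ k : ℤ, (L (γ ^ k)).toAdd = (k : ZMod M) := by
    intro k
    rw [map_zpow, hLγ, ← ofAdd_zsmul]; simp
  have hρpow : ∀ k : ℤ, ρ ((γ ^ k : Fˣ) : F) = (-1) ^ k := by
    intro k
    rw [← hργ]
    have := map_zpow (MulChar.equivToUnitHom ρ) γ k
    have h2 := congrArg Units.val this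
    rw [MulChar.coe_equivToUnitHom, Units.val_zpow_eq_zpow_val (MulChar.equivToUnitHom ρ γ), MulChar.coe_equivToUnitHom] at h2
    exact h2
  have hLneg : L (-1) = 1 := by
    have h1 : L (-1) ^ 2 = 1 := by rw [← map_pow]; simp
    have h2 : L (-1) ^ M = 1 := by
      apply Multiplicative.toAdd.injective
      simp
    have h3 := Nat.dvd_gcd (orderOf_dvd_of_pow_eq_one h1) (orderOf_dvd_of_pow_eq_one h2)
    rw [Nat.coprime_two_left.mpr hModd] at h3
    exact orderOf_eq_one_iff.mp (Nat.dvd_one.mp h3)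
  have hsel : ∀ c : ZMod M, ∃ i ∈ I, (i : ZMod M) = c := by
    intro c
    obtain ⟨i, hi, h⟩ := hI.surjOn (Set.mem_univ c)
    exact ⟨i, hi, h⟩
  choose ix hix1 hix2 using hsel
  let w : ZMod M → ℂ := fun c => (-1) ^ (ix c)
  have hwpm : ∀ c, w c = 1 ∨ w c = -1 := fun c => neg_one_pow_eq_or ℂ _
  let e : F → ℂ := fun x => if h : x = 0 then 0 else ρ x * w (L (Units.mk0 x h)).toAdd
  have he0 : e 0 = 0 := by simp [e]
  have he : ∀ x : Fˣ, e x = ρ x * w (L x).toAdd := by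
    intro x
    simp [e]
  have hpm : ∀ x, x ≠ 0 → e x = 1 ∨ e x = -1 := by
    intro x hx
    obtain ⟨x, rfl⟩ := hx.isUnit
    rw [he]
    rcases hρsq x with h | h <;> rcases hwpm (L x).toAdd with h' | h' <;> simp [h, h']
  have hodd : ∀ x, e (-x) = - e x := by
    intro x
    by_cases hx : x = 0
    · subst hx; simp [he0]
    obtain ⟨x, rfl⟩ := (Ne.isUnit hx)
    rw [← Units.val_neg, he, he]
    rw [show L (-x) = L x by rw [← neg_one_mul, map_mul, hLneg, one_mul], Units.val_neg,
      neg_eq_neg_one_mul, map_mul, hρneg]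
    ring
  have hE : ∀ a : F, a ≠ 0 → (∑ x, e x * ψ (a * x)) ^ 2 = - (Fintype.card F : ℂ) := by
    intro a ha
    obtain ⟨a, rfl⟩ := ha.isUnit
    rw [fourier_sum M ψ ρ hρq.inv hG L w e he0 he a, mul_pow, gaussSum_sq hρne hρq hψ, hρneg, mul_pow]
    rcases hρsq a with h | h <;> rcases hwpm (L a⁻¹).toAdd with h2 | h2 <;> rw [h, h2] <;> ring
  have hDe : ∀ x, x ∈ D ↔ e x = 1 := by
    intro x
    rw [hD]
    simp only [Set.mem_iUnion, cycClass, Set.mem_ofPred_eq, exists_prop]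
    constructor
    · rintro ⟨i, hi, k, rfl⟩
      rw [he, hρpow, hLpow]
      have h1 : (((i : ℤ) + ((2 * M : ℕ) : ℤ) * k : ℤ) : ZMod M) = (i : ZMod M) := by
        push_cast; simp
      have h2 : ix (i : ZMod M) = i := hI.injOn (hix1 _) hi (hix2 _)
      rw [h1]
      simp only [w, h2]
      rw [zpow_add₀ (by norm_num), zpow_natCast]
      have h3 : (-1 : ℂ) ^ (((2 * M : ℕ) : ℤ) * k) = 1 := by
        apply Even.neg_one_zpow
        push_cast
        rw [mul_assoc]; exact even_two_mul _
      rw [h3, mul_one, ← mul_pow]; simp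
    · intro hx
      have hx0 : x ≠ 0 := by
        rintro rfl
        rw [he0] at hx; exact zero_ne_one hx
      obtain ⟨x, rfl⟩ := hx0.isUnit
      obtain ⟨k, rfl⟩ := hγ x
      simp only at hx ⊢
      rw [he, hρpow, hLpow] at hx
      simp only [w] at hx
      refine ⟨ix (k : ZMod M), hix1 _, ?_⟩
      have h2 := hix2 (k : ZMod M)
      generalize ix (k : ZMod M) = i at hx h2
      have hev : (2 : ℤ) ∣ k - i := by
        rw [← zpow_natCast, ← zpow_add₀ (by norm_num)] at hx
        rcases Int.even_or_odd (k + i) with h | h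
        · obtain ⟨r, hr⟩ := h
          exact ⟨r - i, by omega⟩
        · rw [h.neg_one_zpow] at hx
          norm_num at hx
      have hMd : (M : ℤ) ∣ k - i := by
        rw [← ZMod.intCast_zmod_eq_zero_iff_dvd] 
        push_cast
        rw [h2, sub_self]
      have hcop2 : IsCoprime (2 : ℤ) (M : ℤ) := by
        have := Nat.coprime_two_left.mpr hModd
        exact_mod_cast Nat.isCoprime_iff_coprime.mpr this
      obtain ⟨l, hl⟩ := hcop2.mul_dvd hev hMd
      refine ⟨l, ?_⟩
      congr 2
      push_cast
      linarith
  refine ⟨?_, ?_, (Fintype.card F - 3) / 4, ?_⟩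
  · rw [hDe, he0]; exact zero_ne_one
  · intro g hg
    rw [hDe, hDe, hodd]
    rcases hpm g hg with h | h <;> rw [h] <;> norm_num
  · intro g hg
    have := cyc_count ψ hψ e he0 hpm hodd hE g hg
    simp only [hDe]
    omega
end
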